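/- arXiv:2104.12141 — 8 statements merged into one kernel-verified Lean document; each statement's English description precedes it below -/
import Mathlib

section
/- Let (X,d) be a metric space, C ⊆ X, and k ≥ 1 an integer. Let μ be a probability measure on X with finite support such that cost_μ(C') > 0 for every k-element subset C' ⊆ C, and such that some k-element subset C* ⊆ C attains the infimum of cost_μ over all k-element subsets of C. Then the total sensitivity of the (k,C)-median problem with respect to μ satisfies Σ_{x ∈ supp(μ)} μ(x)·sens(x) ≤ 4k + 6. -/
open Metric

/-- The cost of a center set `C'` for the `(k,C)`-median problem with respect to a
finitely supported probability measure `μ` : `cost_μ(C') = Σ_x μ(x)·d(x,C')`. -/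
noncomputable def kMedCost {X : Type*} [PseudoMetricSpace X] (μ : X →₀ ℝ)
    (C' : Finset X) : ℝ :=
  ∑ x ∈ μ.support, μ x * infDist x (C' : Set X)

/-- The sensitivity of a point `x` for the `(k,C)`-median problem with respect to `μ`:
`sens(x) = sup { d(x,C')/cost_μ(C') : C' ⊆ C, |C'| = k }`. -/
noncomputable def kMedSens {X : Type*} [PseudoMetricSpace X] (μ : X →₀ ℝ)
    (C : Set X) (k : ℕ) (x : X) : ℝ :=
  sSup {r : ℝ | ∃ C' : Finset X, ↑C' ⊆ C ∧ C'.card = k ∧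
    r = infDist x (C' : Set X) / kMedCost μ C'}

/-!
The support is finite, so approximating the sensitivities of its points involves only finitely many
center sets; let `B` be a cheapest of these and `m` its cost. Split the support into the clusters of
points assigned to a common nearest center in `B`. For a point `x` in a cluster with center `c`,
mass `M` and cost `S`, the triangle inequality gives `d(x,C') ≤ d(x,c) + d(c,C')`, and averaging
`d(c,C') ≤ d(c,y) + d(y,C')` over the points `y` of the cluster gives
`M · d(c,C') ≤ S + cost(C')`. As `m ≤ cost(C')`, this yields
`d(x,C') / cost(C') ≤ d(x,c) / m + (S / m + 1) / M`. The contribution of the cluster to the total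
sensitivity is therefore at most `2 S / m + 1`, and these bounds add up to `k + 2` over the `k`
clusters.
-/

theorem sum_mul_sSup_le {ι : Type*} {s : Finset ι} {w : ι → ℝ} {S : ι → Set ℝ} {K : ℝ}
    (hw : ∀ i ∈ s, 0 ≤ w i) (hS : ∀ i, (S i).Nonempty)
    (hK : ∀ r : ι → ℝ, (∀ i, r i ∈ S i) → ∑ i ∈ s, w i * r i ≤ K) :
    ∑ i ∈ s, w i * sSup (S i) ≤ K := by
  refine le_of_forall_pos_le_add fun ε hε => ?_
  have hW : 0 ≤ ∑ i ∈ s, w i := Finset.sum_nonneg hw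
  set δ := ε / (∑ i ∈ s, w i + 1) with hδ
  have hδ_pos : 0 < δ := by positivity
  have hWδ : (∑ i ∈ s, w i) * δ ≤ ε := by
    rw [hδ, mul_div_assoc', div_le_iff₀ (by positivity)]
    linarith
  choose r hrS hr using fun i => exists_lt_of_lt_csSup (hS i) (sub_lt_self (sSup (S i)) hδ_pos)
  calc ∑ i ∈ s, w i * sSup (S i)
      ≤ ∑ i ∈ s, w i * (r i + δ) :=
        Finset.sum_le_sum fun i hi =>
          mul_le_mul_of_nonneg_left (sub_lt_iff_lt_add.1 (hr i)).le (hw i hi)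
    _ = ∑ i ∈ s, w i * r i + (∑ i ∈ s, w i) * δ := by
        simp only [mul_add, Finset.sum_add_distrib, Finset.sum_mul]
    _ ≤ K + ε := add_le_add (hK r hrS) hWδ

section

variable {X : Type*} [PseudoMetricSpace X]

section Cluster

variable {s : Finset X} {w : X → ℝ}

theorem sum_mul_infDist_le (hw : ∀ y ∈ s, 0 ≤ w y) (c : X) (D : Set X) :
    (∑ y ∈ s, w y) * infDist c D ≤ ∑ y ∈ s, w y * dist y c + ∑ y ∈ s, w y * infDist y D := by
  rw [Finset.sum_mul, ← Finset.sum_add_distrib]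
  refine Finset.sum_le_sum fun y hy => ?_
  rw [← mul_add, add_comm, dist_comm]
  exact mul_le_mul_of_nonneg_left infDist_le_infDist_add_dist (hw y hy)

theorem infDist_div_le (hw : ∀ y ∈ s, 0 ≤ w y) (hW : 0 < ∑ y ∈ s, w y) (c x : X) {D : Set X}
    {m t : ℝ} (hm : 0 < m) (hmt : m ≤ t) (hD : ∑ y ∈ s, w y * infDist y D ≤ t) :
    infDist x D / t ≤ dist x c / m + ((∑ y ∈ s, w y * dist y c) / m + 1) / ∑ y ∈ s, w y := by
  have ht : 0 < t := hm.trans_le hmt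
  have hS : 0 ≤ ∑ y ∈ s, w y * dist y c :=
    Finset.sum_nonneg fun y hy => mul_nonneg (hw y hy) dist_nonneg
  set W := ∑ y ∈ s, w y
  set S := ∑ y ∈ s, w y * dist y c
  have hcD : infDist c D ≤ (S + t) / W := by
    rw [le_div_iff₀' hW]
    exact (sum_mul_infDist_le hw c D).trans (by gcongr)
  calc infDist x D / t
      ≤ (dist x c + (S + t) / W) / t := by
        gcongr
        linarith [infDist_le_infDist_add_dist (s := D) (x := x) (y := c)]
    _ = dist x c / t + (S / t + 1) / W := by field_simp
    _ ≤ dist x c / m + (S / m + 1) / W := by gcongr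

theorem sum_mul_infDist_div_le (hw : ∀ y ∈ s, 0 ≤ w y) (c : X) {D : X → Set X} {t : X → ℝ} {m : ℝ}
    (hm : 0 < m) (hmt : ∀ x ∈ s, m ≤ t x)
    (hD : ∀ x ∈ s, ∑ y ∈ s, w y * infDist y (D x) ≤ t x) :
    ∑ x ∈ s, w x * (infDist x (D x) / t x) ≤ 2 * ((∑ y ∈ s, w y * dist y c) / m) + 1 := by
  have hS : 0 ≤ ∑ y ∈ s, w y * dist y c :=
    Finset.sum_nonneg fun y hy => mul_nonneg (hw y hy) dist_nonneg
  rcases (Finset.sum_nonneg hw).eq_or_lt with hW | hW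
  · have hw_zero := (Finset.sum_eq_zero_iff_of_nonneg hw).1 hW.symm
    rw [Finset.sum_eq_zero fun x hx => by rw [hw_zero x hx, zero_mul]]
    positivity
  set W := ∑ y ∈ s, w y
  set S := ∑ y ∈ s, w y * dist y c
  calc ∑ x ∈ s, w x * (infDist x (D x) / t x)
      ≤ ∑ x ∈ s, w x * (dist x c / m + (S / m + 1) / W) :=
        Finset.sum_le_sum fun x hx => mul_le_mul_of_nonneg_left
          (infDist_div_le hw hW c x hm (hmt x hx) (hD x hx)) (hw x hx)
    _ = S / m + W * ((S / m + 1) / W) := by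
        simp_rw [mul_add (w _), W, S, Finset.sum_add_distrib, Finset.sum_mul, Finset.sum_div,
          mul_div_assoc]
    _ = 2 * (S / m) + 1 := by
        rw [mul_div_cancel₀ _ hW.ne']
        ring

end Cluster

theorem nonempty_of_kMedCost_pos {μ : X →₀ ℝ} {B : Finset X} (hB : 0 < kMedCost μ B) :
    B.Nonempty := by
  rw [Finset.nonempty_iff_ne_empty]
  rintro rfl
  simp [kMedCost] at hB

theorem exists_nearest_mem {B : Finset X} (hB : B.Nonempty) (x : X) :
    ∃ c ∈ B, infDist x (B : Set X) = dist x c :=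
  B.finite_toSet.isCompact.exists_infDist_eq_dist hB x

theorem sum_mul_infDist_div_kMedCost_le {μ : X →₀ ℝ} (hμ : ∀ x, 0 ≤ μ x) {B : Finset X}
    (hB : 0 < kMedCost μ B) {D : X → Finset X}
    (hBD : ∀ x ∈ μ.support, kMedCost μ B ≤ kMedCost μ (D x)) :
    ∑ x ∈ μ.support, μ x * (infDist x (D x : Set X) / kMedCost μ (D x)) ≤ B.card + 2 := by
  classical
  choose f hfB hf using exists_nearest_mem (nonempty_of_kMedCost_pos hB)
  have cluster_cost (c : X) : ∑ y ∈ μ.support with f y = c, μ y * dist y c =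
      ∑ y ∈ μ.support with f y = c, μ y * infDist y (B : Set X) :=
    Finset.sum_congr rfl fun y hy => by rw [hf, (Finset.mem_filter.1 hy).2]
  have cluster_cost_le (c x : X) :
      ∑ y ∈ μ.support with f y = c, μ y * infDist y (D x : Set X) ≤ kMedCost μ (D x) :=
    Finset.sum_le_sum_of_subset_of_nonneg (Finset.filter_subset _ _)
      fun y _ _ => mul_nonneg (hμ y) infDist_nonneg
  have sum_cluster_cost : ∑ c ∈ B, ∑ y ∈ μ.support with f y = c, μ y * infDist y (B : Set X) =
      kMedCost μ B :=
    Finset.sum_fiberwise_of_maps_to (fun x _ => hfB x) _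
  calc ∑ x ∈ μ.support, μ x * (infDist x (D x : Set X) / kMedCost μ (D x))
      = ∑ c ∈ B, ∑ x ∈ μ.support with f x = c,
          μ x * (infDist x (D x : Set X) / kMedCost μ (D x)) :=
        (Finset.sum_fiberwise_of_maps_to (fun x _ => hfB x) _).symm
    _ ≤ ∑ c ∈ B, (2 * ((∑ y ∈ μ.support with f y = c, μ y * dist y c) / kMedCost μ B) + 1) :=
        Finset.sum_le_sum fun c _ => sum_mul_infDist_div_le (fun y _ => hμ y) c hB
          (fun x hx => hBD x (Finset.mem_filter.1 hx).1) fun x _ => cluster_cost_le c x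
    _ = B.card + 2 := by
        simp only [cluster_cost, Finset.sum_add_distrib, ← Finset.mul_sum, ← Finset.sum_div,
          sum_cluster_cost, div_self hB.ne', Finset.sum_const, nsmul_eq_mul]
        ring

theorem total_sensitivity_le_general {C : Set X} {k : ℕ} {μ : X →₀ ℝ} (hμ : ∀ x, 0 ≤ μ x)
    (hpos : ∀ C' : Finset X, ↑C' ⊆ C → C'.card = k → 0 < kMedCost μ C')
    (hC : ∃ C' : Finset X, ↑C' ⊆ C ∧ C'.card = k) :
    ∑ x ∈ μ.support, μ x * kMedSens μ C k x ≤ k + 2 := by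
  obtain ⟨C₀, hC₀, hcard₀⟩ := hC
  have hsupp : μ.support.Nonempty :=
    Finset.nonempty_of_sum_ne_zero (hpos C₀ hC₀ hcard₀).ne'
  refine sum_mul_sSup_le (fun x _ => hμ x) (fun x => ⟨_, C₀, hC₀, hcard₀, rfl⟩) fun r hr => ?_
  choose D hDC hcard hrD using hr
  obtain ⟨z, -, hz⟩ := μ.support.exists_min_image (fun x => kMedCost μ (D x)) hsupp
  simpa only [hrD, hcard z] using
    sum_mul_infDist_div_kMedCost_le hμ (hpos (D z) (hDC z) (hcard z)) hz

end

/-- total sensitivity of the `(k,C)`-median problem is at most `4k + 6`. -/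
theorem total_sensitivity_le {X : Type*} [PseudoMetricSpace X] (C : Set X) (k : ℕ)
    (hk : 1 ≤ k) (μ : X →₀ ℝ) (hμ0 : ∀ x, 0 ≤ μ x)
    (hμ1 : ∑ x ∈ μ.support, μ x = 1)
    (hpos : ∀ C' : Finset X, ↑C' ⊆ C → C'.card = k → 0 < kMedCost μ C')
    (hatt : ∃ Cs : Finset X, ↑Cs ⊆ C ∧ Cs.card = k ∧
      ∀ C' : Finset X, ↑C' ⊆ C → C'.card = k → kMedCost μ Cs ≤ kMedCost μ C') :
    ∑ x ∈ μ.support, μ x * kMedSens μ C k x ≤ 4 * k + 6 := by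
  obtain ⟨Cs, hCs, hcard, -⟩ := hatt
  linarith [total_sensitivity_le_general hμ0 hpos ⟨Cs, hCs, hcard⟩, Nat.cast_nonneg (α := ℝ) k]
end

section
/- Let (X,d) be a metric space, C ⊆ X, k ≥ 1 an integer, μ a probability measure on X with finite support, and α ≥ 1 a real number. Let c_1,…,c_t ∈ C be centers such that opt' := cost_μ({c_1,…,c_t}) satisfies 0 < opt' ≤ α·inf{cost_μ(C') : C' ⊆ C, |C'| = k}. Let v : supp(μ) → {1,…,t} assign to each point a nearest center, i.e. d(x,c_{v(x)}) = min_{1≤i≤t} d(x,c_i); for each i put μ_i = μ(v^{-1}(i)) and, when μ_i > 0, m_i = (1/μ_i)·Σ_{x : v(x)=i} μ(x)·d(x,c_i). Then for every x ∈ supp(μ), with i = v(x), the sensitivity satisfies sens(x) ≤ 2α·(2m_i + d(x,c_i))/opt' + 4/μ_i. -/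
open Metric

/-!
Averaging `d(p, C') ≤ d(y, p) + d(y, C')` over the points `y` of a cluster with centre `p`, mean
distance `m` to `p` and mass `M` gives `d(p, C') ≤ m + cost(C') / M`. Hence
`d(x, C') ≤ d(x, p) + m + cost(C') / M` for every `x`. After division by `cost(C')` the last
summand is `1 / M`, while `cost(C') ≥ opt ≥ opt' / α` bounds the others.
-/

/-- The infimum `opt` of the costs in the `(k,C)`-median problem with respect to `μ`; it is `0`
when `C` has no subset of cardinality `k`. -/
noncomputable def kMedOpt {X : Type*} [PseudoMetricSpace X] (μ : X →₀ ℝ) (C : Set X) (k : ℕ) : ℝ :=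
  sInf {r : ℝ | ∃ C' : Finset X, ↑C' ⊆ C ∧ C'.card = k ∧ r = kMedCost μ C'}

/-- The `μ`-average distance from the points of a cluster `F` to `p`; it is the `m_i` of the paper
when `F` is the `i`-th cluster and `p` its centre, and `0` when `F` has mass `0`. -/
noncomputable def meanDist {X : Type*} [PseudoMetricSpace X] (μ : X → ℝ) (F : Finset X)
    (p : X) : ℝ :=
  (∑ y ∈ F, μ y * dist y p) / ∑ y ∈ F, μ y

theorem sum_fiber_pos {X ι : Type*} [DecidableEq ι] {μ : X →₀ ℝ} (hμ : ∀ x, 0 ≤ μ x)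
    (v : X → ι) {x : X} (hx : x ∈ μ.support) : 0 < ∑ y ∈ μ.support with v y = v x, μ y :=
  Finset.sum_pos' (fun y _ ↦ hμ y)
    ⟨x, Finset.mem_filter.mpr ⟨hx, rfl⟩, (hμ x).lt_of_ne' (Finsupp.mem_support_iff.mp hx)⟩

section

variable {X : Type*} [PseudoMetricSpace X]

theorem meanDist_nonneg {μ : X → ℝ} {F : Finset X} (hμ : ∀ y ∈ F, 0 ≤ μ y) (p : X) :
    0 ≤ meanDist μ F p :=
  div_nonneg (Finset.sum_nonneg fun y hy ↦ mul_nonneg (hμ y hy) dist_nonneg) (Finset.sum_nonneg hμ)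

theorem infDist_le_meanDist_add {μ : X → ℝ} {F : Finset X} (hμ : ∀ y ∈ F, 0 ≤ μ y)
    (hF : 0 < ∑ y ∈ F, μ y) (p : X) (s : Set X) :
    infDist p s ≤ meanDist μ F p + (∑ y ∈ F, μ y * infDist y s) / ∑ y ∈ F, μ y := by
  rw [meanDist, ← add_div, le_div_iff₀' hF, Finset.sum_mul, ← Finset.sum_add_distrib]
  refine Finset.sum_le_sum fun y hy ↦ ?_
  rw [← mul_add]
  have triangle : infDist p s ≤ dist y p + infDist y s := by
    rw [add_comm, dist_comm]
    exact infDist_le_infDist_add_dist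
  exact mul_le_mul_of_nonneg_left triangle (hμ y hy)

variable {μ : X →₀ ℝ}

theorem kMedCost_nonneg (hμ : ∀ x, 0 ≤ μ x) (C' : Finset X) : 0 ≤ kMedCost μ C' :=
  Finset.sum_nonneg fun x _ ↦ mul_nonneg (hμ x) infDist_nonneg

theorem sum_mul_infDist_le_kMedCost (hμ : ∀ x, 0 ≤ μ x) (F C' : Finset X) :
    ∑ y ∈ F, μ y * infDist y (C' : Set X) ≤ kMedCost μ C' := by
  classical
  calc
    ∑ y ∈ F, μ y * infDist y (C' : Set X)
    _ ≤ ∑ y ∈ F ∪ μ.support, μ y * infDist y (C' : Set X) :=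
      Finset.sum_le_sum_of_subset_of_nonneg Finset.subset_union_left
        fun y _ _ ↦ mul_nonneg (hμ y) infDist_nonneg
    _ = kMedCost μ C' :=
      (Finset.sum_subset Finset.subset_union_right fun y _ hy ↦ by
        rw [Finsupp.notMem_support_iff.mp hy, zero_mul]).symm

theorem infDist_le_add_kMedCost_div (hμ : ∀ x, 0 ≤ μ x) {F : Finset X}
    (hF : 0 < ∑ y ∈ F, μ y) (p x : X) (C' : Finset X) :
    infDist x (C' : Set X) ≤ meanDist μ F p + dist x p + kMedCost μ C' / ∑ y ∈ F, μ y := by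
  have through_center : infDist x (C' : Set X) ≤ infDist p (C' : Set X) + dist x p :=
    infDist_le_infDist_add_dist
  have center_near := infDist_le_meanDist_add (fun y _ ↦ hμ y) hF p (C' : Set X)
  have cluster_cost := div_le_div_of_nonneg_right (sum_mul_infDist_le_kMedCost hμ F C') hF.le
  linarith

theorem kMedOpt_nonneg (hμ : ∀ x, 0 ≤ μ x) (C : Set X) (k : ℕ) : 0 ≤ kMedOpt μ C k := by
  refine Real.sInf_nonneg ?_
  rintro _ ⟨C', -, -, rfl⟩
  exact kMedCost_nonneg hμ C'

theorem kMedOpt_le_kMedCost (hμ : ∀ x, 0 ≤ μ x) {C : Set X} {C' : Finset X}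
    (hC' : ↑C' ⊆ C) : kMedOpt μ C C'.card ≤ kMedCost μ C' := by
  refine csInf_le ⟨0, ?_⟩ ⟨C', hC', rfl, rfl⟩
  rintro _ ⟨C'', -, -, rfl⟩
  exact kMedCost_nonneg hμ C''

theorem kMedSens_le_div_kMedOpt_add (hμ : ∀ x, 0 ≤ μ x) {C : Set X} {k : ℕ}
    (hopt : 0 < kMedOpt μ C k) {F : Finset X} (hF : 0 < ∑ y ∈ F, μ y) (p x : X) :
    kMedSens μ C k x ≤
      (meanDist μ F p + dist x p) / kMedOpt μ C k + 1 / ∑ y ∈ F, μ y := by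
  have hm : 0 ≤ meanDist μ F p := meanDist_nonneg (fun y _ ↦ hμ y) p
  refine Real.sSup_le ?_ (by positivity)
  rintro _ ⟨C', hC', rfl, rfl⟩
  have opt_le : kMedOpt μ C C'.card ≤ kMedCost μ C' := kMedOpt_le_kMedCost hμ hC'
  have cost_pos : 0 < kMedCost μ C' := hopt.trans_le opt_le
  calc
    infDist x (C' : Set X) / kMedCost μ C'
    _ ≤ (meanDist μ F p + dist x p + kMedCost μ C' / ∑ y ∈ F, μ y) / kMedCost μ C' := by
      gcongr
      exact infDist_le_add_kMedCost_div hμ hF p x C'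
    _ = (meanDist μ F p + dist x p) / kMedCost μ C' + 1 / ∑ y ∈ F, μ y := by
      field_simp
    _ ≤ (meanDist μ F p + dist x p) / kMedOpt μ C C'.card + 1 / ∑ y ∈ F, μ y := by
      gcongr

theorem sensitivity_upper_bound_of_bicriteria_general (hμ : ∀ x, 0 ≤ μ x) {C : Set X} {k : ℕ}
    {α opt' : ℝ} (hopt'pos : 0 < opt') (hopt'le : opt' ≤ α * kMedOpt μ C k)
    {F : Finset X} (hF : 0 < ∑ y ∈ F, μ y) (p x : X) :
    kMedSens μ C k x ≤ α * (meanDist μ F p + dist x p) / opt' + 1 / ∑ y ∈ F, μ y := by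
  have hm : 0 ≤ meanDist μ F p := meanDist_nonneg (fun y _ ↦ hμ y) p
  have hα_opt : 0 < α * kMedOpt μ C k := hopt'pos.trans_le hopt'le
  have opt_pos : 0 < kMedOpt μ C k :=
    (kMedOpt_nonneg hμ C k).lt_of_ne' (right_ne_zero_of_mul hα_opt.ne')
  have hα : 0 < α := pos_of_mul_pos_left hα_opt opt_pos.le
  calc
    kMedSens μ C k x
    _ ≤ (meanDist μ F p + dist x p) / kMedOpt μ C k + 1 / ∑ y ∈ F, μ y :=
      kMedSens_le_div_kMedOpt_add hμ opt_pos hF p x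
    _ = α * (meanDist μ F p + dist x p) / (α * kMedOpt μ C k) + 1 / ∑ y ∈ F, μ y := by
      rw [mul_div_mul_left _ _ hα.ne']
    _ ≤ α * (meanDist μ F p + dist x p) / opt' + 1 / ∑ y ∈ F, μ y := by
      gcongr

end

/-- pointwise sensitivity upper bound from a bicriteria approximation. -/
theorem sensitivity_upper_bound_of_bicriteria {X : Type*} [PseudoMetricSpace X]
    (C : Set X) (k : ℕ) (hk : 1 ≤ k) (μ : X →₀ ℝ) (hμ0 : ∀ x, 0 ≤ μ x)
    (hμ1 : ∑ x ∈ μ.support, μ x = 1) (α : ℝ) (hα : 1 ≤ α)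
    (t : ℕ) (ht : 1 ≤ t) (c : Fin t → X) (hc : ∀ i, c i ∈ C)
    -- opt' is the cost of the bicriteria solution {c_1, ..., c_t}
    (hopt'pos : 0 < ∑ x ∈ μ.support, μ x * infDist x (Set.range c))
    (hopt'le : ∑ x ∈ μ.support, μ x * infDist x (Set.range c) ≤
      α * sInf {r : ℝ | ∃ C' : Finset X, ↑C' ⊆ C ∧ C'.card = k ∧ r = kMedCost μ C'})
    -- v assigns each point of the support to a nearest center
    (v : X → Fin t)
    (hv : ∀ x ∈ μ.support, ∀ i : Fin t, dist x (c (v x)) ≤ dist x (c i)) :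
    ∀ x ∈ μ.support,
      kMedSens μ C k x ≤
        2 * α * (2 * ((∑ y ∈ μ.support.filter (fun y => v y = v x), μ y * dist y (c (v x))) /
            (∑ y ∈ μ.support.filter (fun y => v y = v x), μ y)) + dist x (c (v x))) /
          (∑ x ∈ μ.support, μ x * infDist x (Set.range c)) +
        4 / (∑ y ∈ μ.support.filter (fun y => v y = v x), μ y) := by
  intro x hx
  have hM := sum_fiber_pos hμ0 v hx
  have hm := meanDist_nonneg (F := μ.support.filter fun y ↦ v y = v x) (fun y _ ↦ hμ0 y) (c (v x))
  calc
    kMedSens μ C k x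
    _ ≤ α * (meanDist μ _ (c (v x)) + dist x (c (v x))) / _ + 1 / _ :=
      sensitivity_upper_bound_of_bicriteria_general hμ0 hopt'pos hopt'le hM (c (v x)) x
    _ ≤ 2 * α * (2 * meanDist μ _ (c (v x)) + dist x (c (v x))) / _ + 4 / _ := by
      gcongr <;> linarith
end

section
/- Let (X,d) be a metric space, C ⊆ X, k ≥ 1 an integer, μ a probability measure on X with finite support, and α, β ≥ 1 real numbers. Let c_1,…,c_t ∈ C with t ≤ β·k be centers such that opt' := cost_μ({c_1,…,c_t}) satisfies 0 < opt' ≤ α·inf{cost_μ(C') : C' ⊆ C, |C'| = k}. Let v : supp(μ) → {1,…,t} assign to each point a nearest center; put μ_i = μ(v^{-1}(i)) and, when μ_i > 0, m_i = (1/μ_i)·Σ_{x : v(x)=i} μ(x)·d(x,c_i). Define s(x) = 2α·(2m_{v(x)} + d(x,c_{v(x)}))/opt' + 4/μ_{v(x)} for x ∈ supp(μ). Then Σ_{x ∈ supp(μ)} μ(x)·s(x) ≤ 6α + 4βk. -/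
open Metric

/-!
Replacing each distance by its mean over the cluster does not change the total cost, so the terms
`2 * m_{v(x)}` and `d(x, c_{v(x)})` contribute `2 * opt'` and `opt'`; after scaling by
`2 * α / opt'` this is exactly `6 * α`. The terms `4 / μ_{v(x)}` contribute exactly `4` for each
nonempty cluster, and there are at most `t ≤ β * k` of these.
-/

section ClusterMeans

open Finset

/-- The mass `μ_i` that the weights `μ` put on the cluster `v ⁻¹' {i}`. -/
def clusterWeight {X ι M : Type*} [DecidableEq ι] [AddCommMonoid M]
    (μ : X →₀ M) (v : X → ι) (i : ι) : M :=
  ∑ y ∈ μ.support with v y = i, μ y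

/-- The `μ`-weighted mean of `f` over the cluster `v ⁻¹' {i}`; by the convention `a / 0 = 0` it
is `0` on a cluster of zero weight. With `f y = dist y (c i)` it is the mean distance `m_i` to the
center of the cluster. -/
def clusterMean {X ι K : Type*} [DecidableEq ι] [Semifield K]
    (μ : X →₀ K) (v : X → ι) (f : X → K) (i : ι) : K :=
  (∑ y ∈ μ.support with v y = i, μ y * f y) / clusterWeight μ v i

variable {X ι : Type*} [DecidableEq ι]

theorem sum_mul_comp_eq_sum_clusterWeight_mul {R : Type*} [Semiring R]
    (μ : X →₀ R) (v : X → ι) (g : ι → R) :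
    ∑ x ∈ μ.support, μ x * g (v x) =
      ∑ i ∈ μ.support.image v, clusterWeight μ v i * g i := by
  rw [← sum_fiberwise_of_maps_to fun x hx => mem_image_of_mem v hx]
  refine sum_congr rfl fun i _ => ?_
  rw [clusterWeight, sum_mul]
  exact sum_congr rfl fun x hx => by rw [(mem_filter.mp hx).2]

variable {K : Type*} [Semifield K] [PartialOrder K] [IsStrictOrderedRing K]

theorem clusterWeight_mul_clusterMean {μ : X →₀ K} (hμ : ∀ x, 0 ≤ μ x)
    (v : X → ι) (f : X → K) (i : ι) :
    clusterWeight μ v i * clusterMean μ v f i = ∑ y ∈ μ.support with v y = i, μ y * f y := by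
  refine mul_div_cancel_of_imp' fun hzero => sum_eq_zero fun y hy => ?_
  rw [(sum_eq_zero_iff_of_nonneg fun x _ => hμ x).mp hzero y hy, zero_mul]

theorem sum_mul_clusterMean {μ : X →₀ K} (hμ : ∀ x, 0 ≤ μ x)
    (v : X → ι) (f : ι → X → K) :
    ∑ x ∈ μ.support, μ x * clusterMean μ v (f (v x)) (v x) =
      ∑ x ∈ μ.support, μ x * f (v x) x :=
  calc ∑ x ∈ μ.support, μ x * clusterMean μ v (f (v x)) (v x)
      = ∑ i ∈ μ.support.image v, clusterWeight μ v i * clusterMean μ v (f i) i :=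
        sum_mul_comp_eq_sum_clusterWeight_mul μ v fun i => clusterMean μ v (f i) i
    _ = ∑ i ∈ μ.support.image v, ∑ y ∈ μ.support with v y = i, μ y * f i y :=
        sum_congr rfl fun i _ => clusterWeight_mul_clusterMean hμ v (f i) i
    _ = ∑ i ∈ μ.support.image v, ∑ y ∈ μ.support with v y = i, μ y * f (v y) y :=
        sum_congr rfl fun i _ => sum_congr rfl fun y hy => by rw [(mem_filter.mp hy).2]
    _ = ∑ x ∈ μ.support, μ x * f (v x) x :=
        sum_fiberwise_of_maps_to (fun x hx => mem_image_of_mem v hx) _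

theorem clusterWeight_pos {μ : X →₀ K} (hμ : ∀ x, 0 ≤ μ x) {v : X → ι} {i : ι}
    (hi : i ∈ μ.support.image v) : 0 < clusterWeight μ v i := by
  obtain ⟨x, hx, hxi⟩ := mem_image.mp hi
  exact sum_pos' (fun y _ => hμ y)
    ⟨x, mem_filter.mpr ⟨hx, hxi⟩, (hμ x).lt_of_ne' (Finsupp.mem_support_iff.mp hx)⟩

theorem sum_mul_inv_clusterWeight {μ : X →₀ K} (hμ : ∀ x, 0 ≤ μ x) (v : X → ι) :
    ∑ x ∈ μ.support, μ x * (clusterWeight μ v (v x))⁻¹ = #(μ.support.image v) :=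
  calc ∑ x ∈ μ.support, μ x * (clusterWeight μ v (v x))⁻¹
      = ∑ i ∈ μ.support.image v, clusterWeight μ v i * (clusterWeight μ v i)⁻¹ :=
        sum_mul_comp_eq_sum_clusterWeight_mul μ v fun i => (clusterWeight μ v i)⁻¹
    _ = ∑ _i ∈ μ.support.image v, 1 :=
        sum_congr rfl fun _ hi => mul_inv_cancel₀ (clusterWeight_pos hμ hi).ne'
    _ = #(μ.support.image v) := by rw [sum_const, nsmul_one]

end ClusterMeans

section Sensitivity

variable {X ι : Type*} [PseudoMetricSpace X]

theorem infDist_range_eq_dist_of_forall_le {c : ι → X} {x : X} {j : ι}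
    (hj : ∀ i, dist x (c j) ≤ dist x (c i)) : infDist x (Set.range c) = dist x (c j) :=
  le_antisymm (infDist_le_dist_of_mem (Set.mem_range_self j))
    ((le_infDist ⟨c j, Set.mem_range_self j⟩).2 (Set.forall_mem_range.2 hj))

/-- The upper bound `s(x)` on the sensitivity of the point `x`, computed from the centers `c`
and the assignment `v` of points to centers. The denominator `opt'` is the cost of `c`. -/
noncomputable def sensitivityBound [DecidableEq ι] (μ : X →₀ ℝ) (α : ℝ) (c : ι → X)
    (v : X → ι) (x : X) : ℝ :=
  2 * α * (2 * clusterMean μ v (fun y => dist y (c (v x))) (v x) + dist x (c (v x))) /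
      (∑ z ∈ μ.support, μ z * infDist z (Set.range c)) +
    4 / clusterWeight μ v (v x)

theorem total_sensitivity_bound_of_bicriteria_general [DecidableEq ι]
    {μ : X →₀ ℝ} (hμ : ∀ x, 0 ≤ μ x) (α : ℝ) {c : ι → X}
    (hcost : 0 < ∑ x ∈ μ.support, μ x * infDist x (Set.range c)) {v : X → ι}
    (hv : ∀ x ∈ μ.support, ∀ i, dist x (c (v x)) ≤ dist x (c i)) :
    ∑ x ∈ μ.support, μ x * sensitivityBound μ α c v x =
      6 * α + 4 * (μ.support.image v).card := by
  set opt := ∑ x ∈ μ.support, μ x * infDist x (Set.range c) with hopt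
  have hdist : ∑ x ∈ μ.support, μ x * dist x (c (v x)) = opt :=
    Finset.sum_congr rfl fun x hx => by rw [infDist_range_eq_dist_of_forall_le (hv x hx)]
  have hmean : ∑ x ∈ μ.support,
      μ x * clusterMean μ v (fun y => dist y (c (v x))) (v x) = opt :=
    (sum_mul_clusterMean hμ v fun i y => dist y (c i)).trans hdist
  calc ∑ x ∈ μ.support, μ x * sensitivityBound μ α c v x
      = ∑ x ∈ μ.support,
          (4 * α / opt * (μ x * clusterMean μ v (fun y => dist y (c (v x))) (v x)) +
            2 * α / opt * (μ x * dist x (c (v x))) +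
            4 * (μ x * (clusterWeight μ v (v x))⁻¹)) :=
        Finset.sum_congr rfl fun x _ => by rw [sensitivityBound, ← hopt]; ring
    _ = 4 * α / opt * opt + 2 * α / opt * opt +
          4 * ∑ x ∈ μ.support, μ x * (clusterWeight μ v (v x))⁻¹ := by
        simp only [Finset.sum_add_distrib, ← Finset.mul_sum, hmean, hdist]
    _ = 6 * α + 4 * (μ.support.image v).card := by
        rw [div_mul_cancel₀ _ hcost.ne', div_mul_cancel₀ _ hcost.ne',
          sum_mul_inv_clusterWeight hμ v]
        ring

end Sensitivity

/-- the total sensitivity upper bound obtained from an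
`(α,β)`-bicriteria approximation is at most `6α + 4βk`. -/
theorem total_sensitivity_bound_of_bicriteria {X : Type*} [PseudoMetricSpace X]
    (C : Set X) (k : ℕ) (hk : 1 ≤ k) (μ : X →₀ ℝ) (hμ0 : ∀ x, 0 ≤ μ x)
    (hμ1 : ∑ x ∈ μ.support, μ x = 1) (α β : ℝ) (hα : 1 ≤ α) (hβ : 1 ≤ β)
    (t : ℕ) (ht : 1 ≤ t) (htβk : (t : ℝ) ≤ β * k) (c : Fin t → X) (hc : ∀ i, c i ∈ C)
    -- opt' is the cost of the bicriteria solution {c_1, ..., c_t}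
    (hopt'pos : 0 < ∑ x ∈ μ.support, μ x * infDist x (Set.range c))
    (hopt'le : ∑ x ∈ μ.support, μ x * infDist x (Set.range c) ≤
      α * sInf {r : ℝ | ∃ C' : Finset X, ↑C' ⊆ C ∧ C'.card = k ∧ r = kMedCost μ C'})
    -- v assigns each point of the support to a nearest center
    (v : X → Fin t)
    (hv : ∀ x ∈ μ.support, ∀ i : Fin t, dist x (c (v x)) ≤ dist x (c i)) :
    ∑ x ∈ μ.support, μ x *
        (2 * α * (2 * ((∑ y ∈ μ.support.filter (fun y => v y = v x), μ y * dist y (c (v x))) /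
            (∑ y ∈ μ.support.filter (fun y => v y = v x), μ y)) + dist x (c (v x))) /
          (∑ z ∈ μ.support, μ z * infDist z (Set.range c)) +
        4 / (∑ y ∈ μ.support.filter (fun y => v y = v x), μ y)) ≤
      6 * α + 4 * β * k := by
  have hcard : ((μ.support.image v).card : ℝ) ≤ t := mod_cast card_finset_fin_le _
  refine (total_sensitivity_bound_of_bicriteria_general hμ0 α hopt'pos hv).trans_le ?_
  linarith
end

section
/- There exists a constant c > 0 such that for all integers d, m, l ≥ 1 with l ≤ m, every integer n ≥ 2, all point sets P_1,…,P_n ∈ U^m, and all radii r_1,…,r_n > 0, the number of distinct sets {i ∈ {1,…,n} : d_H(Q,P_i) ≤ r_i}, as Q ranges over all nonempty finite subsets of ℝ^d of cardinality at most l, is at most n^{c·d·l·log₂(2 + m/d)}. In particular, the shattering dimension of the dual of the range space on U^l induced by Hausdorff metric balls centered at sets of U^m is O(d·l·log(m/d)). -/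
noncomputable section

/-- Points of `ℝ^d` with the Euclidean norm. -/
abbrev Pt (d : ℕ) := EuclideanSpace ℝ (Fin d)

/-- `U^m`: nonempty finite subsets of `ℝ^d` of cardinality at most `m`. -/
abbrev PtSet (d m : ℕ) := {P : Finset (Pt d) // P.Nonempty ∧ P.card ≤ m}

/-! Deciding whether `d_H(Q, P i) ≤ r i` for every `i` only requires knowing, for each of the at
most `l` points `q ∈ Q`, which of the balls `B(p, r i)` with `p ∈ P i` contain `q`: for that `i`,
every `q` must lie in one of the balls and every ball must contain some `q`. There are at most
`n * m` such balls, and the lifting map `p ↦ (p, ‖p‖ ^ 2)` turns balls into half-spaces, so Radon's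
theorem in dimension `d + 1` and the Sauer-Shelah lemma bound the number of patterns a single point
can realize. -/

open Finset Module

theorem sum_Iic_choose_le_pow_mul_exp (N D : ℕ) {x : ℝ} (hx : 1 ≤ x) :
    ∑ k ∈ Iic D, (N.choose k : ℝ) ≤ x ^ D * Real.exp (N / x) := by
  have : 0 < x := one_pos.trans_le hx
  have choose_le (k : ℕ) (hk : k ≤ D) :
      (N.choose k : ℝ) ≤ x ^ D * (N.choose k * x⁻¹ ^ k) := by
    have one_le : 1 ≤ x ^ D * x⁻¹ ^ k := by
      rw [inv_pow, ← div_eq_mul_inv, one_le_div (by positivity)]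
      exact pow_le_pow_right₀ hx hk
    calc (N.choose k : ℝ)
        ≤ N.choose k * (x ^ D * x⁻¹ ^ k) := le_mul_of_one_le_right (by simp) one_le
      _ = x ^ D * (N.choose k * x⁻¹ ^ k) := by ring
  have truncate : ∑ k ∈ Iic D, (N.choose k : ℝ) * x⁻¹ ^ k ≤ (x⁻¹ + 1) ^ N := by
    have le_of_ne_zero (k : ℕ) (hk : (N.choose k : ℝ) * x⁻¹ ^ k ≠ 0) : k ≤ N :=
      not_lt.1 fun hNk => hk (by rw [Nat.choose_eq_zero_of_lt hNk, Nat.cast_zero, zero_mul])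
    have binomial : (x⁻¹ + 1) ^ N = ∑ k ∈ range (N + 1), (N.choose k : ℝ) * x⁻¹ ^ k := by
      simp only [add_pow, one_pow, mul_one, mul_comm]
    rw [binomial, ← sum_filter_of_ne (p := (· ≤ N)) fun k _ => le_of_ne_zero k]
    refine sum_le_sum_of_subset_of_nonneg (fun k hk => ?_) fun k _ _ => by positivity
    exact mem_range_succ_iff.2 (mem_filter.1 hk).2
  calc ∑ k ∈ Iic D, (N.choose k : ℝ)
      ≤ ∑ k ∈ Iic D, x ^ D * (N.choose k * x⁻¹ ^ k) :=
        sum_le_sum fun k hk => choose_le k (mem_Iic.1 hk)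
    _ = x ^ D * ∑ k ∈ Iic D, (N.choose k * x⁻¹ ^ k) := (mul_sum ..).symm
    _ ≤ x ^ D * (x⁻¹ + 1) ^ N := by gcongr
    _ ≤ x ^ D * Real.exp x⁻¹ ^ N := by gcongr; exact Real.add_one_le_exp _
    _ = x ^ D * Real.exp (N / x) := by rw [← Real.exp_nat_mul, div_eq_mul_inv]

section VCDim

variable {ι : Type*} [DecidableEq ι] {𝒜 : Finset (Finset ι)}

theorem card_le_pow_mul_exp_of_vcDim_le [Fintype ι] {D : ℕ} (h𝒜 : 𝒜.vcDim ≤ D) {x : ℝ}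
    (hx : 1 ≤ x) : (#𝒜 : ℝ) ≤ x ^ D * Real.exp (Fintype.card ι / x) :=
  calc (#𝒜 : ℝ) ≤ ∑ k ∈ Iic 𝒜.vcDim, ((Fintype.card ι).choose k : ℝ) :=
        mod_cast (card_le_card_shatterer 𝒜).trans card_shatterer_le_sum_vcDim
    _ ≤ x ^ 𝒜.vcDim * Real.exp (Fintype.card ι / x) := sum_Iic_choose_le_pow_mul_exp _ _ hx
    _ ≤ x ^ D * Real.exp (Fintype.card ι / x) := by gcongr

theorem vcDim_le_of_forall_convex_compl {𝕜 F : Type*} [Field 𝕜] [LinearOrder 𝕜]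
    [IsStrictOrderedRing 𝕜] [AddCommGroup F] [Module 𝕜 F] [FiniteDimensional 𝕜 F] (v : ι → F)
    (h𝒜 : ∀ s ∈ 𝒜, ∃ C : Set F, Convex 𝕜 C ∧ Convex 𝕜 Cᶜ ∧ ∀ i, i ∈ s ↔ v i ∈ C) :
    𝒜.vcDim ≤ finrank 𝕜 F + 1 := by
  classical
  refine Finset.sup_le fun s hs => ?_
  rw [mem_shatterer] at hs
  suffices AffineIndependent 𝕜 fun i : s => v i by
    simpa using this.card_le_finrank_succ.trans (Nat.succ_le_succ (Submodule.finrank_le _))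
  by_contra hv
  obtain ⟨I, z, hzI, hzIc⟩ := Convex.radon_partition hv
  obtain ⟨u, hu, hsu⟩ := hs (t := s.filter fun i => i ∈ Subtype.val '' I) (filter_subset _ _)
  have mem_iff (i : s) : (i : ι) ∈ u ↔ i ∈ I := by
    simpa using Finset.ext_iff.1 hsu i
  obtain ⟨C, hC, hCc, huC⟩ := h𝒜 u hu
  have hIC : (fun i : s => v i) '' I ⊆ C :=
    Set.image_subset_iff.2 fun i hi => (huC i).1 ((mem_iff i).2 hi)
  have hIcC : (fun i : s => v i) '' Iᶜ ⊆ Cᶜ :=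
    Set.image_subset_iff.2 fun i hi hiC => hi ((mem_iff i).1 ((huC i).2 hiC))
  exact convexHull_min hIcC hCc hzIc (convexHull_min hIC hC hzI)

end VCDim

section BallPatterns

variable {ι X : Type*} [Fintype ι] [PseudoMetricSpace X]

/-- The indices of the closed balls `B(p i, r i)` that contain `x`, i.e. the trace of the point `x`
on the balls in the dual range space. -/
def ballPattern (p : ι → X) (r : ι → ℝ) (x : X) : Finset ι := {i | dist x (p i) ≤ r i}

theorem mem_ballPattern {p : ι → X} {r : ι → ℝ} {x : X} {i : ι} :
    i ∈ ballPattern p r x ↔ dist x (p i) ≤ r i := by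
  simp [ballPattern]

/-- The family of all index sets that a single point realizes on the balls `B(p i, r i)`; its
VC dimension is the dual VC dimension of these balls. -/
def ballPatterns (p : ι → X) (r : ι → ℝ) : Finset (Finset ι) :=
  (Set.toFinite (Set.range (ballPattern p r))).toFinset

theorem mem_ballPatterns {p : ι → X} {r : ι → ℝ} {s : Finset ι} :
    s ∈ ballPatterns p r ↔ ∃ x, ballPattern p r x = s := by
  simp [ballPatterns]

theorem le_iff_sq_le_mul_abs {a b : ℝ} (ha : 0 ≤ a) : a ≤ b ↔ a ^ 2 ≤ b * |b| := by
  obtain hb | hb := le_or_gt 0 b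
  · rw [abs_of_nonneg hb, ← sq, sq_le_sq₀ ha hb]
  · rw [abs_of_neg hb]
    constructor <;> intro <;> nlinarith

variable {E : Type*} [NormedAddCommGroup E] [InnerProductSpace ℝ E]

-- Squaring the radius as `r * |r|` keeps balls of negative radius empty.
theorem dist_le_iff_lift_le (q p : E) (r : ℝ) :
    dist q p ≤ r ↔ (‖p‖ ^ 2 - r * |r|) - 2 * inner ℝ q p ≤ -‖q‖ ^ 2 := by
  rw [le_iff_sq_le_mul_abs dist_nonneg, dist_eq_norm, norm_sub_sq_real]
  constructor <;> intro <;> linarith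

theorem vcDim_ballPatterns_le [DecidableEq ι] [FiniteDimensional ℝ E] (p : ι → E) (r : ι → ℝ) :
    (ballPatterns p r).vcDim ≤ finrank ℝ E + 2 := by
  have : finrank ℝ (E × ℝ) + 1 = finrank ℝ E + 2 := by simp
  rw [← this]
  refine vcDim_le_of_forall_convex_compl (fun i => (p i, ‖p i‖ ^ 2 - r i * |r i|))
    fun s hs => ?_
  obtain ⟨q, rfl⟩ := mem_ballPatterns.1 hs
  let φ : E × ℝ →ₗ[ℝ] ℝ := LinearMap.snd ℝ E ℝ - 2 • (innerₗ E q ∘ₗ LinearMap.fst ℝ E ℝ)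
  refine ⟨{z | φ z ≤ -‖q‖ ^ 2}, convex_halfSpace_le φ.isLinear _, ?_, fun i => ?_⟩
  · simpa only [Set.compl_ofPred, not_le] using convex_halfSpace_gt φ.isLinear _
  · simpa [φ] using mem_ballPattern.trans (dist_le_iff_lift_le q (p i) (r i))

theorem card_ballPatterns_le [FiniteDimensional ℝ E] (p : ι → E) (r : ι → ℝ) {x : ℝ}
    (hx : 1 ≤ x) :
    (#(ballPatterns p r) : ℝ) ≤ x ^ (finrank ℝ E + 2) * Real.exp (Fintype.card ι / x) := by
  classical exact card_le_pow_mul_exp_of_vcDim_le (vcDim_ballPatterns_le p r) hx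

end BallPatterns

section HausdorffDist

variable {X : Type*} [PseudoMetricSpace X] {s t : Set X} {r : ℝ}

open Metric Bornology

theorem exists_dist_le_of_hausdorffDist_le (hs : IsBounded s) (ht : IsCompact t)
    (ht₀ : t.Nonempty) (h : hausdorffDist s t ≤ r) {x : X} (hx : x ∈ s) :
    ∃ y ∈ t, dist x y ≤ r := by
  obtain ⟨y, hy, hxy⟩ := ht.exists_infDist_eq_dist ht₀ x
  have hst := hausdorffEDist_ne_top_of_nonempty_of_bounded ⟨x, hx⟩ ht₀ hs ht.isBounded
  exact ⟨y, hy, hxy ▸ (infDist_le_hausdorffDist_of_mem hx hst).trans h⟩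

theorem hausdorffDist_le_iff_of_isCompact (hs : IsCompact s) (hs₀ : s.Nonempty)
    (ht : IsCompact t) (ht₀ : t.Nonempty) :
    hausdorffDist s t ≤ r ↔
      (∀ x ∈ s, ∃ y ∈ t, dist x y ≤ r) ∧ ∀ y ∈ t, ∃ x ∈ s, dist x y ≤ r := by
  constructor
  · refine fun h => ⟨fun x => exists_dist_le_of_hausdorffDist_le hs.isBounded ht ht₀ h, ?_⟩
    intro y hy
    simpa only [dist_comm] using
      exists_dist_le_of_hausdorffDist_le ht.isBounded hs hs₀ (hausdorffDist_comm.trans_le h) hy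
  · rintro ⟨hst, hts⟩
    obtain ⟨x, hx⟩ := hs₀
    obtain ⟨y, -, hxy⟩ := hst x hx
    exact hausdorffDist_le_of_mem_dist (dist_nonneg.trans hxy) hst
      (by simpa only [dist_comm] using hts)

end HausdorffDist

section HausdorffPatterns

/-- The indices `i` for which every `S j` meets the fibre over `i` and the `S j` together cover that
fibre. When `S j` records the balls containing the `j`-th point of `Q`, this is how membership of
`Q` in the Hausdorff balls is read off. -/
def matchedIndices {ι τ : Type*} {κ : ι → Type*} (S : τ → Finset (Σ i, κ i)) : Set ι :=
  {i | (∀ j, ∃ k, ⟨i, k⟩ ∈ S j) ∧ ∀ k, ∃ j, ⟨i, k⟩ ∈ S j}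

theorem exists_fin_range_eq_coe {α : Type*} {s : Finset α} (hs : s.Nonempty) {l : ℕ}
    (hl : #s ≤ l) : ∃ f : Fin l → α, Set.range f = s := by
  have := hs.to_subtype
  obtain ⟨e⟩ : Nonempty (s ↪ Fin l) := Function.Embedding.nonempty_of_card_le (by simpa using hl)
  refine ⟨fun j => (Function.invFun e j : s), ?_⟩
  rw [Set.range_comp' Subtype.val, (Function.invFun_surjective e.injective).range_eq]
  simp

variable {ι X : Type*} [Fintype ι] [PseudoMetricSpace X]

/-- The index sets that nonempty sets of at most `l` points realize on the Hausdorff balls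
`B(P i, r i)`. -/
def hausdorffPatterns (P : ι → Finset X) (r : ι → ℝ) (l : ℕ) : Set (Set ι) :=
  {s | ∃ Q : Finset X, Q.Nonempty ∧ #Q ≤ l ∧
    s = {i | Metric.hausdorffDist (Q : Set X) (P i : Set X) ≤ r i}}

variable {P : ι → Finset X}

theorem setOf_hausdorffDist_range_le_eq_matchedIndices {τ : Type*} [Finite τ] [Nonempty τ]
    (hP : ∀ i, (P i).Nonempty) (r : ι → ℝ) (f : τ → X) :
    {i | Metric.hausdorffDist (Set.range f) (P i : Set X) ≤ r i} =
      matchedIndices fun j =>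
        ballPattern (fun k : Σ i, P i => (k.2 : X)) (fun k => r k.1) (f j) := by
  ext i
  rw [Set.mem_ofPred_eq, hausdorffDist_le_iff_of_isCompact (Set.finite_range f).isCompact
    (Set.range_nonempty f) (P i).finite_toSet.isCompact (hP i)]
  simp [matchedIndices, mem_ballPattern]

theorem ncard_hausdorffPatterns_le (hP : ∀ i, (P i).Nonempty) (r : ι → ℝ) (l : ℕ) :
    (hausdorffPatterns P r l).ncard ≤
      #(ballPatterns (fun k : Σ i, P i => (k.2 : X)) (fun k => r k.1)) ^ l := by
  set 𝒜 := ballPatterns (fun k : Σ i, P i => (k.2 : X)) (fun k => r k.1)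
  let G (S : Fin l → 𝒜) : Set ι := matchedIndices fun j => (S j : Finset (Σ i, P i))
  have hG : hausdorffPatterns P r l ⊆ Set.range G := by
    rintro s ⟨Q, hQ, hQl, rfl⟩
    obtain ⟨f, hf⟩ := exists_fin_range_eq_coe hQ hQl
    have : Nonempty (Fin l) := Set.range_nonempty_iff_nonempty.1 (hf ▸ coe_nonempty.2 hQ)
    refine ⟨fun j => ⟨_, mem_ballPatterns.2 ⟨f j, rfl⟩⟩, ?_⟩
    rw [← hf]
    exact (setOf_hausdorffDist_range_le_eq_matchedIndices hP r f).symm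
  calc (hausdorffPatterns P r l).ncard ≤ (Set.range G).ncard := Set.ncard_le_ncard hG
    _ ≤ Nat.card (Fin l → 𝒜) := Finite.card_range_le G
    _ = #𝒜 ^ l := by simp

end HausdorffPatterns

theorem card_sigma_coe_le {ι α : Type*} [Fintype ι] {P : ι → Finset α} {m : ℕ}
    (hPm : ∀ i, #(P i) ≤ m) :
    Fintype.card (Σ i, P i) ≤ Fintype.card ι * m := by
  rw [Fintype.card_sigma]
  simpa using sum_le_card_nsmul univ (fun i => #(P i)) m fun i _ => hPm i

theorem pow_mul_exp_le_rpow_logb {b y : ℝ} {d : ℕ} (hb : 2 ≤ b) (hy : 2 ≤ y) (hd : 1 ≤ d) :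
    (b * y) ^ (d + 2) * Real.exp d ≤ b ^ (8 * d * Real.logb 2 y) := by
  have hb₀ : 0 < b := two_pos.trans_le hb
  have hy₀ : 0 < y := two_pos.trans_le hy
  have hd' : (1 : ℝ) ≤ d := mod_cast hd
  set L := Real.logb 2 y
  have hL : 1 ≤ L := by
    rwa [Real.le_logb_iff_rpow_le one_lt_two hy₀, Real.rpow_one]
  have hyb : y ≤ b ^ L :=
    calc y = 2 ^ L := (Real.rpow_logb two_pos one_lt_two.ne' hy₀).symm
      _ ≤ b ^ L := by gcongr
  have heb : Real.exp 1 ≤ b ^ (2 : ℝ) := by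
    rw [Real.rpow_two]
    nlinarith [Real.exp_one_lt_d9]
  calc (b * y) ^ (d + 2) * Real.exp d
      = (b * y) ^ ((d : ℝ) + 2) * Real.exp 1 ^ (d : ℝ) := by
        rw [Real.exp_one_rpow]; norm_cast
    _ ≤ (b ^ (1 : ℝ) * b ^ L) ^ ((d : ℝ) + 2) * (b ^ (2 : ℝ)) ^ (d : ℝ) := by
        rw [Real.rpow_one]; gcongr
    _ = b ^ ((1 + L) * (d + 2) + 2 * d) := by
        rw [← Real.rpow_add hb₀, ← Real.rpow_mul hb₀.le, ← Real.rpow_mul hb₀.le,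
          ← Real.rpow_add hb₀]
    _ ≤ b ^ (8 * d * L) := by
        apply Real.rpow_le_rpow_of_exponent_le (one_le_two.trans hb)
        nlinarith

theorem hausdorff_dual_shattering_dimension_general {ι E : Type*} [Fintype ι]
    [NormedAddCommGroup E] [InnerProductSpace ℝ E] {m : ℕ} (hE : 1 ≤ finrank ℝ E)
    (hι : 2 ≤ Fintype.card ι) {P : ι → Finset E} (hP : ∀ i, (P i).Nonempty)
    (hPm : ∀ i, #(P i) ≤ m) (r : ι → ℝ) (l : ℕ) :
    ((hausdorffPatterns P r l).ncard : ℝ) ≤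
      (Fintype.card ι : ℝ) ^ (8 * finrank ℝ E * l * Real.logb 2 (2 + m / finrank ℝ E)) := by
  have : FiniteDimensional ℝ E := finite_of_finrank_pos hE
  set n := Fintype.card ι
  set d := finrank ℝ E
  set y : ℝ := 2 + m / d
  set 𝒜 := ballPatterns (fun k : Σ i, P i => (k.2 : E)) (fun k => r k.1)
  have hd : (1 : ℝ) ≤ d := mod_cast hE
  have hn : (2 : ℝ) ≤ n := mod_cast hι
  have hy : 2 ≤ y := le_add_of_nonneg_right (by positivity)
  have hballs : Fintype.card (Σ i, P i) / (n * y) ≤ d := by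
    have hmy : (m : ℝ) ≤ d * y := by
      rw [mul_add, mul_div_cancel₀ _ (by positivity)]
      linarith
    rw [div_le_iff₀ (by positivity)]
    calc (Fintype.card (Σ i, P i) : ℝ) ≤ n * m := mod_cast card_sigma_coe_le hPm
      _ ≤ n * (d * y) := by gcongr
      _ = d * (n * y) := by ring
  have h𝒜 : (#𝒜 : ℝ) ≤ n ^ (8 * d * Real.logb 2 y) :=
    calc (#𝒜 : ℝ) ≤ (n * y) ^ (d + 2) * Real.exp (Fintype.card (Σ i, P i) / (n * y)) :=
          card_ballPatterns_le _ _ (by nlinarith)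
      _ ≤ (n * y) ^ (d + 2) * Real.exp d := by gcongr
      _ ≤ n ^ (8 * d * Real.logb 2 y) := pow_mul_exp_le_rpow_logb hn hy hE
  calc ((hausdorffPatterns P r l).ncard : ℝ) ≤ #𝒜 ^ l := mod_cast ncard_hausdorffPatterns_le hP r l
    _ ≤ (n ^ (8 * d * Real.logb 2 y)) ^ l := by gcongr
    _ = n ^ (8 * d * l * Real.logb 2 y) := by
        rw [← Real.rpow_mul_natCast (by positivity)]
        ring_nf

/-- the number of distinct patterns that point sets with at most `l` points
realize on `n` Hausdorff metric balls centered at sets of `U^m` is at most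
`n^{c·d·l·log₂(2 + m/d)}`; i.e. the dual shattering dimension is `O(d·l·log(m/d))`. -/
theorem hausdorff_dual_shattering_dimension :
    ∃ c : ℝ, 0 < c ∧
      ∀ d m l n : ℕ, 1 ≤ d → 1 ≤ m → 1 ≤ l → l ≤ m → 2 ≤ n →
      ∀ (P : Fin n → PtSet d m) (r : Fin n → ℝ),
      (∀ i, 0 < r i) →
      (Set.ncard {s : Set (Fin n) | ∃ Q : Finset (Pt d), Q.Nonempty ∧ Q.card ≤ l ∧
          s = {i | Metric.hausdorffDist (↑Q : Set (Pt d)) (↑(P i).1 : Set (Pt d)) ≤ r i}} : ℝ) ≤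
        (n : ℝ) ^ (c * d * l * Real.logb 2 (2 + (m : ℝ) / (d : ℝ))) :=
  ⟨8, by norm_num, fun d m l n hd _ _ _ hn P r _ => by
    simpa [hausdorffPatterns] using hausdorff_dual_shattering_dimension_general
      (by simpa using hd) (by simpa using hn) (fun i => (P i).2.1) (fun i => (P i).2.2) r l⟩
end
end

section
/- For every δ > 0 there exists a constant c = c(δ) > 0 with the following property. For all integers d, k, l, m ≥ 1 with l ≤ m, every ε ∈ (0,1), and every finite family P = {Q_1,…,Q_n} of nonempty finite subsets of ℝ^d each of cardinality at most m, there exist an integer N ≤ c·(k³·l·m^δ·d/ε²)·(1 + log(k·l/ε)), indices i_1,…,i_N ∈ {1,…,n} (repetitions allowed), and weights ω_1,…,ω_N > 0, such that for every family C' of k nonempty finite subsets of ℝ^d each of cardinality at most l, Σ_{j=1}^N ω_j·d_H(Q_{i_j}, C') lies in the interval [(1−ε)·A, (1+ε)·A], where A = (1/n)·Σ_{i=1}^n d_H(Q_i, C') and d_H(Q, C') = min_{Q'∈C'} d_H(Q, Q'). -/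
noncomputable section

/-!
Sublevel sets of the cost functions cut out few subsets of a finite set: a Euclidean ball is the
trace of a halfspace under a lifting to a space of dimension `dim E + 3`, a halfspace class has
polynomial growth, and `d_H(Q, C) ≤ r` is a Boolean combination of ball memberships of the points
of `Q`, one for each point of the centres. Halving a set with random signs therefore preserves all
densities of sublevel sets up to a small error, and iterating yields small approximations. To make
additive errors relative, each index is first replaced by a number of copies proportional to its
sensitivity `sup_C cost C i / ∑ j, cost C j`; the total sensitivity is `O(k)`, because moving each
centre to the nearest input set at most doubles the costs. Integrating the density errors over the
levels gives the coreset.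
-/

namespace HausdorffCoreset

open Finset MeasureTheory

open scoped Classical in
/-- The trace `Y ∩ R` of a range `R` on a finite set `Y`. -/
def trace {α : Type*} (R : Set α) (Y : Finset α) : Finset α := {x ∈ Y | x ∈ R}

open scoped Classical in
/-- The traces on `Y` of all members of a range space `𝓡`, a range space being given by its family
of ranges. Their number is the growth function of `𝓡` at `Y`. -/
def traces {α : Type*} (𝓡 : Set (Set α)) (Y : Finset α) : Finset (Finset α) :=
  {A ∈ Y.powerset | ∃ R ∈ 𝓡, trace R Y = A}

/-- The proportion of the points of `Y` that lie in `R` (with value `0` for empty `Y`). -/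
def density {α : Type*} (R : Set α) (Y : Finset α) : ℝ := #(trace R Y) / #Y

/-- `Y` is an `η`-approximation of `X` in the range space `𝓡`: a subset of `X` in which every range
has the same density as in `X`, up to an additive error `η`. -/
def IsApproximation {α : Type*} (𝓡 : Set (Set α)) (η : ℝ) (X Y : Finset α) : Prop :=
  Y ⊆ X ∧ ∀ R ∈ 𝓡, |density R Y - density R X| ≤ η

section RangeSpace

variable {α : Type*} {𝓡 : Set (Set α)} {R : Set α} {X Y Z : Finset α}

lemma mem_trace {x : α} : x ∈ trace R Y ↔ x ∈ Y ∧ x ∈ R := by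
  classical exact mem_filter

lemma trace_subset : trace R Y ⊆ Y := fun _ hx => (mem_trace.1 hx).1

lemma mem_traces {A : Finset α} : A ∈ traces 𝓡 Y ↔ ∃ R ∈ 𝓡, trace R Y = A := by
  classical
  rw [traces, mem_filter, mem_powerset, and_iff_right_iff_imp]
  rintro ⟨R, -, rfl⟩
  exact trace_subset

lemma trace_mem_traces (hR : R ∈ 𝓡) : trace R Y ∈ traces 𝓡 Y := mem_traces.2 ⟨R, hR, rfl⟩

lemma card_trace_eq_sum_indicator (R : Set α) (Y : Finset α) :
    (#(trace R Y) : ℝ) = ∑ x ∈ Y, R.indicator 1 x := by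
  classical
  rw [trace, card_filter, Nat.cast_sum]
  simp [Set.indicator_apply]

lemma IsApproximation.refl (𝓡 : Set (Set α)) (X : Finset α) : IsApproximation 𝓡 0 X X :=
  ⟨Subset.rfl, fun R _ => by simp⟩

lemma IsApproximation.mono {η θ : ℝ} (h : IsApproximation 𝓡 η X Y) (hηθ : η ≤ θ) :
    IsApproximation 𝓡 θ X Y :=
  ⟨h.1, fun R hR => (h.2 R hR).trans hηθ⟩

lemma IsApproximation.trans {η θ : ℝ} (hXY : IsApproximation 𝓡 η X Y)
    (hYZ : IsApproximation 𝓡 θ Y Z) : IsApproximation 𝓡 (θ + η) X Z :=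
  ⟨hYZ.1.trans hXY.1, fun R hR =>
    (abs_sub_le _ (density R Y) _).trans (add_le_add (hYZ.2 R hR) (hXY.2 R hR))⟩

end RangeSpace

section Signs

variable {ι : Type*} [Fintype ι]

lemma sum_exp_sum_units_mul [DecidableEq ι] (a : ι → ℝ) :
    ∑ σ : ι → ℤˣ, Real.exp (∑ i, (σ i : ℤ) * a i) = ∏ i, (2 * Real.cosh (a i)) := by
  have two_cosh : ∀ i, ∑ s : ℤˣ, Real.exp ((s : ℤ) * a i) = 2 * Real.cosh (a i) := fun i => by
    rw [UnitsInt.univ, sum_pair (by decide), Real.cosh_eq]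
    simp [mul_div_cancel₀]
  simp_rw [← two_cosh, prod_univ_sum, Fintype.piFinset_univ, Real.exp_sum]

lemma sum_exp_sum_units_mul_le [DecidableEq ι] (a : ι → ℝ) :
    ∑ σ : ι → ℤˣ, Real.exp (∑ i, (σ i : ℤ) * a i) ≤
      2 ^ Fintype.card ι * Real.exp ((∑ i, a i ^ 2) / 2) :=
  calc ∑ σ : ι → ℤˣ, Real.exp (∑ i, (σ i : ℤ) * a i)
      = ∏ i, (2 * Real.cosh (a i)) := sum_exp_sum_units_mul a
    _ ≤ ∏ i, (2 * Real.exp (a i ^ 2 / 2)) := by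
      gcongr with i
      exact Real.cosh_le_exp_half_sq _
    _ = 2 ^ Fintype.card ι * Real.exp ((∑ i, a i ^ 2) / 2) := by
      rw [prod_mul_distrib, prod_const, card_univ, ← Real.exp_sum, sum_div]

lemma sum_exp_abs_sum_units_mul_le [DecidableEq ι] (a : ι → ℝ) :
    ∑ σ : ι → ℤˣ, Real.exp |∑ i, (σ i : ℤ) * a i| ≤
      2 * (2 ^ Fintype.card ι * Real.exp ((∑ i, a i ^ 2) / 2)) := by
  have h := sum_exp_sum_units_mul_le a
  have h_neg := sum_exp_sum_units_mul_le (-a)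
  simp only [Pi.neg_apply, mul_neg, sum_neg_distrib, neg_sq] at h_neg
  calc ∑ σ : ι → ℤˣ, Real.exp |∑ i, (σ i : ℤ) * a i|
      ≤ ∑ σ : ι → ℤˣ, (Real.exp (∑ i, (σ i : ℤ) * a i) + Real.exp (-∑ i, (σ i : ℤ) * a i)) :=
        sum_le_sum fun σ _ => Real.exp_abs_le _
    _ ≤ 2 * (2 ^ Fintype.card ι * Real.exp ((∑ i, a i ^ 2) / 2)) := by
        rw [sum_add_distrib]; linarith

/-- An exponential-moment union bound over `S`. -/
lemma exists_units_abs_sum_mul_le {κ : Type*} (S : Finset κ) (a : κ → ι → ℝ) {b v : ℝ}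
    (hb : 0 < b) (hv : 0 < v) (ha : ∀ s ∈ S, ∑ i, a s i ^ 2 ≤ v)
    (hS : 2 * (#S : ℝ) ≤ Real.exp b) :
    ∃ σ : ι → ℤˣ, ∀ s ∈ S, |∑ i, (σ i : ℤ) * a s i| ≤ √(2 * b * v) := by
  classical
  set lam := √(2 * b / v)
  have lam_pos : 0 < lam := Real.sqrt_pos.2 (by positivity)
  have lam_sq : lam ^ 2 = 2 * b / v := Real.sq_sqrt (by positivity)
  have moment_le : ∀ s ∈ S, ∑ σ : ι → ℤˣ, Real.exp |∑ i, (σ i : ℤ) * (lam * a s i)| ≤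
      2 * (2 ^ Fintype.card ι * Real.exp b) := fun s hs => by
    refine (sum_exp_abs_sum_units_mul_le _).trans ?_
    gcongr
    calc (∑ i, (lam * a s i) ^ 2) / 2 = lam ^ 2 * (∑ i, a s i ^ 2) / 2 := by
          simp_rw [mul_pow, mul_sum]
      _ ≤ lam ^ 2 * v / 2 := by gcongr; exact ha s hs
      _ = b := by rw [lam_sq]; field_simp
  have total_le : ∑ σ : ι → ℤˣ, ∑ s ∈ S, Real.exp |∑ i, (σ i : ℤ) * (lam * a s i)| ≤
      ∑ _σ : ι → ℤˣ, Real.exp (2 * b) := by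
    rw [sum_comm]
    calc _ ≤ (#S : ℝ) * (2 * (2 ^ Fintype.card ι * Real.exp b)) := by
          simpa using sum_le_card_nsmul S _ _ moment_le
      _ = 2 ^ Fintype.card ι * (2 * #S * Real.exp b) := by ring
      _ ≤ 2 ^ Fintype.card ι * (Real.exp b * Real.exp b) := by gcongr
      _ = ∑ _σ : ι → ℤˣ, Real.exp (2 * b) := by simp [two_mul, Real.exp_add]
  obtain ⟨σ, -, hσ⟩ := exists_le_of_sum_le univ_nonempty total_le
  refine ⟨σ, fun s hs => ?_⟩
  have exp_le : Real.exp |∑ i, (σ i : ℤ) * (lam * a s i)| ≤ Real.exp (2 * b) :=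
    (single_le_sum (f := fun s => Real.exp |∑ i, (σ i : ℤ) * (lam * a s i)|)
      (fun s _ => (Real.exp_pos _).le) hs).trans hσ
  have lam_mul_le : lam * |∑ i, (σ i : ℤ) * a s i| ≤ lam * √(2 * b * v) :=
    calc lam * |∑ i, (σ i : ℤ) * a s i| = |∑ i, (σ i : ℤ) * (lam * a s i)| := by
          simp_rw [mul_left_comm _ lam, ← mul_sum, abs_mul, abs_of_pos lam_pos]
      _ ≤ 2 * b := Real.exp_le_exp.1 exp_le
      _ = √((2 * b) ^ 2) := (Real.sqrt_sq (by positivity)).symm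
      _ = lam * √(2 * b * v) := by
          rw [← Real.sqrt_mul (by positivity)]
          congr 1
          field_simp
  exact le_of_mul_le_mul_left lam_mul_le lam_pos

end Signs

section Halving

variable {α : Type*} {𝓡 : Set (Set α)}

/-- The half of `Y` picked out by a sign vector `σ`: given a partition of `Y` into pairs indexed by
`ι`, one point of each pair. -/
def selection {ι : Type*} [Fintype ι] {Y : Finset α} (e : ι × ℤˣ ≃ Y) (σ : ι → ℤˣ) : Finset α :=
  univ.map ⟨fun i => (e (i, σ i) : α), fun _ _ hij =>
    (Prod.mk.inj (e.injective (Subtype.ext hij))).1⟩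

lemma two_mul_card_trace_selection_sub {ι : Type*} [Fintype ι] {Y : Finset α} (e : ι × ℤˣ ≃ Y)
    (σ : ι → ℤˣ) (R : Set α) :
    2 * (#(trace R (selection e σ)) : ℝ) - #(trace R Y) =
      ∑ i, ((σ i : ℤ) : ℝ) * ((trace R Y : Set α).indicator (1 : α → ℝ) (e (i, 1)) -
        (trace R Y : Set α).indicator (1 : α → ℝ) (e (i, -1))) := by
  have indicator_trace (z : ι × ℤˣ) : (trace R Y : Set α).indicator (1 : α → ℝ) (e z) =
      R.indicator (1 : α → ℝ) (e z) := by
    classical simp [Set.indicator_apply, mem_trace]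
  have card_all : (#(trace R Y) : ℝ) =
      ∑ i, (R.indicator (1 : α → ℝ) (e (i, 1)) + R.indicator (1 : α → ℝ) (e (i, -1))) := by
    rw [card_trace_eq_sum_indicator, ← sum_coe_sort Y, ← e.sum_comp, Fintype.sum_prod_type]
    exact sum_congr rfl fun i _ => by rw [UnitsInt.univ, sum_pair (by decide)]
  have card_selected : (#(trace R (selection e σ)) : ℝ) =
      ∑ i, R.indicator (1 : α → ℝ) (e (i, σ i)) :=
    (card_trace_eq_sum_indicator R _).trans (sum_map _ _ _)
  rw [card_all, card_selected, mul_sum, ← sum_sub_distrib]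
  refine sum_congr rfl fun i _ => ?_
  rw [indicator_trace, indicator_trace]
  rcases Int.units_eq_one_or (σ i) with h | h <;> rw [h] <;> push_cast <;> ring

lemma exists_halving {Y : Finset α} {p : ℕ} (hp : 0 < p) (hY : #Y = 2 * p) {b : ℝ} (hb : 0 < b)
    (hgrowth : 2 * (#(traces 𝓡 Y) : ℝ) ≤ Real.exp b) :
    ∃ Y', #Y' = p ∧ IsApproximation 𝓡 √(b / #Y) Y Y' := by
  classical
  have hp' : (0 : ℝ) < p := by exact_mod_cast hp
  let e : Fin p × ℤˣ ≃ Y := Fintype.equivOfCardEq (by simp [hY, mul_comm])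
  obtain ⟨σ, hσ⟩ := exists_units_abs_sum_mul_le (traces 𝓡 Y)
    (fun A i => (A : Set α).indicator 1 (e (i, 1) : α) - (A : Set α).indicator 1 (e (i, -1) : α))
    hb hp' (fun A _ => by
      calc ∑ i, ((A : Set α).indicator 1 (e (i, 1) : α) -
              (A : Set α).indicator 1 (e (i, -1) : α)) ^ 2 ≤ ∑ _i : Fin p, (1 : ℝ) := by
            gcongr with i
            simp only [Set.indicator_apply, Pi.one_apply]
            split_ifs <;> norm_num
        _ = p := by simp) hgrowth
  have card_selection : #(selection e σ) = p := by simp [selection]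
  refine ⟨selection e σ, card_selection, map_subset_iff_subset_preimage.2 ?_, fun R hR => ?_⟩
  · exact fun i _ => mem_preimage.2 (e (i, σ i)).2
  have density_diff : density R (selection e σ) - density R Y =
      (2 * (#(trace R (selection e σ)) : ℝ) - #(trace R Y)) / (2 * p) := by
    rw [density, density, card_selection, hY]
    push_cast
    field_simp
  rw [density_diff, two_mul_card_trace_selection_sub, abs_div,
    abs_of_pos (by positivity : 0 < 2 * (p : ℝ)), div_le_iff₀ (by positivity)]
  refine (hσ _ (trace_mem_traces hR)).trans_eq ?_
  rw [← Real.sqrt_sq (by positivity : 0 ≤ 2 * (p : ℝ)), ← Real.sqrt_mul (by positivity), hY,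
    Real.sqrt_inj (by positivity) (by positivity)]
  push_cast
  field_simp

lemma sqrt_succ_add_one_div_two_pow_le (L : ℕ) :
    √((1 + (L + 1 : ℕ)) / 2 ^ (L + 1)) ≤ 2 * (3 / 4) ^ L := by
  have bernoulli : (1 : ℝ) + L * (1 / 8) ≤ (1 + 1 / 8) ^ L :=
    one_add_mul_le_pow (by norm_num) L
  have split_pow : ((3 / 4 : ℝ) ^ L) ^ 2 * 2 ^ L = (1 + 1 / 8) ^ L := by
    rw [← pow_mul, mul_comm L, pow_mul, ← mul_pow]
    norm_num
  refine Real.sqrt_le_iff.2 ⟨by positivity, ?_⟩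
  rw [div_le_iff₀ (by positivity)]
  calc (1 : ℝ) + (L + 1 : ℕ) ≤ 8 * (1 + L * (1 / 8)) := by push_cast; linarith
    _ ≤ 8 * (((3 / 4 : ℝ) ^ L) ^ 2 * 2 ^ L) := by rw [split_pow]; gcongr
    _ = (2 * (3 / 4) ^ L) ^ 2 * 2 ^ (L + 1) := by ring

lemma exists_isApproximation_geom_of_growth_le {N : ℕ} (hN : 0 < N) {B : ℝ} (hB : 0 < B)
    (hgrowth : ∀ (j : ℕ) (Y : Finset α), #Y = N * 2 ^ j →
      2 * (#(traces 𝓡 Y) : ℝ) ≤ Real.exp (B * (1 + j))) (L : ℕ) :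
    ∀ X : Finset α, #X = N * 2 ^ L →
      ∃ Y, #Y = N ∧ IsApproximation 𝓡 (8 * (1 - (3 / 4) ^ L) * √(B / N)) X Y := by
  induction L with
  | zero => exact fun X hX => ⟨X, by simpa using hX, by simpa using IsApproximation.refl 𝓡 X⟩
  | succ L ih =>
    intro X hX
    obtain ⟨X', hX'_card, hX'⟩ := exists_halving (p := N * 2 ^ L) (by positivity)
      (by rw [hX]; ring) (by positivity) (hgrowth (L + 1) X hX)
    obtain ⟨Y, hY_card, hY⟩ := ih X' hX'_card
    refine ⟨Y, hY_card, (hX'.trans hY).mono ?_⟩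
    have halving_error : √(B * (1 + (L + 1 : ℕ)) / #X) ≤ 2 * (3 / 4) ^ L * √(B / N) :=
      calc √(B * (1 + (L + 1 : ℕ)) / #X) = √((1 + (L + 1 : ℕ)) / 2 ^ (L + 1)) * √(B / N) := by
            rw [← Real.sqrt_mul (by positivity), hX]
            push_cast
            congr 1
            field_simp
        _ ≤ 2 * (3 / 4) ^ L * √(B / N) := by
            gcongr
            exact sqrt_succ_add_one_div_two_pow_le L
    calc 8 * (1 - (3 / 4) ^ L) * √(B / N) + √(B * (1 + (L + 1 : ℕ)) / #X)
        ≤ 8 * (1 - (3 / 4) ^ L) * √(B / N) + 2 * (3 / 4) ^ L * √(B / N) := by gcongr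
      _ = 8 * (1 - (3 / 4) ^ (L + 1)) * √(B / N) := by ring

/-- The errors of the successive halvings are dominated by a geometric series. -/
lemma exists_isApproximation_of_growth_le {N : ℕ} (hN : 0 < N) {B : ℝ} (hB : 0 < B)
    (hgrowth : ∀ (j : ℕ) (Y : Finset α), #Y = N * 2 ^ j →
      2 * (#(traces 𝓡 Y) : ℝ) ≤ Real.exp (B * (1 + j)))
    {L : ℕ} {X : Finset α} (hX : #X = N * 2 ^ L) :
    ∃ Y, #Y = N ∧ IsApproximation 𝓡 (8 * √(B / N)) X Y := by
  obtain ⟨Y, hY_card, hY⟩ := exists_isApproximation_geom_of_growth_le hN hB hgrowth L X hX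
  refine ⟨Y, hY_card, hY.mono ?_⟩
  gcongr
  linarith [pow_pos (by norm_num : (0 : ℝ) < 3 / 4) L]

end Halving

section LayerCake

variable {α : Type*} {g : α → ℝ} {M : ℝ} {X Y : Finset α}

lemma setIntegral_Icc_indicator_Ici {a b : ℝ} (ha : 0 ≤ a) (hab : a ≤ b) :
    ∫ r in Set.Icc 0 b, (Set.Ici a).indicator 1 r = b - a := by
  rw [setIntegral_indicator measurableSet_Ici, Set.inter_comm, ← Set.Ici_inter_Iic,
    ← Set.inter_assoc, Set.Ici_inter_Ici, sup_of_le_left ha, Set.Ici_inter_Iic]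
  simp [hab]

lemma integrableOn_indicator_Ici (a b : ℝ) :
    IntegrableOn ((Set.Ici a).indicator (1 : ℝ → ℝ)) (Set.Icc 0 b) :=
  (integrableOn_const (by simp)).indicator measurableSet_Ici

lemma density_sublevel_eq (g : α → ℝ) (Y : Finset α) (r : ℝ) :
    density {x | g x ≤ r} Y = (∑ x ∈ Y, (Set.Ici (g x)).indicator 1 r) / #Y := by
  rw [density, card_trace_eq_sum_indicator]
  rfl

lemma integrableOn_density_sublevel (g : α → ℝ) (Y : Finset α) (b : ℝ) :
    IntegrableOn (fun r => density {x | g x ≤ r} Y) (Set.Icc 0 b) := by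
  simp only [density_sublevel_eq]
  exact (integrable_finsetSum _ fun x _ => integrableOn_indicator_Ici (g x) b).div_const _

lemma integral_density_sublevel (hY : Y.Nonempty) (hg : ∀ x ∈ Y, 0 ≤ g x ∧ g x ≤ M) :
    ∫ r in Set.Icc 0 M, density {x | g x ≤ r} Y = M - (∑ x ∈ Y, g x) / #Y := by
  have card_pos : (0 : ℝ) < #Y := by exact_mod_cast hY.card_pos
  simp only [density_sublevel_eq]
  rw [integral_div, integral_finsetSum _ fun x _ => integrableOn_indicator_Ici (g x) M,
    sum_congr rfl fun x hx => setIntegral_Icc_indicator_Ici (hg x hx).1 (hg x hx).2,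
    sum_sub_distrib, sum_const, nsmul_eq_mul, sub_div, mul_div_cancel_left₀ _ card_pos.ne']

/-- By the layer-cake formula, an approximation with respect to the sublevel sets of a bounded
function also approximates its mean. -/
lemma IsApproximation.abs_mean_sub_mean_le {𝓡 : Set (Set α)} {η : ℝ}
    (h : IsApproximation 𝓡 η X Y) (hY : Y.Nonempty) (hg : ∀ x ∈ X, 0 ≤ g x ∧ g x ≤ M)
    (hsub : ∀ r, 0 ≤ r → {x | g x ≤ r} ∈ 𝓡) :
    |(∑ x ∈ Y, g x) / #Y - (∑ x ∈ X, g x) / #X| ≤ η * M := by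
  obtain ⟨y, hy⟩ := hY
  have hM : 0 ≤ M := (hg y (h.1 hy)).1.trans (hg y (h.1 hy)).2
  have mean_diff : (∑ x ∈ Y, g x) / #Y - (∑ x ∈ X, g x) / #X =
      -∫ r in Set.Icc 0 M, (density {x | g x ≤ r} Y - density {x | g x ≤ r} X) := by
    rw [integral_sub (integrableOn_density_sublevel g Y M) (integrableOn_density_sublevel g X M),
      integral_density_sublevel ⟨y, hy⟩ fun x hx => hg x (h.1 hx),
      integral_density_sublevel ⟨y, h.1 hy⟩ hg]
    ring
  rw [mean_diff, abs_neg]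
  simpa [hM] using norm_setIntegral_le_of_norm_le_const (μ := volume) (s := Set.Icc 0 M)
    (f := fun r => density {x | g x ≤ r} Y - density {x | g x ≤ r} X)
    (by simp) fun r hr => h.2 _ (hsub r hr.1)

end LayerCake

section VapnikChervonenkis

/-- A nontrivial linear relation among the vectors `φ x` with `x ∈ s` would be contradicted by a
linear functional that is `≤ 0` exactly at the vectors with negative coefficient. -/
lemma card_le_finrank_of_forall_subset_halfspace {𝕜 V α : Type*} [Field 𝕜] [LinearOrder 𝕜]
    [IsStrictOrderedRing 𝕜] [AddCommGroup V] [Module 𝕜 V] [FiniteDimensional 𝕜 V] {φ : α → V}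
    {s : Finset α}
    (h : ∀ t ⊆ s, ∃ L : Module.Dual 𝕜 V, ∀ x ∈ s, x ∈ t ↔ L (φ x) ≤ 0) :
    #s ≤ Module.finrank 𝕜 V := by
  classical
  suffices hind : LinearIndepOn 𝕜 φ (s : Set α) by
    simpa using LinearIndependent.fintype_card_le_finrank hind
  have nonpos : ∀ c : α → 𝕜, ∑ x ∈ s, c x • φ x = 0 → ∀ x ∈ s, c x ≤ 0 := by
    intro c hc y hy
    by_contra! hcy
    obtain ⟨L, hL⟩ := h {x ∈ s | c x < 0} (filter_subset _ _)
    have mul_nonneg_of_mem : ∀ x ∈ s, 0 ≤ c x * L (φ x) := fun x hx => by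
      have hLx := hL x hx
      rw [mem_filter, and_iff_right hx] at hLx
      rcases lt_or_ge (c x) 0 with hcx | hcx
      · exact mul_nonneg_of_nonpos_of_nonpos hcx.le (hLx.1 hcx)
      · exact mul_nonneg hcx (not_le.1 fun hle => (hLx.2 hle).not_ge hcx).le
    have mul_pos_of_pos : 0 < c y * L (φ y) := by
      refine mul_pos hcy (not_le.1 fun hle => ?_)
      exact (mem_filter.1 ((hL y hy).2 hle)).2.not_gt hcy
    refine (sum_pos' mul_nonneg_of_mem ⟨y, hy, mul_pos_of_pos⟩).ne' ?_
    simpa using congrArg L hc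
  refine linearIndepOn_finset_iff.2 fun c hc x hx => (nonpos c hc x hx).antisymm ?_
  simpa using nonpos (-c) (by simpa using hc) x hx

lemma card_traces_le_sum_choose {α : Type*} [DecidableEq α] {𝓡 : Set (Set α)} {Z : Finset α} {D : ℕ}
    (hD : ∀ s, (traces 𝓡 Z).Shatters s → #s ≤ D) :
    #(traces 𝓡 Z) ≤ ∑ j ∈ range (D + 1), (#Z).choose j := by
  have shatterer_subset :
      (traces 𝓡 Z).shatterer ⊆ (range (D + 1)).biUnion fun j => Z.powersetCard j := by
    intro s hs
    have hs := mem_shatterer.1 hs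
    obtain ⟨A, hA, hsA⟩ := hs Subset.rfl
    obtain ⟨R, -, rfl⟩ := mem_traces.1 hA
    exact mem_biUnion.2 ⟨#s, mem_range_succ_iff.2 (hD s hs),
      mem_powersetCard.2 ⟨(inter_eq_left.1 hsA).trans trace_subset, rfl⟩⟩
  calc #(traces 𝓡 Z) ≤ #(traces 𝓡 Z).shatterer := card_le_card_shatterer _
    _ ≤ #((range (D + 1)).biUnion fun j => Z.powersetCard j) := card_le_card shatterer_subset
    _ ≤ ∑ j ∈ range (D + 1), #(Z.powersetCard j) := card_biUnion_le
    _ = ∑ j ∈ range (D + 1), (#Z).choose j := by simp only [card_powersetCard]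

lemma sum_choose_le_exp_mul_div_pow {n D : ℕ} {x : ℝ} (hD : 0 < D) (hDx : D ≤ x) (hnx : n ≤ x) :
    (∑ j ∈ range (D + 1), n.choose j : ℝ) ≤ (Real.exp 1 * x / D) ^ D := by
  have hD' : (0 : ℝ) < D := by exact_mod_cast hD
  have hx : 0 < x := hD'.trans_le hDx
  have choose_eq_zero : ∀ j ∈ range (D + n + 1), j ∉ range (n + 1) →
      (n.choose j : ℝ) * (D / x) ^ j = 0 := fun j _ hj => by
    rw [mem_range, not_lt] at hj
    rw [Nat.choose_eq_zero_of_lt hj, Nat.cast_zero, zero_mul]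
  have scaled : (D / x) ^ D * ∑ j ∈ range (D + 1), (n.choose j : ℝ) ≤ Real.exp D :=
    calc (D / x) ^ D * ∑ j ∈ range (D + 1), (n.choose j : ℝ)
        ≤ ∑ j ∈ range (D + 1), (n.choose j : ℝ) * (D / x) ^ j := by
          rw [mul_sum]
          refine sum_le_sum fun j hj => ?_
          rw [mul_comm]
          gcongr _ * ?_
          exact pow_le_pow_of_le_one (by positivity) ((div_le_one hx).2 hDx)
            (mem_range_succ_iff.1 hj)
      _ ≤ ∑ j ∈ range (D + n + 1), (n.choose j : ℝ) * (D / x) ^ j :=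
          sum_le_sum_of_subset_of_nonneg (range_mono (by lia)) fun _ _ _ => by positivity
      _ = ∑ j ∈ range (n + 1), (n.choose j : ℝ) * (D / x) ^ j :=
          (sum_subset (range_mono (by lia)) choose_eq_zero).symm
      _ = (D / x + 1) ^ n := by simp [add_pow, mul_comm]
      _ ≤ Real.exp (D / x) ^ n := by gcongr; exact Real.add_one_le_exp _
      _ = Real.exp (n * (D / x)) := (Real.exp_nat_mul _ _).symm
      _ ≤ Real.exp D := by
          gcongr
          calc n * (D / x) ≤ x * (D / x) := by gcongr
            _ = D := by field_simp
  calc (∑ j ∈ range (D + 1), n.choose j : ℝ) ≤ Real.exp D / (D / x) ^ D :=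
        (le_div_iff₀' (by positivity)).2 scaled
    _ = (Real.exp 1 * x / D) ^ D := by
        rw [← Real.exp_one_pow, ← div_pow]
        congr 1
        field_simp

/-- The linear halfspaces of `V`, pulled back to `α` along a feature map `φ : α → V`. -/
def halfspaces {V α : Type*} [AddCommGroup V] [Module ℝ V] (φ : α → V) : Set (Set α) :=
  Set.range fun L : Module.Dual ℝ V => {x | L (φ x) ≤ 0}

variable {V α : Type*} [AddCommGroup V] [Module ℝ V] [FiniteDimensional ℝ V] {φ : α → V}
  {Z : Finset α}

lemma card_le_finrank_of_shatters_traces_halfspaces [DecidableEq α] {s : Finset α}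
    (hs : (traces (halfspaces φ) Z).Shatters s) : #s ≤ Module.finrank ℝ V := by
  obtain ⟨A, hA, hsA⟩ := hs Subset.rfl
  obtain ⟨R, -, rfl⟩ := mem_traces.1 hA
  have hsZ : s ⊆ Z := (inter_eq_left.1 hsA).trans trace_subset
  refine card_le_finrank_of_forall_subset_halfspace (φ := φ) fun t ht => ?_
  obtain ⟨B, hB, rfl⟩ := hs ht
  obtain ⟨_, ⟨L, rfl⟩, rfl⟩ := mem_traces.1 hB
  exact ⟨L, fun x hx => by simp [mem_trace, hx, hsZ hx]⟩

lemma card_traces_halfspaces_le [Nontrivial V] {x : ℝ} (hx : Module.finrank ℝ V ≤ x)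
    (hZ : #Z ≤ x) :
    (#(traces (halfspaces φ) Z) : ℝ) ≤
      (Real.exp 1 * x / Module.finrank ℝ V) ^ Module.finrank ℝ V := by
  classical
  refine le_trans ?_ (sum_choose_le_exp_mul_div_pow Module.finrank_pos hx hZ)
  exact_mod_cast card_traces_le_sum_choose fun s hs =>
    card_le_finrank_of_shatters_traces_halfspaces hs

end VapnikChervonenkis

section HausdorffRanges

lemma card_traces_le_pow {α γ ν : Type*} [Fintype ν] {𝓡 : Set (Set α)} {𝓢 : Set (Set γ)}
    {Y : Finset α} {Z : Finset γ} (dec : (ν → Finset γ) → Set α)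
    (h : ∀ R ∈ 𝓡, ∃ S : ν → Set γ, (∀ i, S i ∈ 𝓢) ∧
      ∀ x ∈ Y, x ∈ R ↔ x ∈ dec fun i => trace (S i) Z) :
    #(traces 𝓡 Y) ≤ #(traces 𝓢 Z) ^ Fintype.card ν := by
  classical
  have traces_subset : traces 𝓡 Y ⊆
      (Fintype.piFinset fun _ : ν => traces 𝓢 Z).image fun T => trace (dec T) Y := by
    intro A hA
    obtain ⟨R, hR, rfl⟩ := mem_traces.1 hA
    obtain ⟨S, hS, hRS⟩ := h R hR
    refine mem_image.2 ⟨fun i => trace (S i) Z,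
      Fintype.mem_piFinset.2 fun i => trace_mem_traces (hS i), ?_⟩
    ext x
    simp only [mem_trace]
    exact and_congr_right fun hx => (hRS x hx).symm
  calc #(traces 𝓡 Y) ≤ #(Fintype.piFinset fun _ : ν => traces 𝓢 Z) :=
        (card_le_card traces_subset).trans card_image_le
    _ = #(traces 𝓢 Z) ^ Fintype.card ν := by simp

lemma hausdorffDist_le_iff {α : Type*} [PseudoMetricSpace α] {A B : Set α} (hA : IsCompact A)
    (hB : IsCompact B) (hA_nonempty : A.Nonempty) (hB_nonempty : B.Nonempty) {ρ : ℝ} (hρ : 0 ≤ ρ) :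
    Metric.hausdorffDist A B ≤ ρ ↔
      (∀ a ∈ A, ∃ b ∈ B, dist a b ≤ ρ) ∧ ∀ b ∈ B, ∃ a ∈ A, dist b a ≤ ρ := by
  refine ⟨fun h => ?_, fun h => Metric.hausdorffDist_le_of_mem_dist hρ h.1 h.2⟩
  have hfin : Metric.hausdorffEDist A B ≠ ⊤ := Metric.hausdorffEDist_ne_top_of_nonempty_of_bounded
    hA_nonempty hB_nonempty hA.isBounded hB.isBounded
  constructor
  · intro a ha
    obtain ⟨b, hb, hab⟩ := hB.exists_infDist_eq_dist hB_nonempty a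
    exact ⟨b, hb, hab ▸ (Metric.infDist_le_hausdorffDist_of_mem ha hfin).trans h⟩
  · intro b hb
    obtain ⟨a, ha, hba⟩ := hA.exists_infDist_eq_dist hA_nonempty b
    rw [Metric.hausdorffEDist_comm] at hfin
    rw [Metric.hausdorffDist_comm] at h
    exact ⟨a, ha, hba ▸ (Metric.infDist_le_hausdorffDist_of_mem hb hfin).trans h⟩

/-- The distance `d_H(A, C)` of a point set `A` to a family `C` of point sets. It is only meant for
nonempty `κ` and nonempty point sets: the real infimum over an empty index set and the Hausdorff
distance to the empty set are both `0`. -/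
def hausdorffCost {κ α : Type*} [PseudoMetricSpace α] (C : κ → Finset α) (A : Finset α) : ℝ :=
  ⨅ t, Metric.hausdorffDist (A : Set α) (C t)

lemma hausdorffCost_nonneg {κ α : Type*} [PseudoMetricSpace α] (C : κ → Finset α) (A : Finset α) :
    0 ≤ hausdorffCost C A :=
  Real.iInf_nonneg fun _ => Metric.hausdorffDist_nonneg

lemma hausdorffCost_le_iff {κ α : Type*} [Finite κ] [Nonempty κ] [PseudoMetricSpace α]
    {C : κ → Finset α} (hC : ∀ t, (C t).Nonempty) {A : Finset α} (hA : A.Nonempty) {ρ : ℝ}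
    (hρ : 0 ≤ ρ) :
    hausdorffCost C A ≤ ρ ↔
      ∃ t, (∀ a ∈ A, ∃ c ∈ C t, dist a c ≤ ρ) ∧ ∀ c ∈ C t, ∃ a ∈ A, dist a c ≤ ρ := by
  have cost_le : hausdorffCost C A ≤ ρ ↔ ∃ t, Metric.hausdorffDist (A : Set α) (C t) ≤ ρ := by
    refine ⟨fun h => ?_, fun ⟨t, ht⟩ => (ciInf_le (Set.finite_range _).bddBelow t).trans ht⟩
    obtain ⟨t, ht⟩ := exists_eq_ciInf_of_finite
      (f := fun t => Metric.hausdorffDist (A : Set α) (C t))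
    exact ⟨t, ht.trans_le h⟩
  rw [cost_le]
  refine exists_congr fun t => ?_
  rw [hausdorffDist_le_iff A.finite_toSet.isCompact (C t).finite_toSet.isCompact
    (coe_nonempty.2 hA) (coe_nonempty.2 (hC t)) hρ]
  simp only [mem_coe, dist_comm]

/-- The families, indexed by `κ`, of nonempty subsets of `α` with at most `l` elements. -/
abbrev CenterFamily (κ α : Type*) (l : ℕ) :=
  {C : κ → Finset α // ∀ t, (C t).Nonempty ∧ #(C t) ≤ l}

lemma exists_enumeration {α : Type*} {s : Finset α} (hs : s.Nonempty) {l : ℕ} (hl : #s ≤ l) :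
    ∃ e : Fin l → α, Set.range e = s := by
  obtain ⟨emb⟩ : Nonempty (s ↪ Fin l) := Function.Embedding.nonempty_of_card_le (by simpa using hl)
  have : Nonempty s := hs.to_subtype
  refine ⟨Subtype.val ∘ Function.invFun emb, ?_⟩
  rw [(Function.invFun_surjective emb.injective).range_comp, Subtype.range_coe]

/-- The sublevel sets of the functions `f p` at levels proportional to a fixed function `τ`. -/
def scaledSublevels {P β : Type*} (f : P → β → ℝ) (τ : β → ℝ) : Set (Set β) :=
  {R | ∃ p, ∃ r ≥ 0, R = {x | f p x ≤ r * τ x}}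

variable {β E : Type*} [NormedAddCommGroup E] [InnerProductSpace ℝ E]

/-- The lifting to `E × ℝ³` that turns the balls of centre `c` and radius `r * τ x` into halfspaces:
the inequality `‖q - c‖² ≤ r² * τ x ^ 2` is linear in `(q, ‖q‖², 1, τ x ^ 2)`. -/
def ballFeature (τ : β → ℝ) (z : (_ : β) × E) : E × ℝ × ℝ × ℝ := (z.2, ‖z.2‖ ^ 2, 1, τ z.1 ^ 2)

lemma ball_mem_halfspaces {τ : β → ℝ} (hτ : ∀ x, 0 ≤ τ x) (c : E) {r : ℝ} (hr : 0 ≤ r) :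
    {z : (_ : β) × E | dist z.2 c ≤ r * τ z.1} ∈ halfspaces (ballFeature (E := E) τ) := by
  let L : Module.Dual ℝ (E × ℝ × ℝ × ℝ) := (-2 • innerₛₗ ℝ c).coprod
    (LinearMap.id.coprod ((‖c‖ ^ 2 • LinearMap.id).coprod (-r ^ 2 • LinearMap.id)))
  have lifted (z : (_ : β) × E) : L (ballFeature τ z) = dist z.2 c ^ 2 - (r * τ z.1) ^ 2 := by
    rw [dist_eq_norm, norm_sub_sq_real, real_inner_comm]
    simp only [L, ballFeature, LinearMap.coprod_apply, LinearMap.smul_apply, innerₛₗ_apply_apply,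
      zsmul_eq_mul, LinearMap.id_coe, id_eq, smul_eq_mul]
    push_cast
    ring
  refine ⟨L, Set.ext fun z => ?_⟩
  rw [Set.mem_ofPred_eq, Set.mem_ofPred_eq, lifted, sub_nonpos,
    sq_le_sq₀ dist_nonneg (mul_nonneg hr (hτ _))]

variable {κ : Type*} [Fintype κ] [Nonempty κ] {l m : ℕ}

lemma card_traces_hausdorffCost_le_pow (Q : β → Finset E) (hQ : ∀ x, (Q x).Nonempty) {τ : β → ℝ}
    (hτ : ∀ x, 0 ≤ τ x) (Y : Finset β) :
    #(traces (scaledSublevels (fun (C : CenterFamily κ E l) x => hausdorffCost C.1 (Q x)) τ) Y) ≤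
      #(traces (halfspaces (ballFeature τ)) (Y.sigma Q)) ^ (Fintype.card κ * l) := by
  rw [← Fintype.card_fin l, ← Fintype.card_prod, Fintype.card_fin l]
  refine card_traces_le_pow (ν := κ × Fin l) (fun T => {x | ∃ t,
    (∀ q ∈ Q x, ∃ j, ⟨x, q⟩ ∈ T (t, j)) ∧ ∀ j, ∃ q ∈ Q x, ⟨x, q⟩ ∈ T (t, j)}) ?_
  rintro _ ⟨⟨C, hC⟩, r, hr, rfl⟩
  choose e he using fun t => exists_enumeration (hC t).1 (hC t).2
  refine ⟨fun tj => {z | dist z.2 (e tj.1 tj.2) ≤ r * τ z.1},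
    fun tj => ball_mem_halfspaces hτ _ hr, fun x hx => ?_⟩
  rw [Set.mem_ofPred_eq, hausdorffCost_le_iff (fun t => (hC t).1) (hQ x) (mul_nonneg hr (hτ x))]
  refine exists_congr fun t => ?_
  simp only [← mem_coe (s := C t), ← he, Set.exists_range_iff, Set.forall_mem_range]
  simp +contextual [mem_trace, hx]

lemma card_traces_hausdorffCost_le [FiniteDimensional ℝ E] {Q : β → Finset E}
    (hQ : ∀ x, (Q x).Nonempty ∧ #(Q x) ≤ m) {τ : β → ℝ} (hτ : ∀ x, 0 ≤ τ x) {Y : Finset β} {D : ℕ}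
    (hD : D = Module.finrank ℝ E + 3) (hY : (D : ℝ) ≤ #Y * m) :
    (#(traces (scaledSublevels (fun (C : CenterFamily κ E l) x => hausdorffCost C.1 (Q x)) τ) Y)
      : ℝ) ≤ ((Real.exp 1 * (#Y * m) / D) ^ D) ^ (Fintype.card κ * l) := by
  have finrank_feature : Module.finrank ℝ (E × ℝ × ℝ × ℝ) = D := by simp [hD]
  have card_sigma_le : (#(Y.sigma Q) : ℝ) ≤ #Y * m := by
    rw [card_sigma]
    exact_mod_cast sum_le_card_nsmul Y _ m fun x _ => (hQ x).2
  have card_halfspaces := card_traces_halfspaces_le (φ := ballFeature τ) (x := #Y * m)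
    (by rwa [finrank_feature]) card_sigma_le
  rw [finrank_feature] at card_halfspaces
  calc _ ≤ (#(traces (halfspaces (ballFeature τ)) (Y.sigma Q)) : ℝ) ^ (Fintype.card κ * l) := by
        exact_mod_cast card_traces_hausdorffCost_le_pow Q (fun x => (hQ x).1) hτ Y
    _ ≤ _ := by gcongr

end HausdorffRanges

section Sensitivity

variable {α ι κ : Type*} [PseudoMetricSpace α] {x : ι → α}

lemma exists_infDist_range_eq_dist [Finite κ] [Nonempty κ] (C : κ → α) (a : α) :
    ∃ t, Metric.infDist a (Set.range C) = dist a (C t) := by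
  obtain ⟨_, ⟨t, rfl⟩, ht⟩ :=
    (Set.finite_range C).isCompact.exists_infDist_eq_dist (Set.range_nonempty C) a
  exact ⟨t, ht⟩

/-- Moving every centre to the nearest point `x i` at most doubles the distances to the `x i`. -/
lemma exists_infDist_range_comp_le [Finite ι] [Nonempty ι] [Finite κ] [Nonempty κ]
    (x : ι → α) (C : κ → α) :
    ∃ c : κ → ι, ∀ i,
      Metric.infDist (x i) (Set.range (x ∘ c)) ≤ 2 * Metric.infDist (x i) (Set.range C) := by
  choose c hc using fun t => Finite.exists_min fun i => dist (x i) (C t)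
  refine ⟨c, fun i => ?_⟩
  obtain ⟨t, ht⟩ := exists_infDist_range_eq_dist C (x i)
  calc Metric.infDist (x i) (Set.range (x ∘ c)) ≤ dist (x i) (x (c t)) :=
        Metric.infDist_le_dist_of_mem ⟨t, rfl⟩
    _ ≤ dist (x i) (C t) + dist (x (c t)) (C t) := dist_triangle_right _ _ _
    _ ≤ 2 * Metric.infDist (x i) (Set.range C) := by linarith [hc t i]

lemma card_mul_infDist_le (s : Finset ι) (c : α) (S : Set α) :
    #s * Metric.infDist c S ≤ ∑ j ∈ s, (dist (x j) c + Metric.infDist (x j) S) := by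
  rw [← nsmul_eq_mul]
  refine card_nsmul_le_sum _ _ _ fun j _ => ?_
  rw [add_comm, dist_comm]
  exact Metric.infDist_le_infDist_add_dist

variable [Fintype ι]

lemma sum_one_div_card_fiber_le [Fintype κ] [DecidableEq κ] (a : ι → κ) :
    ∑ i, (1 : ℝ) / #{j | a j = a i} ≤ Fintype.card κ := by
  calc ∑ i, (1 : ℝ) / #{j | a j = a i} = ∑ t, ∑ i with a i = t, (1 : ℝ) / #{j | a j = a i} :=
        (sum_fiberwise univ a _).symm
    _ ≤ ∑ _t : κ, (1 : ℝ) := by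
        refine sum_le_sum fun t _ => ?_
        rw [sum_congr rfl fun i hi => by rw [(mem_filter.1 hi).2], sum_const, nsmul_eq_mul,
          mul_one_div]
        exact div_self_le_one _
    _ = Fintype.card κ := by simp

lemma infDist_le_sensitivity_mul {S : Set α} {cluster : Finset ι} {c : α} {μ : ι → ℝ}
    (hμ : ∀ j, 0 ≤ μ j) (hcluster : ∀ j ∈ cluster, dist (x j) c = μ j)
    (hopt : ∑ j, μ j ≤ 2 * ∑ j, Metric.infDist (x j) S) {i : ι} (hi : i ∈ cluster) :
    Metric.infDist (x i) S ≤
      (2 * (μ i / ∑ j, μ j) + 3 * (1 / #cluster)) * ∑ j, Metric.infDist (x j) S := by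
  set F := ∑ j, Metric.infDist (x j) S
  have card_pos : (0 : ℝ) < #cluster := by exact_mod_cast card_pos.2 ⟨i, hi⟩
  have center_le : Metric.infDist c S ≤ 3 * (1 / #cluster) * F := by
    refine le_of_mul_le_mul_left ?_ card_pos
    calc #cluster * Metric.infDist c S ≤ ∑ j ∈ cluster, (dist (x j) c + Metric.infDist (x j) S) :=
          card_mul_infDist_le cluster c S
      _ = ∑ j ∈ cluster, (μ j + Metric.infDist (x j) S) :=
          sum_congr rfl fun j hj => by rw [hcluster j hj]
      _ ≤ ∑ j, (μ j + Metric.infDist (x j) S) := sum_le_univ_sum_of_nonneg fun j =>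
          add_nonneg (hμ j) Metric.infDist_nonneg
      _ ≤ 3 * F := by rw [sum_add_distrib]; linarith
      _ = #cluster * (3 * (1 / #cluster) * F) := by field_simp
  have dist_le : μ i ≤ 2 * (μ i / ∑ j, μ j) * F := by
    have le_sum : μ i ≤ ∑ j, μ j := single_le_sum (fun j _ => hμ j) (mem_univ i)
    calc μ i = μ i / (∑ j, μ j) * ∑ j, μ j :=
          (div_mul_cancel_of_imp fun h => le_antisymm (h ▸ le_sum) (hμ i)).symm
      _ ≤ μ i / (∑ j, μ j) * (2 * F) := by gcongr; exact div_nonneg (hμ i) ((hμ i).trans le_sum)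
      _ = 2 * (μ i / ∑ j, μ j) * F := by ring
  calc Metric.infDist (x i) S ≤ Metric.infDist c S + dist (x i) c :=
        Metric.infDist_le_infDist_add_dist
    _ ≤ (2 * (μ i / ∑ j, μ j) + 3 * (1 / #cluster)) * F := by rw [hcluster i hi, add_mul]; linarith

/-- The `μ i` are the distances to an optimal family of centres among the `x j`, and the sensitivity
of `i` combines its share of the optimal cost with the share of one point in its cluster. -/
lemma exists_sensitivity [Nonempty ι] [Fintype κ] [Nonempty κ] (x : ι → α) :
    ∃ s : ι → ℝ, (∀ i, 0 ≤ s i) ∧ ∑ i, s i ≤ 5 * Fintype.card κ ∧ ∀ (C : κ → α) (i : ι),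
      Metric.infDist (x i) (Set.range C) ≤ s i * ∑ j, Metric.infDist (x j) (Set.range C) := by
  classical
  obtain ⟨c, hc⟩ := Finite.exists_min fun c : κ → ι =>
    ∑ j, Metric.infDist (x j) (Set.range (x ∘ c))
  set μ : ι → ℝ := fun i => Metric.infDist (x i) (Set.range (x ∘ c))
  have hμ (i : ι) : 0 ≤ μ i := Metric.infDist_nonneg
  choose a ha using fun i => exists_infDist_range_eq_dist (x ∘ c) (x i)
  refine ⟨fun i => 2 * (μ i / ∑ j, μ j) + 3 * (1 / #{j | a j = a i}), fun i => ?_, ?_,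
    fun C i => ?_⟩
  · have := sum_nonneg fun j (_ : j ∈ univ) => hμ j
    have := hμ i
    positivity
  · rw [sum_add_distrib, ← mul_sum, ← mul_sum, ← sum_div]
    have one_le_card : (1 : ℝ) ≤ Fintype.card κ := by exact_mod_cast Fintype.card_pos
    linarith [div_self_le_one (∑ j, μ j), sum_one_div_card_fiber_le a]
  · obtain ⟨near, hnear⟩ := exists_infDist_range_comp_le x C
    refine infDist_le_sensitivity_mul (c := x (c (a i))) hμ (fun j hj => ?_) ?_ (by simp)
    · rw [← (mem_filter.1 hj).2]
      exact (ha j).symm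
    · exact (hc near).trans ((sum_le_sum fun j _ => hnear j).trans_eq (mul_sum _ _ _).symm)

end Sensitivity

lemma exists_sensitivity_hausdorffCost {α ι κ : Type*} [MetricSpace α] [Fintype ι] [Nonempty ι]
    [Fintype κ] [Nonempty κ] {Q : ι → Finset α} (hQ : ∀ i, (Q i).Nonempty) :
    ∃ s : ι → ℝ, (∀ i, 0 ≤ s i) ∧ ∑ i, s i ≤ 5 * Fintype.card κ ∧
      ∀ C : κ → Finset α, (∀ t, (C t).Nonempty) → ∀ i,
        hausdorffCost C (Q i) ≤ s i * ∑ j, hausdorffCost C (Q j) := by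
  let toNonemptyCompacts (A : Finset α) (hA : A.Nonempty) : TopologicalSpace.NonemptyCompacts α :=
    ⟨⟨A, A.finite_toSet.isCompact⟩, hA⟩
  obtain ⟨s, hs_nonneg, hs_sum, hs⟩ :=
    exists_sensitivity (κ := κ) fun i => toNonemptyCompacts (Q i) (hQ i)
  refine ⟨s, hs_nonneg, hs_sum, fun C hC i => ?_⟩
  have cost_eq (j : ι) : Metric.infDist (toNonemptyCompacts (Q j) (hQ j))
      (Set.range fun t => toNonemptyCompacts (C t) (hC t)) = hausdorffCost C (Q j) := by
    rw [Metric.infDist_eq_iInf, iInf_range' (fun K => dist (toNonemptyCompacts (Q j) (hQ j)) K)]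
    rfl
  simpa only [cost_eq] using hs (fun t => toNonemptyCompacts (C t) (hC t)) i

lemma exists_nat_apportionment {ι : Type*} [Fintype ι] [Nonempty ι] {u : ι → ℝ} (hu : ∀ i, 0 ≤ u i)
    {T : ℕ} (hT : ∑ i, u i + Fintype.card ι ≤ T) :
    ∃ t : ι → ℕ, ∑ i, t i = T ∧ ∀ i, 0 < t i ∧ u i ≤ t i := by
  classical
  have sum_le : ∑ i, (⌊u i⌋₊ + 1) ≤ T := by
    suffices ∑ i, ((⌊u i⌋₊ : ℝ) + 1) ≤ T by exact_mod_cast this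
    calc ∑ i, ((⌊u i⌋₊ : ℝ) + 1) ≤ ∑ i, (u i + 1) := by
          gcongr with i
          exact Nat.floor_le (hu i)
      _ = ∑ i, u i + Fintype.card ι := by simp [sum_add_distrib]
      _ ≤ T := hT
  obtain ⟨i₀⟩ := ‹Nonempty ι›
  refine ⟨fun i => ⌊u i⌋₊ + 1 + Pi.single (M := fun _ => ℕ) i₀ (T - ∑ i, (⌊u i⌋₊ + 1)) i, ?_,
    fun i => ⟨by positivity, ?_⟩⟩
  · rw [sum_add_distrib, sum_pi_single', if_pos (mem_univ _), Nat.add_sub_cancel' sum_le]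
  · calc u i ≤ ⌊u i⌋₊ + 1 := (Nat.lt_floor_add_one _).le
      _ ≤ _ := by exact_mod_cast Nat.le_add_right _ _

section Copies

variable {ι : Type*} [Fintype ι]

/-- The set that contains `t i` distinct copies of each index `i`. -/
def copies (t : ι → ℕ) : Finset ((_ : ι) × ℕ) := univ.sigma fun i => range (t i)

lemma card_copies (t : ι → ℕ) : #(copies t) = ∑ i, t i := by simp [copies]

lemma sum_copies_div {t : ι → ℕ} (ht : ∀ i, 0 < t i) (f : ι → ℝ) :
    ∑ x ∈ copies t, f x.1 / t x.1 = ∑ i, f i := by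
  rw [copies, sum_sigma]
  refine sum_congr rfl fun i _ => ?_
  have : (t i : ℝ) ≠ 0 := by exact_mod_cast (ht i).ne'
  simp only [sum_const, card_range, nsmul_eq_mul]
  field_simp

lemma IsApproximation.abs_weighted_sum_sub_sum_le {𝓡 : Set (Set ((_ : ι) × ℕ))} {η M : ℝ}
    {t : ι → ℕ} (ht : ∀ i, 0 < t i) {Y : Finset ((_ : ι) × ℕ)}
    (hY : IsApproximation 𝓡 η (copies t) Y) (hY_nonempty : Y.Nonempty) {f : ι → ℝ}
    (hf : ∀ i, 0 ≤ f i) (hfM : ∀ i, #(copies t) * f i ≤ M * t i)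
    (hsub : ∀ r ≥ 0, {x | f x.1 ≤ r * t x.1} ∈ 𝓡) :
    |∑ x ∈ Y, #(copies t) / (#Y * t x.1) * f x.1 - ∑ i, f i| ≤ η * M := by
  have ht' (i : ι) : (0 : ℝ) < t i := by exact_mod_cast ht i
  have hT : (0 : ℝ) < #(copies t) := by exact_mod_cast (hY_nonempty.mono hY.1).card_pos
  have mean_le := hY.abs_mean_sub_mean_le (g := fun x => f x.1 / t x.1) (M := M / #(copies t))
    hY_nonempty
    (fun x _ => ⟨div_nonneg (hf _) (ht' _).le, (div_le_div_iff₀ (ht' _) hT).2 <| by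
      rw [mul_comm]; exact hfM _⟩)
    (fun r hr => by simpa only [div_le_iff₀ (ht' _)] using hsub r hr)
  rw [sum_copies_div ht] at mean_le
  calc |∑ x ∈ Y, #(copies t) / (#Y * t x.1) * f x.1 - ∑ i, f i|
      = |#(copies t) * ((∑ x ∈ Y, f x.1 / t x.1) / #Y - (∑ i, f i) / #(copies t))| := by
        rw [mul_sub, mul_div_cancel₀ _ hT.ne', sum_div, mul_sum]
        congr 2
        refine sum_congr rfl fun x _ => ?_
        have := ht' x.1
        field_simp
    _ ≤ #(copies t) * (η * (M / #(copies t))) := by rw [abs_mul, abs_of_pos hT]; gcongr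
    _ = η * M := by field_simp

end Copies

section Coreset

variable {ι : Type*}

lemma exists_multiplicities [Fintype ι] [Nonempty ι] {s : ι → ℝ} (hs_nonneg : ∀ i, 0 ≤ s i) {σ : ℝ}
    (hσ : 0 < σ) (hs_sum : ∑ i, s i ≤ σ) {T : ℕ} (hT : 2 * Fintype.card ι ≤ T) :
    ∃ t : ι → ℕ, ∑ i, t i = T ∧ ∀ i, 0 < t i ∧ T * s i ≤ 2 * σ * t i := by
  have hT' : (2 * Fintype.card ι : ℝ) ≤ T := by exact_mod_cast hT
  obtain ⟨t, ht_sum, ht⟩ := exists_nat_apportionment (u := fun i => T / (2 * σ) * s i) (T := T)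
    (fun i => mul_nonneg (by positivity) (hs_nonneg i)) <| by
      calc ∑ i, T / (2 * σ) * s i + Fintype.card ι ≤ T / (2 * σ) * σ + Fintype.card ι := by
            rw [← mul_sum]; gcongr
        _ = T / 2 + Fintype.card ι := by field_simp
        _ ≤ T := by linarith
  refine ⟨t, ht_sum, fun i => ⟨(ht i).1, ?_⟩⟩
  calc T * s i = 2 * σ * (T / (2 * σ) * s i) := by field_simp
    _ ≤ 2 * σ * t i := by gcongr; exact (ht i).2

lemma exists_fin_weights_of_card_eq {β : Type*} {Y : Finset β} {N : ℕ} (hY : #Y = N) (q : β → ι)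
    {w : β → ℝ} (hw : ∀ x, 0 < w x) :
    ∃ (idx : Fin N → ι) (ω : Fin N → ℝ), (∀ j, 0 < ω j) ∧
      ∀ f : ι → ℝ, ∑ j, ω j * f (idx j) = ∑ x ∈ Y, w x * f (q x) := by
  let e : Fin N ≃ Y := (Y.equivFinOfCardEq hY).symm
  refine ⟨fun j => q (e j), fun j => w (e j), fun j => hw _, fun f => ?_⟩
  rw [← sum_coe_sort Y, ← e.sum_comp]

/-- Replacing each index by a number of copies proportional to its sensitivity makes all the
functions bounded relative to their means, so that an approximation of the set of copies with
respect to sublevel sets is a coreset. -/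
theorem exists_coreset_of_sensitivity {P : Type*} [Fintype ι] [Nonempty ι] {f : P → ι → ℝ}
    (hf : ∀ p i, 0 ≤ f p i) {s : ι → ℝ} (hs_nonneg : ∀ i, 0 ≤ s i) {σ : ℝ} (hσ : 0 < σ)
    (hs_sum : ∑ i, s i ≤ σ) (hs : ∀ p i, f p i ≤ s i * ∑ j, f p j)
    {N : ℕ} (hN : 0 < N) {B : ℝ} (hB : 0 < B)
    (hgrowth : ∀ τ : ι → ℝ, (∀ i, 0 ≤ τ i) → ∀ (j : ℕ) (Y : Finset ((_ : ι) × ℕ)),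
      #Y = N * 2 ^ j →
      2 * (#(traces (scaledSublevels (fun p (x : (_ : ι) × ℕ) => f p x.1) fun x => τ x.1) Y) : ℝ) ≤
        Real.exp (B * (1 + j)))
    {ε : ℝ} (hε : 0 ≤ ε) (hNε : (16 * σ) ^ 2 * B ≤ ε ^ 2 * N) :
    ∃ (idx : Fin N → ι) (ω : Fin N → ℝ), (∀ j, 0 < ω j) ∧ ∀ p,
      |∑ j, ω j * f p (idx j) - 1 / Fintype.card ι * ∑ i, f p i| ≤
        ε * (1 / Fintype.card ι * ∑ i, f p i) := by
  obtain ⟨t, ht_sum, ht⟩ := exists_multiplicities hs_nonneg hσ hs_sum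
    (Nat.lt_two_pow_self.le.trans (Nat.le_mul_of_pos_left (2 ^ (2 * Fintype.card ι)) hN))
  rw [← ht_sum] at ht
  rw [← card_copies] at ht_sum ht
  have ht_pos (i : ι) : (0 : ℝ) < t i := by exact_mod_cast (ht i).1
  obtain ⟨Y, hY_card, hY⟩ := exists_isApproximation_of_growth_le hN hB
    (hgrowth (fun i => t i) fun i => Nat.cast_nonneg _) ht_sum
  have hY_nonempty : Y.Nonempty := card_pos.1 (hY_card ▸ hN)
  have hT : (0 : ℝ) < #(copies t) := by exact_mod_cast (hY_nonempty.mono hY.1).card_pos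
  have error_le : 16 * σ * √(B / N) ≤ ε := by
    refine (sq_le_sq₀ (by positivity) hε).1 ?_
    rw [mul_pow, Real.sq_sqrt (by positivity), mul_div_assoc', div_le_iff₀ (by exact_mod_cast hN)]
    exact hNε
  obtain ⟨idx, ω, hω, hsum⟩ := exists_fin_weights_of_card_eq hY_card Sigma.fst
    (w := fun x => 1 / Fintype.card ι * (#(copies t) / (#Y * t x.1))) fun x => by
      have := ht_pos x.1
      have := hY_nonempty.card_pos
      positivity
  refine ⟨idx, ω, hω, fun p => ?_⟩
  have sum_nonneg : 0 ≤ ∑ i, f p i := sum_nonneg fun i _ => hf p i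
  have weighted_sum_le := hY.abs_weighted_sum_sub_sum_le (M := 2 * σ * ∑ i, f p i)
    (fun i => (ht i).1) hY_nonempty (hf p)
    (fun i => by
      calc #(copies t) * f p i ≤ #(copies t) * (s i * ∑ j, f p j) := by gcongr; exact hs p i
        _ = #(copies t) * s i * ∑ j, f p j := (mul_assoc _ _ _).symm
        _ ≤ 2 * σ * t i * ∑ j, f p j := mul_le_mul_of_nonneg_right (ht i).2 sum_nonneg
        _ = 2 * σ * (∑ j, f p j) * t i := mul_right_comm _ _ _)
    fun r hr => ⟨p, r, hr, rfl⟩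
  simp only [hsum, mul_assoc, ← mul_sum] at weighted_sum_le ⊢
  rw [← mul_sub, abs_mul, abs_of_pos (by positivity), mul_left_comm ε]
  gcongr
  nlinarith

end Coreset

section HausdorffCoreset

lemma two_mul_pow_le_exp {x : ℝ} (hx : 1 ≤ x) {K : ℕ} (hK : K ≠ 0) (j : ℕ) :
    2 * (x * 2 ^ j) ^ K ≤ Real.exp (K * (Real.log x + 1) * (1 + j)) := by
  calc 2 * (x * 2 ^ j) ^ K ≤ 2 ^ K * (x * 2 ^ j) ^ K := by
        gcongr
        exact le_self_pow₀ one_le_two hK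
    _ = (x * 2 ^ (1 + j)) ^ K := by ring
    _ ≤ (x ^ (1 + j) * Real.exp 1 ^ (1 + j)) ^ K := by
        gcongr
        · exact le_self_pow₀ hx (by omega)
        · exact Real.exp_one_gt_two.le
    _ = Real.exp (K * (Real.log x + 1) * (1 + j)) := by
        rw [← mul_pow, ← pow_mul, show K * (Real.log x + 1) * (1 + j) =
            ((1 + j) * K : ℕ) * (Real.log x + 1) by push_cast; ring,
          Real.exp_nat_mul, Real.exp_add, Real.exp_log (one_pos.trans_le hx)]

variable {E : Type*} [NormedAddCommGroup E] [InnerProductSpace ℝ E] [FiniteDimensional ℝ E]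
  {ι κ : Type*} [Fintype κ] [Nonempty κ] {l m N D : ℕ}

lemma one_le_exp_one_mul_div {x y : ℝ} (hy : 0 < y) (hyx : y ≤ x) : 1 ≤ Real.exp 1 * x / y :=
  (one_le_div hy).2 <| hyx.trans <|
    le_mul_of_one_le_left (hy.le.trans hyx) (Real.one_le_exp zero_le_one)

lemma two_mul_card_traces_hausdorffCost_le_exp {β : Type*} {Q : β → Finset E}
    (hQ : ∀ x, (Q x).Nonempty ∧ #(Q x) ≤ m) {τ : β → ℝ} (hτ : ∀ x, 0 ≤ τ x) (hl : l ≠ 0)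
    (hD : D = Module.finrank ℝ E + 3) (hDN : (D : ℝ) ≤ N * m) {j : ℕ} {Y : Finset β}
    (hY : #Y = N * 2 ^ j) :
    2 * (#(traces (scaledSublevels
        (fun (C : CenterFamily κ E l) x => hausdorffCost C.1 (Q x)) τ) Y) : ℝ) ≤
      Real.exp (Fintype.card κ * l * D * (Real.log (Real.exp 1 * (N * m) / D) + 1) * (1 + j)) := by
  have hY' : (#Y : ℝ) = N * 2 ^ j := by exact_mod_cast hY
  have hDY : (D : ℝ) ≤ #Y * m := by
    calc (D : ℝ) ≤ N * m := hDN
      _ ≤ #Y * m := by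
        rw [hY']
        gcongr
        exact le_mul_of_one_le_right (by positivity) (one_le_pow₀ one_le_two)
  have hD_ne : D ≠ 0 := by omega
  have exponent_ne_zero : Fintype.card κ * l * D ≠ 0 :=
    mul_ne_zero (mul_ne_zero Fintype.card_ne_zero hl) hD_ne
  calc 2 * (#(traces (scaledSublevels _ τ) Y) : ℝ)
      ≤ 2 * ((Real.exp 1 * (#Y * m) / D) ^ D) ^ (Fintype.card κ * l) := by
        gcongr
        exact card_traces_hausdorffCost_le hQ hτ hD hDY
    _ = 2 * (Real.exp 1 * (N * m) / D * 2 ^ j) ^ (Fintype.card κ * l * D) := by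
        rw [hY', ← pow_mul, mul_comm D]
        congr 2
        ring
    _ ≤ Real.exp ((Fintype.card κ * l * D : ℕ) *
          (Real.log (Real.exp 1 * (N * m) / D) + 1) * (1 + j)) :=
        two_mul_pow_le_exp (one_le_exp_one_mul_div (by positivity) hDN) exponent_ne_zero j
    _ = _ := by push_cast; rfl

theorem exists_coreset_hausdorffCost [Fintype ι] [Nonempty ι] {Q : ι → Finset E}
    (hQ : ∀ i, (Q i).Nonempty ∧ #(Q i) ≤ m) (hl : l ≠ 0) (hD : D = Module.finrank ℝ E + 3)
    (hDN : D ≤ N) {ε : ℝ} (hε : 0 ≤ ε)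
    (hNε : (80 * Fintype.card κ) ^ 2 *
      (Fintype.card κ * l * D * (Real.log (Real.exp 1 * (N * m) / D) + 1)) ≤ ε ^ 2 * N) :
    ∃ (idx : Fin N → ι) (ω : Fin N → ℝ), (∀ j, 0 < ω j) ∧
      ∀ C : κ → Finset E, (∀ t, (C t).Nonempty ∧ #(C t) ≤ l) →
        |∑ j, ω j * hausdorffCost C (Q (idx j)) -
            1 / Fintype.card ι * ∑ i, hausdorffCost C (Q i)| ≤
          ε * (1 / Fintype.card ι * ∑ i, hausdorffCost C (Q i)) := by
  have hm : 1 ≤ m := (hQ (Classical.arbitrary ι)).1.card_pos.trans_le (hQ _).2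
  have hDN' : (D : ℝ) ≤ N * m := by exact_mod_cast hDN.trans (Nat.le_mul_of_pos_right N hm)
  have hD_pos : (0 : ℝ) < D := by exact_mod_cast (show 0 < D by omega)
  have log_nonneg := Real.log_nonneg (one_le_exp_one_mul_div hD_pos hDN')
  obtain ⟨s, hs_nonneg, hs_sum, hs⟩ := exists_sensitivity_hausdorffCost (κ := κ) fun i => (hQ i).1
  have hB : 0 < Fintype.card κ * l * D * (Real.log (Real.exp 1 * (N * m) / D) + 1) := by positivity
  have hσ : (0 : ℝ) < 5 * Fintype.card κ := by positivity
  have hNε' : (16 * (5 * Fintype.card κ : ℝ)) ^ 2 *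
      (Fintype.card κ * l * D * (Real.log (Real.exp 1 * (N * m) / D) + 1)) ≤ ε ^ 2 * N := by
    rwa [← mul_assoc 16, show (16 : ℝ) * 5 = 80 by norm_num]
  have growth (τ : ι → ℝ) (hτ : ∀ i, 0 ≤ τ i) (j : ℕ) (Y : Finset ((_ : ι) × ℕ))
      (hY : #Y = N * 2 ^ j) :=
    two_mul_card_traces_hausdorffCost_le_exp (κ := κ) (Q := fun x : (_ : ι) × ℕ => Q x.1)
      (fun x => hQ x.1) (fun x => hτ x.1) hl hD hDN' hY
  obtain ⟨idx, ω, hω, hcoreset⟩ := exists_coreset_of_sensitivity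
    (f := fun (C : CenterFamily κ E l) i => hausdorffCost C.1 (Q i))
    (fun C i => hausdorffCost_nonneg _ _) hs_nonneg hσ hs_sum
    (fun C => hs C.1 fun t => (C.2 t).1) (N := N) (by omega) hB
    growth
    hε hNε'
  exact ⟨idx, ω, hω, fun C hC => hcoreset ⟨C, hC⟩⟩

end HausdorffCoreset

section SampleSize

open Filter Asymptotics

lemma exists_one_le_mul_log_add_le (a b : ℝ) : ∃ c, 1 ≤ c ∧ a * (Real.log c + b) ≤ c := by
  have isLittleO : (fun c => a * (Real.log c + b)) =o[atTop] id :=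
    (Real.isLittleO_log_id_atTop.add (isLittleO_const_id_atTop b)).const_mul_left a
  obtain ⟨c, hc, hc_one⟩ := ((isLittleO.bound one_pos).and (eventually_ge_atTop 1)).exists
  refine ⟨c, hc_one, (le_abs_self _).trans ?_⟩
  simpa only [one_mul, id, Real.norm_eq_abs, abs_of_nonneg (zero_le_one.trans hc_one)] using hc

lemma log_sample_size_le {δ : ℝ} (hδ : 0 < δ) {c D N m K y : ℝ} (hc : 1 ≤ c) (hD : 0 < D)
    (hN : 0 < N) (hm : 1 ≤ m) (hy : 1 ≤ y) (hK : K ≤ y ^ 3)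
    (hNc : N ≤ c * (K * (m ^ δ * (1 + Real.log y))) * D) :
    Real.log (Real.exp 1 * (N * m) / D) + 1 ≤
      (Real.log c + (6 + 1 / δ)) * (m ^ δ * (1 + Real.log y)) := by
  have hlog_y := Real.log_nonneg hy
  have hm_rpow := Real.one_le_rpow hm hδ.le
  set Λ := m ^ δ * (1 + Real.log y)
  have log_y_le : 1 + Real.log y ≤ Λ := le_mul_of_one_le_left (by positivity) hm_rpow
  have hΛ_pos : 0 < Λ := by positivity
  have log_Λ_le : Real.log Λ ≤ Λ := Real.log_le_self hΛ_pos.le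
  have log_m_le : Real.log m ≤ 1 / δ * Λ := by
    calc Real.log m ≤ m ^ δ / δ := Real.log_le_rpow_div (by positivity) hδ
      _ = 1 / δ * m ^ δ := by ring
      _ ≤ 1 / δ * Λ := by
        gcongr
        exact le_mul_of_one_le_right (by positivity) (by linarith)
  have log_c_le : Real.log c ≤ Real.log c * Λ :=
    le_mul_of_one_le_right (Real.log_nonneg hc) (by linarith)
  have arg_le : Real.exp 1 * (N * m) / D ≤ Real.exp 1 * c * y ^ 3 * Λ * m := by
    rw [div_le_iff₀ hD]
    calc Real.exp 1 * (N * m) ≤ Real.exp 1 * (c * (y ^ 3 * Λ) * D * m) := by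
          gcongr
          exact hNc.trans (by gcongr)
      _ = Real.exp 1 * c * y ^ 3 * Λ * m * D := by ring
  calc Real.log (Real.exp 1 * (N * m) / D) + 1
      ≤ Real.log (Real.exp 1 * c * y ^ 3 * Λ * m) + 1 := by gcongr
    _ = 1 + Real.log c + 3 * Real.log y + Real.log Λ + Real.log m + 1 := by
        rw [Real.log_mul, Real.log_mul, Real.log_mul, Real.log_mul, Real.log_exp, Real.log_pow]
          <;> first | positivity | push_cast; ring
    _ ≤ (Real.log c + (6 + 1 / δ)) * Λ := by linarith

lemma one_le_div_and_le_cube {k l ε : ℝ} (hk : 1 ≤ k) (hl : 1 ≤ l) (hε : 0 < ε) (hε' : ε ≤ 1) :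
    1 ≤ k ^ 3 * l / ε ^ 2 ∧ k ^ 3 * l / ε ^ 2 ≤ (k * l / ε) ^ 3 := by
  refine ⟨(one_le_div (by positivity)).2 ?_, ?_⟩
  · exact (pow_le_one₀ hε.le hε').trans (one_le_mul_of_one_le_of_one_le (one_le_pow₀ hk) hl)
  · rw [div_pow, mul_pow]
    gcongr ?_ * ?_ / ?_
    · exact le_self_pow₀ hl (by norm_num)
    · exact pow_le_pow_of_le_one hε.le hε' (by norm_num)

lemma exists_sample_size {δ : ℝ} (hδ : 0 < δ) :
    ∃ c : ℝ, 0 < c ∧ ∀ D k l m : ℕ, 1 ≤ D → 1 ≤ k → 1 ≤ l → 1 ≤ m →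
      ∀ ε ∈ Set.Ioo (0 : ℝ) 1, ∃ N : ℕ, D ≤ N ∧
        (N : ℝ) ≤ c * ((k : ℝ) ^ 3 * l * (m : ℝ) ^ δ * D / ε ^ 2) *
          (1 + Real.log ((k : ℝ) * l / ε)) ∧
        (80 * k) ^ 2 * (k * l * D * (Real.log (Real.exp 1 * (N * m) / D) + 1)) ≤ ε ^ 2 * N := by
  obtain ⟨c, hc, hc_log⟩ := exists_one_le_mul_log_add_le (2 * 80 ^ 2) (6 + 1 / δ)
  refine ⟨c, by positivity, fun D k l m hD hk hl hm ε hε => ?_⟩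
  have hk' : (1 : ℝ) ≤ k := by exact_mod_cast hk
  have hl' : (1 : ℝ) ≤ l := by exact_mod_cast hl
  have hm' : (1 : ℝ) ≤ m := by exact_mod_cast hm
  have hε_pos := hε.1
  obtain ⟨hK, hK_le⟩ := one_le_div_and_le_cube hk' hl' hε.1 hε.2.le
  set K := (k : ℝ) ^ 3 * l / ε ^ 2 with hK_def
  have hy : 1 ≤ (k : ℝ) * l / ε :=
    (one_le_div hε.1).2 (hε.2.le.trans (one_le_mul_of_one_le_of_one_le hk' hl'))
  have hlog := Real.log_nonneg hy
  set Λ := (m : ℝ) ^ δ * (1 + Real.log (k * l / ε)) with hΛ_def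
  have hΛ : 1 ≤ Λ := one_le_mul_of_one_le_of_one_le (Real.one_le_rpow hm' hδ.le) (by linarith)
  have le_size : (D : ℝ) ≤ c * (K * Λ) * D := le_mul_of_one_le_left (by positivity) <|
    one_le_mul_of_one_le_of_one_le hc (one_le_mul_of_one_le_of_one_le hK hΛ)
  set N := ⌊c * (K * Λ) * D⌋₊
  have hDN : D ≤ N := Nat.le_floor le_size
  have hN_le : (N : ℝ) ≤ c * (K * Λ) * D := Nat.floor_le (by positivity)
  have hN_one : (1 : ℝ) ≤ N := by exact_mod_cast hD.trans hDN
  have half_le : c * (K * Λ) * D / 2 ≤ N := by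
    have := Nat.lt_floor_add_one (c * (K * Λ) * D)
    linarith
  refine ⟨N, hDN, hN_le.trans_eq (by rw [hK_def, hΛ_def]; ring), ?_⟩
  calc (80 * k) ^ 2 * (k * l * D * (Real.log (Real.exp 1 * (N * m) / D) + 1))
      ≤ (80 * k) ^ 2 * (k * l * D * ((Real.log c + (6 + 1 / δ)) * Λ)) := by
        gcongr
        exact log_sample_size_le hδ hc (by positivity) (by positivity) hm' hy hK_le hN_le
    _ = k ^ 3 * l * D * Λ * (2 * 80 ^ 2 * (Real.log c + (6 + 1 / δ))) / 2 := by ring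
    _ ≤ k ^ 3 * l * D * Λ * c / 2 := by gcongr
    _ = ε ^ 2 * (c * (K * Λ) * D / 2) := by rw [hK_def]; field_simp
    _ ≤ ε ^ 2 * N := by gcongr

end SampleSize

end HausdorffCoreset

open HausdorffCoreset in
theorem hausdorff_coreset_exists_general (δ : ℝ) (hδ : 0 < δ) :
    ∃ c : ℝ, 0 < c ∧
      ∀ (E : Type*) [NormedAddCommGroup E] [InnerProductSpace ℝ E] [FiniteDimensional ℝ E],
      ∀ k l m : ℕ, 1 ≤ Module.finrank ℝ E → 1 ≤ k → 1 ≤ l →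
      ∀ ε ∈ Set.Ioo (0 : ℝ) 1,
      ∀ n : ℕ, 1 ≤ n → ∀ Q : Fin n → Finset E,
      (∀ i, (Q i).Nonempty ∧ (Q i).card ≤ m) →
      ∃ (N : ℕ) (idx : Fin N → Fin n) (ω : Fin N → ℝ),
        (N : ℝ) ≤ c * ((k : ℝ) ^ 3 * l * (m : ℝ) ^ δ * Module.finrank ℝ E / ε ^ 2) *
          (1 + Real.log ((k : ℝ) * l / ε)) ∧
        (∀ j, 0 < ω j) ∧
        ∀ C : Fin k → Finset E, (∀ t, (C t).Nonempty ∧ (C t).card ≤ l) →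
          ∑ j, ω j * hausdorffCost C (Q (idx j)) ∈
            Set.Icc ((1 - ε) * ((1 / (n : ℝ)) * ∑ i, hausdorffCost C (Q i)))
              ((1 + ε) * ((1 / (n : ℝ)) * ∑ i, hausdorffCost C (Q i))) := by
  obtain ⟨c, hc, exists_size⟩ := exists_sample_size hδ
  refine ⟨4 * c, by positivity, fun E _ _ _ k l m hE hk hl ε hε n hn Q hQ => ?_⟩
  have : NeZero n := ⟨by omega⟩
  have : NeZero k := ⟨by omega⟩
  have hm : 1 ≤ m := (hQ 0).1.card_pos.trans_le (hQ 0).2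
  obtain ⟨N, hDN, hN_le, hNε⟩ := exists_size (Module.finrank ℝ E + 3) k l m (by omega) hk hl hm ε hε
  obtain ⟨idx, ω, hω, hcoreset⟩ := exists_coreset_hausdorffCost (κ := Fin k) hQ
    (Nat.one_le_iff_ne_zero.1 hl) rfl hDN hε.1.le (by rwa [Fintype.card_fin])
  refine ⟨N, idx, ω, hN_le.trans ?_, hω, fun C hC => ?_⟩
  · have hlog : 0 ≤ Real.log ((k : ℝ) * l / ε) := by
      refine Real.log_nonneg ((one_le_div hε.1).2 (hε.2.le.trans ?_))
      exact_mod_cast Nat.mul_pos hk hl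
    have dim_le : ((Module.finrank ℝ E + 3 : ℕ) : ℝ) ≤ 4 * Module.finrank ℝ E := by
      exact_mod_cast (by omega : Module.finrank ℝ E + 3 ≤ 4 * Module.finrank ℝ E)
    calc _ ≤ c * ((k : ℝ) ^ 3 * l * (m : ℝ) ^ δ * (4 * Module.finrank ℝ E) / ε ^ 2) *
          (1 + Real.log ((k : ℝ) * l / ε)) := by gcongr
      _ = _ := by ring
  · have := abs_le.1 (hcoreset C hC)
    rw [Fintype.card_fin] at this
    constructor <;> linarith

/-- coresets of size `c·(k³·l·m^δ·d/ε²)·(1 + log(k·l/ε))` for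
`(k, U^l)`-median clustering of point sets under the Hausdorff distance. -/
theorem hausdorff_coreset_exists (δ : ℝ) (hδ : 0 < δ) :
    ∃ c : ℝ, 0 < c ∧
      ∀ d k l m : ℕ, 1 ≤ d → 1 ≤ k → 1 ≤ l → 1 ≤ m → l ≤ m →
      ∀ ε : ℝ, ε ∈ Set.Ioo (0 : ℝ) 1 →
      ∀ n : ℕ, 1 ≤ n → ∀ Q : Fin n → Finset (Pt d),
      (∀ i, (Q i).Nonempty ∧ (Q i).card ≤ m) →
      ∃ (N : ℕ) (idx : Fin N → Fin n) (ω : Fin N → ℝ),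
        (N : ℝ) ≤ c * ((k : ℝ) ^ 3 * l * (m : ℝ) ^ δ * d / ε ^ 2) *
          (1 + Real.log ((k : ℝ) * l / ε)) ∧
        (∀ j, 0 < ω j) ∧
        ∀ C' : Fin k → Finset (Pt d), (∀ i, (C' i).Nonempty ∧ (C' i).card ≤ l) →
          (∑ j, ω j * ⨅ i : Fin k,
              Metric.hausdorffDist (↑(Q (idx j)) : Set (Pt d)) (↑(C' i) : Set (Pt d))) ∈
            Set.Icc
              ((1 - ε) * ((1 / (n : ℝ)) * ∑ i, ⨅ t : Fin k,
                Metric.hausdorffDist (↑(Q i) : Set (Pt d)) (↑(C' t) : Set (Pt d))))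
              ((1 + ε) * ((1 / (n : ℝ)) * ∑ i, ⨅ t : Fin k,
                Metric.hausdorffDist (↑(Q i) : Set (Pt d)) (↑(C' t) : Set (Pt d)))) := by
  obtain ⟨c, hc, hcoreset⟩ := hausdorff_coreset_exists_general δ hδ
  refine ⟨c, hc, fun d k l m hd hk hl _ _ ε hε n hn Q hQ => ?_⟩
  simpa only [finrank_euclideanSpace_fin] using!
    hcoreset (Pt d) k l m (by simpa using hd) hk hl ε hε n hn Q hQ
end
end

section
/- Let (X,d) be a metric space, C ⊆ X, k ≥ 1 an integer, A ⊆ X a finite set of cardinality a ≥ 1, and s : A → ℝ_{>0}. For a k-element subset C'' ⊆ C write f̂(C'') = (1/a)·Σ_{x∈A} (min_{c∈C''} d(x,c))/s(x). Suppose V = {v_1,…,v_k} ⊆ C attains the minimum of f̂ over all k-element subsets of C, and write ĵ = f̂(V). Partition A into cells A_1,…,A_k where each x ∈ A_i satisfies d(x,v_i) = min_{1≤t≤k} d(x,v_t) (ties broken arbitrarily), and for nonempty A_i set s_i = min_{x∈A_i} s(x). Then for every k-element subset U ⊆ C, writing d_i = min_{u∈U} d(v_i,u), one has ĵ + Σ_{i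 : A_i ≠ ∅} d_i/s_i ≥ f̂(U) ≥ (1/(4a))·Σ_{i : A_i ≠ ∅} d_i/s_i; in particular f̂(U) ≥ d_i/(4a·s_i) for every i with A_i ≠ ∅. -/
open Metric
open scoped Classical

/-- `f̂(C'') = (1/a)·Σ_{x∈A} d(x,C'')/s(x)`. -/
noncomputable def fHat {X : Type*} [PseudoMetricSpace X] (A : Finset X) (s : X → ℝ)
    (C'' : Finset X) : ℝ :=
  (1 / (A.card : ℝ)) * ∑ x ∈ A, infDist x (C'' : Set X) / s x

/-!
For `x ∈ A_i`, the triangle inequality through `v_i` gives `d(x,U) ≤ d(x,v_i) + d_i`; dividing by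
`s(x) ≥ s_i` and averaging over `A` yields the upper bound. For the lower bound, the point `x ∈ A_i`
with `s(x) = s_i` alone pays for the cell, since `d_i ≤ d(x,v_i) + d(x,U)`. Summing over the
cells gives `(1/a)·Σ d_i/s_i ≤ f̂(V) + f̂(U)`, so any estimate `f̂(V) ≤ (c - 1)·f̂(U)` bounds
`f̂(U)` from below with the constant `1/(c·a)`. Optimality of `V` allows `c = 2`, hence `c = 4`.
-/

section Cells

variable {X ι : Type*} [DecidableEq ι]

/-- The cell `A_i`, encoded by the map `asgn` sending each point to the index of its cell. -/
def cell (A : Finset X) (asgn : X → ι) (i : ι) : Finset X :=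
  A.filter (fun x => asgn x = i)

/-- The scale `s_i = min_{x ∈ A_i} s(x)`; it takes the junk value `0` when `A_i` is empty. -/
noncomputable def cellScale (A : Finset X) (s : X → ℝ) (asgn : X → ι) (i : ι) : ℝ :=
  sInf (s '' ↑(cell A asgn i))

variable {A : Finset X} {s : X → ℝ} {asgn : X → ι} {x : X} {i : ι}

lemma mem_cell : x ∈ cell A asgn i ↔ x ∈ A ∧ asgn x = i :=
  Finset.mem_filter

lemma mem_cell_self (hx : x ∈ A) : x ∈ cell A asgn (asgn x) :=
  mem_cell.2 ⟨hx, rfl⟩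

lemma cellScale_le (hx : x ∈ cell A asgn i) : cellScale A s asgn i ≤ s x :=
  csInf_le ((cell A asgn i).finite_toSet.image s).bddBelow ⟨x, hx, rfl⟩

lemma exists_mem_cell_eq_cellScale (hi : (cell A asgn i).Nonempty) :
    ∃ x ∈ cell A asgn i, s x = cellScale A s asgn i :=
  (hi.to_set.image s).csInf_mem ((cell A asgn i).finite_toSet.image s)

lemma cellScale_pos (hs : ∀ x ∈ A, 0 < s x) (hi : (cell A asgn i).Nonempty) :
    0 < cellScale A s asgn i := by
  obtain ⟨x, hx, hxs⟩ := exists_mem_cell_eq_cellScale (s := s) hi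
  exact hxs ▸ hs x (mem_cell.1 hx).1

lemma sum_le_sum_of_forall_exists_mem_cell {M : Type*} [AddCommMonoid M] [PartialOrder M]
    [IsOrderedAddMonoid M] {f : X → M} {g : ι → M} {I : Finset ι}
    (hf : ∀ x ∈ A, 0 ≤ f x) (hfg : ∀ i ∈ I, ∃ x ∈ cell A asgn i, g i ≤ f x) :
    ∑ i ∈ I, g i ≤ ∑ x ∈ A, f x := by
  have hf_cell : ∀ i, ∀ x ∈ cell A asgn i, 0 ≤ f x := fun i x hx => hf x (mem_cell.1 hx).1
  calc
    ∑ i ∈ I, g i ≤ ∑ i ∈ I, ∑ x ∈ cell A asgn i, f x := by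
      refine Finset.sum_le_sum fun i hi => ?_
      obtain ⟨x, hx, hgf⟩ := hfg i hi
      exact hgf.trans (Finset.single_le_sum (hf_cell i) hx)
    _ ≤ ∑ x ∈ A, f x :=
      Finset.sum_fiberwise_le_sum_of_sum_fiber_nonneg fun i _ => Finset.sum_nonneg (hf_cell i)

end Cells

section Bounds

variable {X ι : Type*} [PseudoMetricSpace X] {A : Finset X} {s : X → ℝ} {v : ι → X}
  {asgn : X → ι} {U V : Finset X}

lemma fHat_nonneg (hs : ∀ x ∈ A, 0 < s x) (U : Finset X) : 0 ≤ fHat A s U :=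
  mul_nonneg (by positivity)
    (Finset.sum_nonneg fun x hx => div_nonneg infDist_nonneg (hs x hx).le)

lemma dist_le_infDist_range {x : X} {i : ι} (h : ∀ j, dist x (v i) ≤ dist x (v j)) :
    dist x (v i) ≤ infDist x (Set.range v) :=
  (le_infDist ⟨v i, Set.mem_range_self i⟩).2 (Set.forall_mem_range.2 h)

lemma fHat_le_fHat_add_average (hs : ∀ x ∈ A, 0 < s x)
    (hV : ∀ x ∈ A, dist x (v (asgn x)) ≤ infDist x V) :
    fHat A s U ≤ fHat A s V +
      (1 / (A.card : ℝ)) * ∑ x ∈ A, infDist (v (asgn x)) U / s x := by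
  simp only [fHat, ← mul_add, ← Finset.sum_add_distrib, ← add_div]
  gcongr with x hx
  · exact (hs x hx).le
  · linarith [hV x hx, infDist_le_infDist_add_dist (x := x) (y := v (asgn x)) (s := (U : Set X))]

variable [Fintype ι] [DecidableEq ι]

lemma infDist_div_cellScale_le_sum (hs : ∀ x ∈ A, 0 < s x) {i : ι}
    (hi : (cell A asgn i).Nonempty) :
    infDist (v i) U / cellScale A s asgn i ≤
      ∑ j with (cell A asgn j).Nonempty, infDist (v j) U / cellScale A s asgn j :=
  Finset.single_le_sum (f := fun j => infDist (v j) U / cellScale A s asgn j)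
    (fun _ hj => div_nonneg infDist_nonneg (cellScale_pos hs (Finset.mem_filter.1 hj).2).le)
    (Finset.mem_filter.2 ⟨Finset.mem_univ i, hi⟩)

lemma average_infDist_div_le_sum_cell (hA : A.Nonempty) (hs : ∀ x ∈ A, 0 < s x) :
    (1 / (A.card : ℝ)) * ∑ x ∈ A, infDist (v (asgn x)) U / s x ≤
      ∑ i with (cell A asgn i).Nonempty, infDist (v i) U / cellScale A s asgn i := by
  have hcard : (0 : ℝ) < A.card := by exact_mod_cast hA.card_pos
  rw [one_div, inv_mul_le_iff₀ hcard, ← nsmul_eq_mul]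
  refine Finset.sum_le_card_nsmul _ _ _ fun x hx => ?_
  have hx_cell : x ∈ cell A asgn (asgn x) := mem_cell_self hx
  calc
    infDist (v (asgn x)) U / s x ≤ infDist (v (asgn x)) U / cellScale A s asgn (asgn x) :=
      div_le_div_of_nonneg_left infDist_nonneg (cellScale_pos hs ⟨x, hx_cell⟩)
        (cellScale_le hx_cell)
    _ ≤ _ := infDist_div_cellScale_le_sum hs ⟨x, hx_cell⟩

lemma average_sum_cell_le_fHat_add_fHat (hs : ∀ x ∈ A, 0 < s x)
    (hV : ∀ x ∈ A, dist x (v (asgn x)) ≤ infDist x V) :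
    (1 / (A.card : ℝ)) *
        ∑ i with (cell A asgn i).Nonempty, infDist (v i) U / cellScale A s asgn i ≤
      fHat A s V + fHat A s U := by
  simp only [fHat, ← mul_add, ← Finset.sum_add_distrib, ← add_div]
  gcongr
  refine sum_le_sum_of_forall_exists_mem_cell (asgn := asgn)
    (fun x hx => div_nonneg (add_nonneg infDist_nonneg infDist_nonneg) (hs x hx).le)
    fun i hi => ?_
  obtain ⟨x, hx, hxs⟩ := exists_mem_cell_eq_cellScale (s := s) (Finset.mem_filter.1 hi).2
  obtain ⟨hxA, rfl⟩ := mem_cell.1 hx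
  refine ⟨x, hx, hxs ▸ div_le_div_of_nonneg_right ?_ (hs x hxA).le⟩
  calc
    infDist (v (asgn x)) U ≤ infDist x U + dist (v (asgn x)) x := infDist_le_infDist_add_dist
    _ ≤ infDist x V + infDist x U := by linarith [hV x hxA, dist_comm x (v (asgn x))]

theorem fHat_bounds_general (hA : A.Nonempty) (hs : ∀ x ∈ A, 0 < s x)
    (hasgn : ∀ x ∈ A, ∀ j, dist x (v (asgn x)) ≤ dist x (v j)) (U : Finset X) :
    (fHat A s U ≤ fHat A s (Finset.univ.image v) +
      ∑ i with (cell A asgn i).Nonempty, infDist (v i) U / cellScale A s asgn i) ∧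
    ∀ c : ℝ, 0 < c → fHat A s (Finset.univ.image v) ≤ (c - 1) * fHat A s U →
      ((1 / (c * (A.card : ℝ))) *
        ∑ i with (cell A asgn i).Nonempty, infDist (v i) U / cellScale A s asgn i ≤
          fHat A s U) ∧
      ∀ i, (cell A asgn i).Nonempty →
        infDist (v i) U / (c * (A.card : ℝ) * cellScale A s asgn i) ≤ fHat A s U := by
  have hV : ∀ x ∈ A, dist x (v (asgn x)) ≤ infDist x (Finset.univ.image v : Finset X) :=
    fun x hx => by simpa using dist_le_infDist_range (hasgn x hx)
  refine ⟨(fHat_le_fHat_add_average hs hV).trans ?_, fun c hc hVU => ?_⟩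
  · gcongr
    exact average_infDist_div_le_sum_cell hA hs
  have hlower : (1 / (c * (A.card : ℝ))) *
      ∑ i with (cell A asgn i).Nonempty, infDist (v i) U / cellScale A s asgn i ≤
        fHat A s U := by
    rw [one_div, mul_inv, mul_assoc, inv_mul_le_iff₀ hc, ← one_div]
    linarith [average_sum_cell_le_fHat_add_fHat (U := U) hs hV]
  refine ⟨hlower, fun i hi => le_trans ?_ hlower⟩
  rw [← one_mul (infDist (v i) U), mul_div_mul_comm]
  gcongr
  exact infDist_div_cellScale_le_sum hs hi

end Bounds

/-- two-sided bound on `f̂(U)` in terms of the distances of the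
optimal centers `v_i` to `U` (Lemma bounding `f̂` from above and below). -/
theorem fHat_bounds {X : Type*} [PseudoMetricSpace X] (C : Set X) (k : ℕ) (hk : 1 ≤ k)
    (A : Finset X) (ha : 1 ≤ A.card) (s : X → ℝ) (hs : ∀ x ∈ A, 0 < s x)
    (vc : Fin k → X) (hvinj : Function.Injective vc) (hvC : ∀ i, vc i ∈ C)
    (hmin : ∀ U : Finset X, ↑U ⊆ C → U.card = k →
      fHat A s (Finset.image vc Finset.univ) ≤ fHat A s U)
    (asgn : X → Fin k)
    (hasgn : ∀ x ∈ A, ∀ t : Fin k, dist x (vc (asgn x)) ≤ dist x (vc t)) :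
    ∀ U : Finset X, ↑U ⊆ C → U.card = k →
      (fHat A s U ≤ fHat A s (Finset.image vc Finset.univ) +
        ∑ i ∈ Finset.univ.filter (fun i : Fin k => (A.filter (fun x => asgn x = i)).Nonempty),
          infDist (vc i) (U : Set X) /
            sInf (s '' ↑(A.filter (fun x => asgn x = i)))) ∧
      ((1 / (4 * (A.card : ℝ))) *
        ∑ i ∈ Finset.univ.filter (fun i : Fin k => (A.filter (fun x => asgn x = i)).Nonempty),
          infDist (vc i) (U : Set X) /
            sInf (s '' ↑(A.filter (fun x => asgn x = i))) ≤ fHat A s U) ∧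
      ∀ i : Fin k, (A.filter (fun x => asgn x = i)).Nonempty →
        infDist (vc i) (U : Set X) /
            (4 * (A.card : ℝ) * sInf (s '' ↑(A.filter (fun x => asgn x = i)))) ≤
          fHat A s U := by
  intro U hUC hUk
  obtain ⟨hupper, hlower⟩ := fHat_bounds_general (Finset.card_pos.1 ha) hs hasgn U
  exact ⟨hupper, hlower 4 four_pos (by linarith [hmin U hUC hUk, fHat_nonneg hs U])⟩
end

section
/- Let X be a finite set, μ a probability measure on X, f : X → ℝ_{≥0} with f̄ = Σ_{x∈X} μ(x)·f(x) > 0, and s : X → ℝ_{>0} with s(x) ≥ f(x)/f̄ for every x with μ(x) > 0. Put S = Σ_x μ(x)·s(x) and define the probability distribution q(x) = s(x)·μ(x)/S on X. Then the estimator G(x) = S·f(x)/s(x) satisfies E_q[G] = f̄ and Var_q(G) = Σ_x q(x)·(S·f(x)/s(x) − f̄)² ≤ (S − 1)·f̄². -/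
/-!
The sensitivity bound forces `μ x * f x = 0` wherever `q x = 0`, so `q x * G x = μ x * f x`
throughout. This gives unbiasedness and turns the second moment of `G` under `q` into
`∑ x, μ x * f x * G x`. The sensitivity bound also says that `G ≤ S * f̄` on the support of `μ`, so
the second moment is at most `S * f̄ ^ 2`, and subtracting the squared mean `f̄ ^ 2` leaves
`(S - 1) * f̄ ^ 2`.
-/

theorem sum_mul_sub_sq_of_sum_eq_one {X R : Type*} [Fintype X] [CommRing R] {w g : X → R} {c : R}
    (hw : ∑ x, w x = 1) (hg : ∑ x, w x * g x = c) :
    ∑ x, w x * (g x - c) ^ 2 = ∑ x, w x * g x ^ 2 - c ^ 2 := by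
  calc ∑ x, w x * (g x - c) ^ 2
      = ∑ x, (w x * g x ^ 2 - 2 * c * (w x * g x) + c ^ 2 * w x) :=
        Finset.sum_congr rfl fun x _ => by ring
    _ = ∑ x, w x * g x ^ 2 - 2 * c * c + c ^ 2 * 1 := by
        rw [Finset.sum_add_distrib, Finset.sum_sub_distrib, ← Finset.mul_sum, ← Finset.mul_sum,
          hg, hw]
    _ = ∑ x, w x * g x ^ 2 - c ^ 2 := by ring

section Field

variable {X K : Type*} [Fintype X] [Field K] {μ f s : X → K}

/-- The total sensitivity `S = ∑ x, μ x * s x`, the normalizing constant of importance sampling. -/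
def totalSensitivity (μ s : X → K) : K :=
  ∑ x, μ x * s x

/-- The importance-sampling distribution `q x = s x * μ x / S`, as a weight function. -/
def importanceWeight (μ s : X → K) (x : X) : K :=
  s x * μ x / totalSensitivity μ s

/-- The importance-sampling estimator `G x = S * f x / s x`. Its junk value `0` where `s x = 0` is
harmless, since such points have `importanceWeight` zero. -/
def importanceEstimator (μ s f : X → K) (x : X) : K :=
  totalSensitivity μ s * f x / s x

theorem sum_importanceWeight (hS : totalSensitivity μ s ≠ 0) :
    ∑ x, importanceWeight μ s x = 1 := by
  simp only [importanceWeight, mul_comm (s _)]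
  rw [← Finset.sum_div]
  exact div_self hS

theorem importanceWeight_mul_importanceEstimator (hS : totalSensitivity μ s ≠ 0) {x : X}
    (hx : s x = 0 → μ x * f x = 0) :
    importanceWeight μ s x * importanceEstimator μ s f x = μ x * f x := by
  rw [importanceWeight, importanceEstimator]
  by_cases hsx : s x = 0
  · simp [hsx, hx hsx]
  · field_simp

end Field

section OrderedField

variable {X K : Type*} [Fintype X] [Field K] [LinearOrder K] {μ f s : X → K}

/-- `s` bounds the sensitivity `f x / f̄`, where `f̄ = ∑ y, μ y * f y`, at every point of positive
weight. Points of zero weight are never sampled, so nothing is asked of them. -/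
def IsSensitivityBound (μ f s : X → K) : Prop :=
  ∀ x, 0 < μ x → f x / ∑ y, μ y * f y ≤ s x

namespace IsSensitivityBound

variable [IsStrictOrderedRing K]

theorem mul_le (hs : IsSensitivityBound μ f s) (hμ : ∀ x, 0 ≤ μ x) (hfbar : 0 < ∑ x, μ x * f x)
    (x : X) : μ x * f x ≤ (∑ y, μ y * f y) * (μ x * s x) := by
  obtain hx | hx := (hμ x).eq_or_lt
  · simp [← hx]
  · calc μ x * f x ≤ μ x * ((∑ y, μ y * f y) * s x) :=
          mul_le_mul_of_nonneg_left ((div_le_iff₀' hfbar).1 (hs x hx)) hx.le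
      _ = (∑ y, μ y * f y) * (μ x * s x) := mul_left_comm ..

theorem one_le_totalSensitivity (hs : IsSensitivityBound μ f s) (hμ : ∀ x, 0 ≤ μ x)
    (hfbar : 0 < ∑ x, μ x * f x) : 1 ≤ totalSensitivity μ s := by
  refine (le_mul_iff_one_le_right hfbar).1 ?_
  rw [totalSensitivity, Finset.mul_sum]
  exact Finset.sum_le_sum fun x _ => hs.mul_le hμ hfbar x

theorem totalSensitivity_pos (hs : IsSensitivityBound μ f s) (hμ : ∀ x, 0 ≤ μ x)
    (hfbar : 0 < ∑ x, μ x * f x) : 0 < totalSensitivity μ s :=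
  one_pos.trans_le (hs.one_le_totalSensitivity hμ hfbar)

protected theorem importanceWeight_mul_importanceEstimator (hs : IsSensitivityBound μ f s)
    (hμ : ∀ x, 0 ≤ μ x) (hf : ∀ x, 0 ≤ f x) (hfbar : 0 < ∑ x, μ x * f x) (x : X) :
    importanceWeight μ s x * importanceEstimator μ s f x = μ x * f x := by
  refine importanceWeight_mul_importanceEstimator (hs.totalSensitivity_pos hμ hfbar).ne'
    fun hsx => le_antisymm ?_ (mul_nonneg (hμ x) (hf x))
  simpa only [hsx, mul_zero] using hs.mul_le hμ hfbar x

theorem importanceEstimator_le (hs : IsSensitivityBound μ f s) (hμ : ∀ x, 0 ≤ μ x)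
    (hf : ∀ x, 0 ≤ f x) (hfbar : 0 < ∑ x, μ x * f x) {x : X} (hx : 0 < μ x) :
    importanceEstimator μ s f x ≤ totalSensitivity μ s * ∑ y, μ y * f y := by
  have hsx : 0 ≤ s x := (div_nonneg (hf x) hfbar.le).trans (hs x hx)
  have hfs : f x / s x ≤ ∑ y, μ y * f y :=
    div_le_of_le_mul₀ hsx hfbar.le ((div_le_iff₀' hfbar).1 (hs x hx))
  rw [importanceEstimator, mul_div_assoc]
  exact mul_le_mul_of_nonneg_left hfs (hs.totalSensitivity_pos hμ hfbar).le

theorem sum_importanceWeight_mul_sq_le (hs : IsSensitivityBound μ f s) (hμ : ∀ x, 0 ≤ μ x)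
    (hf : ∀ x, 0 ≤ f x) (hfbar : 0 < ∑ x, μ x * f x) :
    ∑ x, importanceWeight μ s x * importanceEstimator μ s f x ^ 2 ≤
      totalSensitivity μ s * (∑ x, μ x * f x) ^ 2 := by
  have hterm (x : X) : μ x * f x * importanceEstimator μ s f x ≤
      μ x * f x * (totalSensitivity μ s * ∑ y, μ y * f y) := by
    obtain hx | hx := (hμ x).eq_or_lt
    · simp [← hx]
    · exact mul_le_mul_of_nonneg_left (hs.importanceEstimator_le hμ hf hfbar hx)
        (mul_nonneg hx.le (hf x))
  calc ∑ x, importanceWeight μ s x * importanceEstimator μ s f x ^ 2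
      = ∑ x, μ x * f x * importanceEstimator μ s f x :=
        Finset.sum_congr rfl fun x _ => by
          rw [sq, ← mul_assoc, hs.importanceWeight_mul_importanceEstimator hμ hf hfbar]
    _ ≤ ∑ x, μ x * f x * (totalSensitivity μ s * ∑ y, μ y * f y) :=
        Finset.sum_le_sum fun x _ => hterm x
    _ = totalSensitivity μ s * (∑ x, μ x * f x) ^ 2 := by
        rw [← Finset.sum_mul]
        ring

end IsSensitivityBound

theorem importance_sampling_unbiased_and_variance_general [IsStrictOrderedRing K]
    (hμ : ∀ x, 0 ≤ μ x) (hf : ∀ x, 0 ≤ f x) (hfbar : 0 < ∑ x, μ x * f x)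
    (hs : IsSensitivityBound μ f s) :
    ∑ x, importanceWeight μ s x * importanceEstimator μ s f x = ∑ x, μ x * f x ∧
    ∑ x, importanceWeight μ s x * (importanceEstimator μ s f x - ∑ y, μ y * f y) ^ 2 ≤
      (totalSensitivity μ s - 1) * (∑ x, μ x * f x) ^ 2 := by
  have hmean : ∑ x, importanceWeight μ s x * importanceEstimator μ s f x = ∑ x, μ x * f x :=
    Finset.sum_congr rfl fun x _ => hs.importanceWeight_mul_importanceEstimator hμ hf hfbar x
  have hmass : ∑ x, importanceWeight μ s x = 1 :=
    sum_importanceWeight (hs.totalSensitivity_pos hμ hfbar).ne'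
  refine ⟨hmean, ?_⟩
  rw [sum_mul_sub_sq_of_sum_eq_one hmass hmean, sub_one_mul]
  exact sub_le_sub_right (hs.sum_importanceWeight_mul_sq_le hμ hf hfbar) _

end OrderedField

/-- the importance-sampling estimator `G(x) = S·f(x)/s(x)` under the
distribution `q(x) = s(x)·μ(x)/S` is unbiased and has variance at most `(S−1)·f̄²`. -/
theorem importance_sampling_unbiased_and_variance {X : Type*} [Fintype X]
    (μ : X → ℝ) (hμ0 : ∀ x, 0 ≤ μ x) (hμ1 : ∑ x, μ x = 1)
    (f : X → ℝ) (hf0 : ∀ x, 0 ≤ f x)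
    (hfbar : 0 < ∑ x, μ x * f x)
    (s : X → ℝ) (hs0 : ∀ x, 0 < s x)
    (hs : ∀ x, 0 < μ x → f x / (∑ y, μ y * f y) ≤ s x) :
    (∑ x, (s x * μ x / (∑ y, μ y * s y)) * ((∑ y, μ y * s y) * f x / s x)) =
      (∑ x, μ x * f x) ∧
    (∑ x, (s x * μ x / (∑ y, μ y * s y)) *
        ((∑ y, μ y * s y) * f x / s x - ∑ y, μ y * f y) ^ 2) ≤
      ((∑ y, μ y * s y) - 1) * (∑ x, μ x * f x) ^ 2 :=
  importance_sampling_unbiased_and_variance_general hμ0 hf0 hfbar hs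
end

section
/- Let X be a finite set, μ a probability measure on X with μ(x) > 0 for all x ∈ X, and F a family of functions f : X → ℝ_{≥0} with f̄ = Σ_x μ(x)·f(x) > 0 for all f ∈ F. Let s : X → ℝ_{>0} satisfy s(x) ≥ sup_{f∈F} f(x)/f̄ for all x, put S = Σ_x μ(x)·s(x), and q(x) = s(x)·μ(x)/S. Let ε ∈ (0,1) and let a be an integer with a ≥ max(1, 8(S−1)/ε²), and assume additionally that f̂_A = (1/|A|)Σ_{x∈A} f(x)/s(x) > 0 for every f ∈ F and every nonempty multiset A of points of X. Suppose every multiset A of 2a points of X admits an ε-cover-code for (F, A, s) (with parameter S) of cardinality at most (1/8)·e^{a·ε²/(100·S²)}. Then, for x_1,…,x_a drawn independently according to q, with probability at least 1/2 it holds for every f ∈ F that Σ_{t=1}^a (S/(a·s(x_t)))·f(x_t) ∈ [(1−ε)·f̄, (1+ε)·f̄]. -/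
open scoped Classical

/-- `f̄ = Σ_x μ(x)·f(x)`. -/
noncomputable def fBar {X : Type*} [Fintype X] (μ : X → ℝ) (f : X → ℝ) : ℝ :=
  ∑ x, μ x * f x

/-- `f̂ = (1/|A|)·Σ_{x∈A} f(x)/s(x)` for a multiset `A` of points presented as a
tuple `A : Fin N → X` (counted with multiplicity). -/
noncomputable def fHatSeq {X : Type*} {N : ℕ} (s : X → ℝ) (A : Fin N → X)
    (f : X → ℝ) : ℝ :=
  (1 / (N : ℝ)) * ∑ t, f (A t) / s (A t)

/-!
The functions `h = f / (f̄ · s)` take values in `[0, 1]` and all have mean `1 / S` under `q`; the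
claim is that, with `δ = ε / S`, their empirical means are simultaneously within `δ` of `1 / S`.
By Chebyshev's inequality an independent ghost sample is accurate to `δ / 2` for any single `h`
with probability at least `1 / 2`, so a deviation beyond `δ` produces, half of the time, two samples
whose empirical means differ by more than `δ / 2`. Exchanging each `x_t` with its ghost `y_t` by a
fair coin does not change the law of the pairs, so the `2a` points may be fixed and only the coins
kept random. On fixed points `h` may be replaced by its code function `h'`: the normalised
differences of means are close by condition (ii), and condition (i) says that the empirical mean of
`h'` is at least that of `h`, so undoing the normalisation can only enlarge the difference. For
finitely many `h'`, Hoeffding's inequality and a union bound conclude.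
-/

section Concentration

open MeasureTheory ProbabilityTheory
open scoped BigOperators NNReal

theorem measureReal_le_abs_le_two_mul_exp {Ω : Type*} [MeasurableSpace Ω] {P : Measure Ω}
    {Y : Ω → ℝ} {c : ℝ≥0} (hY : HasSubgaussianMGF Y c P) {r : ℝ} (hr : 0 ≤ r) :
    P.real {ω | r ≤ |Y ω|} ≤ 2 * Real.exp (-r ^ 2 / (2 * c)) := by
  have hsplit : {ω | r ≤ |Y ω|} = {ω | r ≤ Y ω} ∪ {ω | r ≤ (-Y) ω} := by
    ext ω
    simp [le_abs]
  rw [hsplit, two_mul]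
  exact (measureReal_union_le _ _).trans
    (add_le_add (hY.measure_ge_le hr) (hY.neg.measure_ge_le hr))

variable {ι : Type*} [Fintype ι] [Nonempty ι]

theorem le_abs_expect_sub_iff {f : ι → ℝ} {c r : ℝ} :
    r ≤ |𝔼 i, f i - c| ↔ Fintype.card ι * r ≤ |∑ i, f i - Fintype.card ι * c| := by
  have hn : (0 : ℝ) < Fintype.card ι := mod_cast Fintype.card_pos
  rw [← Fintype.card_mul_expect, ← mul_sub, abs_mul, abs_of_pos hn, mul_le_mul_iff_right₀ hn]

theorem measureReal_pi_le_abs_expect_le_two_mul_exp {Ω : ι → Type*}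
    [∀ i, MeasurableSpace (Ω i)] {P : ∀ i, Measure (Ω i)} [∀ i, IsProbabilityMeasure (P i)]
    {Y : ∀ i, Ω i → ℝ} {c : ℝ≥0} (hY : ∀ i, HasSubgaussianMGF (Y i) c (P i)) {r : ℝ}
    (hr : 0 ≤ r) :
    (Measure.pi P).real {ω | r ≤ |𝔼 i, Y i (ω i)|} ≤
      2 * Real.exp (-(Fintype.card ι * r ^ 2) / (2 * c)) := by
  have hn : (Fintype.card ι : ℝ) ≠ 0 := mod_cast Fintype.card_ne_zero
  have hcoord (i : ι) : HasSubgaussianMGF (fun ω => Y i (ω i)) c (Measure.pi P) :=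
    .of_map (measurable_pi_apply i).aemeasurable
      ((measurePreserving_eval P i).map_eq.symm ▸ hY i)
  have hsum := HasSubgaussianMGF.sum_of_iIndepFun (s := Finset.univ)
    (iIndepFun_pi fun i => (hY i).aemeasurable) fun i _ => hcoord i
  have hscale (ω : ∀ i, Ω i) :
      r ≤ |𝔼 i, Y i (ω i)| ↔ Fintype.card ι * r ≤ |∑ i, Y i (ω i)| := by
    simpa using le_abs_expect_sub_iff (f := fun i => Y i (ω i)) (c := 0)
  simp_rw [hscale]
  convert measureReal_le_abs_le_two_mul_exp hsum (r := Fintype.card ι * r) (by positivity)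
    using 3
  simp only [Finset.sum_const, Finset.card_univ, nsmul_eq_mul, NNReal.coe_mul,
    NNReal.coe_natCast]
  rw [← mul_div_mul_left _ _ hn]
  congr 1 <;> ring

theorem measureReal_pi_le_abs_expect_sub_integral_le {Ω : Type*} [MeasurableSpace Ω]
    {q : Measure Ω} [IsProbabilityMeasure q] {h : Ω → ℝ} (hL2 : MemLp h 2 q) {r : ℝ}
    (hr : 0 < r) :
    (Measure.pi fun _ : ι => q).real {ω | r ≤ |𝔼 t, h (ω t) - ∫ x, h x ∂q|} ≤
      Var[h; q] / (Fintype.card ι * r ^ 2) := by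
  have hn : (0 : ℝ) < Fintype.card ι := mod_cast Fintype.card_pos
  have hL2' (t : ι) : MemLp (fun ω : ι → Ω => h (ω t)) 2 (Measure.pi fun _ : ι => q) :=
    hL2.comp_measurePreserving (measurePreserving_eval _ t)
  have hmean : ∫ ω, ∑ t : ι, h (ω t) ∂(Measure.pi fun _ : ι => q) =
      Fintype.card ι * ∫ x, h x ∂q := by
    rw [integral_finsetSum _ fun t _ => (hL2' t).integrable one_le_two]
    simp [integral_comp_eval (μ := fun _ : ι => q) hL2.aestronglyMeasurable]
  have hvar : Var[fun ω => ∑ t : ι, h (ω t); Measure.pi fun _ : ι => q] =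
      Fintype.card ι * Var[h; q] := by
    simpa [Finset.sum_fn] using variance_sum_pi (ι := ι) (μ := fun _ => q) fun _ => hL2
  simp_rw [le_abs_expect_sub_iff, ← hmean]
  refine (ENNReal.toReal_le_of_le_ofReal (div_nonneg (variance_nonneg _ _) (sq_nonneg _))
    (meas_ge_le_variance_div_sq (memLp_finsetSum _ fun t _ => hL2' t)
      (by positivity))).trans_eq ?_
  rw [hvar, mul_pow, sq (Fintype.card ι : ℝ), mul_assoc, mul_div_mul_left _ _ hn.ne']

end Concentration

section Symmetrization

open MeasureTheory ProbabilityTheory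
open scoped BigOperators ENNReal

theorem mul_measure_le_measure_prod {Ω Ω' : Type*} [MeasurableSpace Ω] [MeasurableSpace Ω']
    {P : Measure Ω} {P' : Measure Ω'} [SFinite P'] {B : Set Ω} {E : Set (Ω × Ω')}
    (hE : MeasurableSet E) {c : ℝ≥0∞} (hc : ∀ ω ∈ B, c ≤ P' (Prod.mk ω ⁻¹' E)) :
    c * P B ≤ (P.prod P') E :=
  calc c * P B ≤ c * P {ω | c ≤ P' (Prod.mk ω ⁻¹' E)} := by gcongr; exact hc
    _ ≤ ∫⁻ ω, P' (Prod.mk ω ⁻¹' E) ∂P :=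
      mul_meas_ge_le_lintegral (measurable_measure_prodMk_left hE) c
    _ = (P.prod P') E := (Measure.prod_apply hE).symm

/-- Exchanges the two entries of the pair `z t` at every index `t` with `σ t = false`. -/
def swapAt {ι X : Type*} (σ : ι → Bool) (z : ι → X × X) (t : ι) : X × X :=
  bif σ t then z t else (z t).swap

theorem measure_pi_le_of_forall_swapAt {ι X : Type*} [Fintype ι] [MeasurableSpace X]
    {Q : Measure (X × X)} [IsProbabilityMeasure Q] (hQ : MeasurePreserving Prod.swap Q Q)
    (ρ : Measure (ι → Bool)) [IsProbabilityMeasure ρ] {E : Set (ι → X × X)}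
    (hE : MeasurableSet E) {b : ℝ≥0∞} (hb : ∀ z, ρ {σ | swapAt σ z ∈ E} ≤ b) :
    (Measure.pi fun _ : ι => Q) E ≤ b := by
  have hswap (σ : ι → Bool) :
      MeasurePreserving (swapAt σ) (Measure.pi fun _ : ι => Q) (Measure.pi fun _ => Q) := by
    refine measurePreserving_pi _ _ (f := fun t (p : X × X) => bif σ t then p else p.swap)
      fun t => ?_
    cases σ t
    exacts [hQ, .id Q]
  have hmeas : Measurable fun p : (ι → Bool) × (ι → X × X) => swapAt p.1 p.2 :=
    measurable_from_prod_countable_right fun σ => (hswap σ).measurable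
  calc (Measure.pi fun _ : ι => Q) E
      = ∫⁻ σ, (Measure.pi fun _ : ι => Q) (swapAt σ ⁻¹' E) ∂ρ := by
        simp [(hswap _).measure_preimage hE.nullMeasurableSet]
    _ = (ρ.prod (Measure.pi fun _ : ι => Q)) ((fun p => swapAt p.1 p.2) ⁻¹' E) :=
        (Measure.prod_apply (hmeas hE)).symm
    _ = ∫⁻ z, ρ {σ | swapAt σ z ∈ E} ∂Measure.pi fun _ : ι => Q :=
        Measure.prod_apply_symm (hmeas hE)
    _ ≤ b := (lintegral_mono hb).trans_eq (by simp)

/-- A fair coin. -/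
noncomputable def fairCoin : Measure Bool :=
  bernoulliMeasure true false ⟨1 / 2, by norm_num, by norm_num⟩

instance : IsProbabilityMeasure fairCoin := by
  unfold fairCoin; infer_instance

/-- The sign attached to a coin toss (a Rademacher variable under `fairCoin`). -/
def coinSign (b : Bool) : ℝ := bif b then 1 else -1

theorem abs_coinSign (b : Bool) : |coinSign b| = 1 := by
  cases b <;> simp [coinSign]

theorem integral_coinSign : ∫ b, coinSign b ∂fairCoin = 0 := by
  rw [fairCoin, integral_bernoulliMeasure]
  norm_num [coinSign]

theorem hasSubgaussianMGF_coinSign_mul {c : ℝ} (hc : |c| ≤ 1) :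
    HasSubgaussianMGF (fun b => coinSign b * c) 1 fairCoin := by
  have hmem (b : Bool) : coinSign b * c ∈ Set.Icc (-1 : ℝ) 1 := by
    rw [Set.mem_Icc, ← abs_le, abs_mul, abs_coinSign, one_mul]
    exact hc
  have hmean : ∫ b, coinSign b * c ∂fairCoin = 0 := by
    rw [integral_mul_const, integral_coinSign, zero_mul]
  convert hasSubgaussianMGF_of_mem_Icc_of_integral_eq_zero
    (by fun_prop) (Filter.Eventually.of_forall hmem) hmean
  norm_num

theorem swapAt_sub_swapAt {ι X : Type*} (σ : ι → Bool) (z : ι → X × X) (h : X → ℝ) (t : ι) :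
    h (swapAt σ z t).1 - h (swapAt σ z t).2 = coinSign (σ t) * (h (z t).1 - h (z t).2) := by
  cases hσ : σ t <;> simp [swapAt, coinSign, hσ]

end Symmetrization

section RelativeCover

open MeasureTheory ProbabilityTheory
open scoped BigOperators

/-- A finite set `H'` of code functions for the family `H` on the sample `A`: every `h ∈ H` is
represented by some `h' ∈ H'` with at least the same empirical mean whose values, normalised by
the empirical mean, agree with those of `h` up to the relative error `η`. With `h = f / (f̄ · s)`
this is a cover-code; functions vanishing on the sample need no representative, as their
normalised values are undefined. -/
def IsRelativeCover {κ X : Type*} [Fintype κ] (η : ℝ) (A : κ → X) (H : Set (X → ℝ))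
    (H' : Finset (X → ℝ)) : Prop :=
  ∀ h ∈ H, 0 < 𝔼 i, h (A i) → ∃ h' ∈ H', 𝔼 i, h (A i) ≤ 𝔼 i, h' (A i) ∧
    ∀ i, |h (A i) / 𝔼 j, h (A j) - h' (A i) / 𝔼 j, h' (A j)| ≤
      η * (1 + h (A i) / 𝔼 j, h (A j) + h' (A i) / 𝔼 j, h' (A j))

section Signs

variable {κ : Type*} [Fintype κ] {e : κ → ℝ}

theorem abs_expect_mul_le_expect (he : ∀ i, |e i| ≤ 1) {u v : κ → ℝ} (huv : ∀ i, |u i| ≤ v i) :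
    |𝔼 i, e i * u i| ≤ 𝔼 i, v i := by
  refine (Finset.abs_expect_le _ _).trans (Finset.expect_le_expect fun i _ => ?_)
  rw [abs_mul]
  exact (mul_le_of_le_one_left (abs_nonneg _) (he i)).trans (huv i)

variable [Nonempty κ]

theorem abs_expect_mul_sub_expect_mul_le (he : ∀ i, |e i| ≤ 1) {u u' : κ → ℝ} {η : ℝ}
    (hu : 𝔼 i, u i = 1) (hu' : 𝔼 i, u' i = 1)
    (h : ∀ i, |u i - u' i| ≤ η * (1 + u i + u' i)) :
    |𝔼 i, e i * u i - 𝔼 i, e i * u' i| ≤ 3 * η :=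
  calc |𝔼 i, e i * u i - 𝔼 i, e i * u' i| = |𝔼 i, e i * (u i - u' i)| := by
        simp_rw [mul_sub, Finset.expect_sub_distrib]
    _ ≤ 𝔼 i, η * (1 + u i + u' i) := abs_expect_mul_le_expect he h
    _ = 3 * η := by
        rw [← Finset.mul_expect, Finset.expect_add_distrib, Finset.expect_add_distrib,
          Fintype.expect_const, hu, hu']
        ring

theorem IsRelativeCover.exists_sub_le_abs_expect {X : Type*} {η : ℝ} {A : κ → X}
    {H : Set (X → ℝ)} {H' : Finset (X → ℝ)} (hcov : IsRelativeCover η A H H') (hη : 0 ≤ η)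
    (he : ∀ i, |e i| ≤ 1) {h : X → ℝ} (hH : h ∈ H) (h01 : ∀ i, h (A i) ∈ Set.Icc 0 1) {r : ℝ}
    (hr : 0 ≤ r) (hlt : r < |𝔼 i, e i * h (A i)|) :
    ∃ h' ∈ H', r - 3 * η ≤ |𝔼 i, e i * h' (A i)| := by
  have hpos : 0 < 𝔼 i, h (A i) := hr.trans_lt <| hlt.trans_le <|
    abs_expect_mul_le_expect he fun i => (abs_of_nonneg (h01 i).1).le
  obtain ⟨h', hH', hle, hclose⟩ := hcov h hH hpos
  refine ⟨h', hH', ?_⟩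
  set m := 𝔼 i, h (A i) with hm
  set m' := 𝔼 i, h' (A i) with hm'
  have hpos' : 0 < m' := hpos.trans_le hle
  have hm1 : m ≤ 1 := Finset.expect_le Finset.univ_nonempty fun i _ => (h01 i).2
  have hnorm := abs_expect_mul_sub_expect_mul_le he
    (by rw [← Finset.expect_div, ← hm, div_self hpos.ne'])
    (by rw [← Finset.expect_div, ← hm', div_self hpos'.ne']) hclose
  simp_rw [← mul_div_assoc, ← Finset.expect_div] at hnorm
  have hratio : |𝔼 i, e i * h (A i)| / m - 3 * η ≤ |𝔼 i, e i * h' (A i)| / m' := by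
    have := (abs_sub_abs_le_abs_sub _ _).trans hnorm
    rw [abs_div, abs_div, abs_of_pos hpos, abs_of_pos hpos'] at this
    linarith
  calc r - 3 * η ≤ |𝔼 i, e i * h (A i)| - 3 * η * m := by nlinarith
    _ = m * (|𝔼 i, e i * h (A i)| / m - 3 * η) := by field_simp
    _ ≤ m * (|𝔼 i, e i * h' (A i)| / m') := by gcongr
    _ ≤ m' * (|𝔼 i, e i * h' (A i)| / m') := by gcongr
    _ = |𝔼 i, e i * h' (A i)| := by field_simp

end Signs

variable {ι : Type*} [Fintype ι]

theorem expect_sum_type (f : ι ⊕ ι → ℝ) :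
    𝔼 i, f i = (𝔼 t, f (.inl t) + 𝔼 t, f (.inr t)) / 2 := by
  simp_rw [Fintype.expect_eq_sum_div_card, Fintype.sum_sum_type, Fintype.card_sum]
  push_cast
  rw [← add_div, div_div, ← two_mul, mul_comm (2 : ℝ)]

theorem expect_sumElim_mul {X : Type*} (e : ι → ℝ) (z : ι → X × X) (h : X → ℝ) :
    𝔼 i, Sum.elim e (-e) i * h (Sum.elim (fun t => (z t).1) (fun t => (z t).2) i) =
      (𝔼 t, e t * (h (z t).1 - h (z t).2)) / 2 := by
  simp [expect_sum_type, mul_sub, Finset.expect_sub_distrib, ← sub_eq_add_neg,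
    Finset.expect_neg_distrib]

variable [Nonempty ι] {X : Type*} {H : Set (X → ℝ)}

theorem IsRelativeCover.exists_sub_le_abs_expect_sub {η : ℝ} {z : ι → X × X}
    {H' : Finset (X → ℝ)}
    (hcov : IsRelativeCover η (Sum.elim (fun t => (z t).1) (fun t => (z t).2)) H H')
    (hη : 0 ≤ η) {e : ι → ℝ} (he : ∀ t, |e t| ≤ 1) {h : X → ℝ} (hH : h ∈ H)
    (h01 : ∀ x, h x ∈ Set.Icc 0 1) {r : ℝ} (hr : 0 ≤ r)
    (hlt : r < |𝔼 t, e t * (h (z t).1 - h (z t).2)|) :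
    ∃ h' ∈ H', r - 6 * η ≤ |𝔼 t, e t * (h' (z t).1 - h' (z t).2)| := by
  have hsign (i : ι ⊕ ι) : |Sum.elim e (-e) i| ≤ 1 := by
    cases i <;> simp [he]
  obtain ⟨h', hH', hle⟩ := hcov.exists_sub_le_abs_expect hη hsign hH (fun i => h01 _)
    (r := r / 2) (by positivity) (by rw [expect_sumElim_mul, abs_div, abs_two]; linarith)
  rw [expect_sumElim_mul, abs_div, abs_two] at hle
  exact ⟨h', hH', by linarith⟩

variable {δ : ℝ}

theorem measureReal_pi_fairCoin_le_abs_expect_le (hδ : 0 ≤ δ) {h : X → ℝ}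
    (h01 : ∀ x, h x ∈ Set.Icc 0 1) (z : ι → X × X) :
    (Measure.pi fun _ : ι => fairCoin).real
      {σ | δ ≤ |𝔼 t, coinSign (σ t) * (h (z t).1 - h (z t).2)|} ≤
      2 * Real.exp (-(Fintype.card ι * δ ^ 2) / 2) := by
  have hdiff (t : ι) : |h (z t).1 - h (z t).2| ≤ 1 :=
    abs_sub_le_of_nonneg_of_le (h01 _).1 (h01 _).2 (h01 _).1 (h01 _).2
  simpa using measureReal_pi_le_abs_expect_le_two_mul_exp
    (fun t => hasSubgaussianMGF_coinSign_mul (hdiff t)) hδ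

theorem IsRelativeCover.measureReal_pi_fairCoin_le (hδ : 0 ≤ δ)
    (h01 : ∀ h ∈ H, ∀ x, h x ∈ Set.Icc 0 1) {z : ι → X × X} {H' : Finset (X → ℝ)}
    (hH' : ↑H' ⊆ H)
    (hcard : (H'.card : ℝ) ≤ 1 / 8 * Real.exp (Fintype.card ι * δ ^ 2 / 100))
    (hcov : IsRelativeCover (δ / 64) (Sum.elim (fun t => (z t).1) (fun t => (z t).2)) H H') :
    (Measure.pi fun _ : ι => fairCoin).real
      {σ | ∃ h ∈ H, δ / 2 < |𝔼 t, coinSign (σ t) * (h (z t).1 - h (z t).2)|} ≤ 1 / 4 := by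
  have hsub : {σ : ι → Bool |
      ∃ h ∈ H, δ / 2 < |𝔼 t, coinSign (σ t) * (h (z t).1 - h (z t).2)|} ⊆
      ⋃ h ∈ H', {σ | 13 / 32 * δ ≤ |𝔼 t, coinSign (σ t) * (h (z t).1 - h (z t).2)|} := by
    rintro σ ⟨h, hH, hlt⟩
    obtain ⟨h', hh', hle⟩ := hcov.exists_sub_le_abs_expect_sub (by positivity)
      (fun t => (abs_coinSign (σ t)).le) hH (h01 h hH) (by positivity) hlt
    have hconst : δ / 2 - 6 * (δ / 64) = 13 / 32 * δ := by ring
    exact Set.mem_biUnion hh' (hconst.symm.trans_le hle)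
  calc _ ≤ ∑ h ∈ H', (Measure.pi fun _ : ι => fairCoin).real
          {σ | 13 / 32 * δ ≤ |𝔼 t, coinSign (σ t) * (h (z t).1 - h (z t).2)|} :=
        (measureReal_mono hsub (measure_ne_top _ _)).trans (measureReal_biUnion_finset_le _ _)
    _ ≤ H'.card * (2 * Real.exp (-(Fintype.card ι * (13 / 32 * δ) ^ 2) / 2)) := by
        rw [← nsmul_eq_mul]
        exact Finset.sum_le_card_nsmul _ _ _ fun h hh =>
          measureReal_pi_fairCoin_le_abs_expect_le (by positivity) (h01 h (hH' hh)) z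
    _ ≤ 1 / 8 * Real.exp (Fintype.card ι * δ ^ 2 / 100) *
          (2 * Real.exp (-(Fintype.card ι * (13 / 32 * δ) ^ 2) / 2)) := by gcongr
    _ = 1 / 4 * Real.exp (Fintype.card ι * δ ^ 2 / 100 -
          Fintype.card ι * (13 / 32 * δ) ^ 2 / 2) := by
        rw [sub_eq_add_neg, Real.exp_add, neg_div]
        ring
    _ ≤ 1 / 4 := by
        refine mul_le_of_le_one_right (by norm_num) (Real.exp_le_one_iff.2 ?_)
        nlinarith [mul_nonneg (Nat.cast_nonneg (α := ℝ) (Fintype.card ι)) (sq_nonneg δ)]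

end RelativeCover

section UniformDeviation

open MeasureTheory ProbabilityTheory
open scoped BigOperators

variable {ι X : Type*} [Fintype ι] [Nonempty ι] [MeasurableSpace X] {q : Measure X}
  [IsProbabilityMeasure q] {δ : ℝ}

theorem one_half_le_measureReal_pi_abs_expect_sub_integral_lt (hδ : 0 < δ) {h : X → ℝ}
    (hL2 : MemLp h 2 q) (hvar : 8 * Var[h; q] ≤ Fintype.card ι * δ ^ 2) :
    1 / 2 ≤ (Measure.pi fun _ : ι => q).real {y | |𝔼 t, h (y t) - ∫ x, h x ∂q| < δ / 2} := by
  have hfar : (Measure.pi fun _ : ι => q).real {y | δ / 2 ≤ |𝔼 t, h (y t) - ∫ x, h x ∂q|} ≤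
      1 / 2 := by
    refine (measureReal_pi_le_abs_expect_sub_integral_le hL2 (by positivity)).trans ?_
    rw [div_le_iff₀ (by positivity)]
    linarith
  have hcover : (Set.univ : Set (ι → X)) ⊆ {y | |𝔼 t, h (y t) - ∫ x, h x ∂q| < δ / 2} ∪
      {y | δ / 2 ≤ |𝔼 t, h (y t) - ∫ x, h x ∂q|} := fun y _ => by
    simp [lt_or_ge]
  have hunion := (measureReal_mono (μ := Measure.pi fun _ : ι => q) hcover
    (measure_ne_top _ _)).trans (measureReal_union_le _ _)
  rw [probReal_univ] at hunion
  linarith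

variable [Countable X] [MeasurableSingletonClass X] {H : Set (X → ℝ)}

theorem measure_pi_prod_le_of_isRelativeCover (hδ : 0 ≤ δ)
    (h01 : ∀ h ∈ H, ∀ x, h x ∈ Set.Icc 0 1)
    (hcov : ∀ A : ι ⊕ ι → X, ∃ H' : Finset (X → ℝ), ↑H' ⊆ H ∧
      (H'.card : ℝ) ≤ 1 / 8 * Real.exp (Fintype.card ι * δ ^ 2 / 100) ∧
      IsRelativeCover (δ / 64) A H H') :
    ((Measure.pi fun _ : ι => q).prod (Measure.pi fun _ : ι => q))
      {p | ∃ h ∈ H, δ / 2 < |𝔼 t, (h (p.1 t) - h (p.2 t))|} ≤ ENNReal.ofReal (1 / 4) := by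
  set E := {p : (ι → X) × (ι → X) | ∃ h ∈ H, δ / 2 < |𝔼 t, (h (p.1 t) - h (p.2 t))|}
  have hE : MeasurableSet E := .of_discrete
  have harrow := measurePreserving_arrowProdEquivProdArrow X X ι (fun _ => q) fun _ => q
  rw [← harrow.measure_preimage hE.nullMeasurableSet]
  refine measure_pi_le_of_forall_swapAt Measure.measurePreserving_swap
    (Measure.pi fun _ => fairCoin) (harrow.measurable hE) fun z => ?_
  obtain ⟨H', hH', hcard, hcover⟩ := hcov (Sum.elim (fun t => (z t).1) (fun t => (z t).2))
  rw [← ofReal_measureReal]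
  refine ENNReal.ofReal_le_ofReal ?_
  convert hcover.measureReal_pi_fairCoin_le hδ h01 hH' hcard using 6 with σ
  simp only [← swapAt_sub_swapAt]
  rfl

theorem one_half_le_measureReal_pi_forall_abs_expect_sub_integral_le (hδ : 0 < δ)
    (h01 : ∀ h ∈ H, ∀ x, h x ∈ Set.Icc 0 1)
    (hvar : ∀ h ∈ H, 8 * Var[h; q] ≤ Fintype.card ι * δ ^ 2)
    (hcov : ∀ A : ι ⊕ ι → X, ∃ H' : Finset (X → ℝ), ↑H' ⊆ H ∧
      (H'.card : ℝ) ≤ 1 / 8 * Real.exp (Fintype.card ι * δ ^ 2 / 100) ∧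
      IsRelativeCover (δ / 64) A H H') :
    1 / 2 ≤ (Measure.pi fun _ : ι => q).real
      {x | ∀ h ∈ H, |𝔼 t, h (x t) - ∫ y, h y ∂q| ≤ δ} := by
  set P := Measure.pi fun _ : ι => q
  set B := {x : ι → X | ∀ h ∈ H, |𝔼 t, h (x t) - ∫ y, h y ∂q| ≤ δ}ᶜ with hB
  have hghost : ∀ x ∈ B, ENNReal.ofReal (1 / 2) ≤
      P (Prod.mk x ⁻¹' {p | ∃ h ∈ H, δ / 2 < |𝔼 t, (h (p.1 t) - h (p.2 t))|}) := by
    intro x hx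
    simp only [hB, Set.mem_compl_iff, Set.mem_ofPred_eq, not_forall, not_le] at hx
    obtain ⟨h, hH, hfar⟩ := hx
    refine (ENNReal.ofReal_le_iff_le_toReal (measure_ne_top _ _)).2 <|
      (one_half_le_measureReal_pi_abs_expect_sub_integral_lt hδ (memLp_of_bounded
        (.of_forall (h01 h hH)) (by fun_prop) 2) (hvar h hH)).trans <|
      measureReal_mono (fun y hy => ⟨h, hH, ?_⟩) (measure_ne_top _ _)
    rw [Finset.expect_sub_distrib]
    have := abs_sub_abs_le_abs_sub (𝔼 t, h (x t) - ∫ z, h z ∂q) (𝔼 t, h (y t) - ∫ z, h z ∂q)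
    rw [sub_sub_sub_cancel_right] at this
    simp only [Set.mem_ofPred_eq] at hy
    linarith
  have hbad : ENNReal.ofReal (1 / 2) * P B ≤ ENNReal.ofReal (1 / 4) :=
    (mul_measure_le_measure_prod .of_discrete hghost).trans
      (measure_pi_prod_le_of_isRelativeCover hδ.le h01 hcov)
  have hbad' : 1 / 2 * P.real B ≤ 1 / 4 := by
    simpa [measureReal_def] using ENNReal.toReal_mono ENNReal.ofReal_ne_top hbad
  rw [hB, probReal_compl_eq_one_sub .of_discrete] at hbad'
  linarith

end UniformDeviation

section FiniteWeights

open MeasureTheory ProbabilityTheory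
open scoped BigOperators

variable {X : Type*} [Fintype X]

/-- The measure on a finite set with mass `q x` at `x`; negative weights count as `0`. -/
noncomputable def weightMeasure [MeasurableSpace X] (q : X → ℝ) : Measure X :=
  ∑ x, ENNReal.ofReal (q x) • Measure.dirac x

variable {q : X → ℝ}

section Measure

variable [MeasurableSpace X]

theorem isProbabilityMeasure_weightMeasure (hq0 : ∀ x, 0 ≤ q x) (hq1 : ∑ x, q x = 1) :
    IsProbabilityMeasure (weightMeasure q) :=
  ⟨by simp [weightMeasure, ← ENNReal.ofReal_sum_of_nonneg fun x _ => hq0 x, hq1]⟩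

variable [MeasurableSingletonClass X]

theorem weightMeasure_singleton (x : X) : weightMeasure q {x} = ENNReal.ofReal (q x) := by
  simp [weightMeasure, Set.indicator_apply]

theorem integral_weightMeasure (hq0 : ∀ x, 0 ≤ q x) [IsFiniteMeasure (weightMeasure q)]
    (h : X → ℝ) : ∫ x, h x ∂weightMeasure q = ∑ x, q x * h x := by
  rw [integral_fintype .of_finite]
  simp [measureReal_def, weightMeasure_singleton, hq0]

theorem measureReal_pi_weightMeasure {ι : Type*} [Fintype ι] (hq0 : ∀ x, 0 ≤ q x)
    [IsFiniteMeasure (weightMeasure q)] (p : (ι → X) → Prop) :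
    (Measure.pi fun _ : ι => weightMeasure q).real {ω | p ω} =
      ∑ ω ∈ Finset.univ.filter p, ∏ t, q (ω t) := by
  rw [← Finset.coe_filter_univ, ← sum_measureReal_singleton]
  simp [measureReal_def, Measure.pi_singleton, weightMeasure_singleton, ENNReal.toReal_prod, hq0]

end Measure

theorem one_half_le_sum_prod_of_isRelativeCover {ι : Type*} [Fintype ι] [Nonempty ι]
    (hq0 : ∀ x, 0 ≤ q x) (hq1 : ∑ x, q x = 1) {H : Set (X → ℝ)} {δ : ℝ} (hδ : 0 < δ)
    (h01 : ∀ h ∈ H, ∀ x, h x ∈ Set.Icc 0 1)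
    (hmean : ∀ h ∈ H, 8 * ((1 - ∑ x, q x * h x) * ∑ x, q x * h x) ≤ Fintype.card ι * δ ^ 2)
    (hcov : ∀ A : ι ⊕ ι → X, ∃ H' : Finset (X → ℝ), ↑H' ⊆ H ∧
      (H'.card : ℝ) ≤ 1 / 8 * Real.exp (Fintype.card ι * δ ^ 2 / 100) ∧
      IsRelativeCover (δ / 64) A H H') :
    1 / 2 ≤ ∑ ω ∈ Finset.univ.filter (fun ω : ι → X =>
      ∀ h ∈ H, |𝔼 t, h (ω t) - ∑ x, q x * h x| ≤ δ), ∏ t, q (ω t) := by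
  let _ : MeasurableSpace X := ⊤
  have := isProbabilityMeasure_weightMeasure hq0 hq1
  have hvar : ∀ h ∈ H, 8 * Var[h; weightMeasure q] ≤ Fintype.card ι * δ ^ 2 := by
    intro h hH
    have := variance_le_sub_mul_sub (.of_forall (h01 h hH))
      (Measurable.of_discrete (f := h)).aemeasurable (μ := weightMeasure q)
    rw [integral_weightMeasure hq0, sub_zero] at this
    linarith [hmean h hH]
  have hunif := one_half_le_measureReal_pi_forall_abs_expect_sub_integral_le hδ h01 hvar hcov
  simpa only [integral_weightMeasure hq0, measureReal_pi_weightMeasure hq0] using hunif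

end FiniteWeights

section CoverCode

open scoped BigOperators

theorem IsRelativeCover.comp_equiv {κ κ' X : Type*} [Fintype κ] [Fintype κ'] {η : ℝ}
    {A : κ' → X} {H : Set (X → ℝ)} {H' : Finset (X → ℝ)} (hcov : IsRelativeCover η A H H')
    (e : κ ≃ κ') : IsRelativeCover η (A ∘ e) H H' := by
  have hmean (h : X → ℝ) : 𝔼 i, h ((A ∘ e) i) = 𝔼 j, h (A j) :=
    Fintype.expect_equiv e _ _ fun _ => rfl
  simp only [IsRelativeCover, hmean]
  intro h hH hpos
  obtain ⟨h', hH', hle, hclose⟩ := hcov h hH hpos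
  exact ⟨h', hH', hle, fun i => hclose (e i)⟩

variable {X : Type*} [Fintype X] {μ s f : X → ℝ} {F : Set (X → ℝ)}

/-- The function `f / (f̄ · s)`. When `s` dominates the sensitivities of the family it takes
values in `[0, 1]`, and its mean under the sensitivity distribution does not depend on `f`. -/
noncomputable def sensitivityNormalize (μ s f : X → ℝ) (x : X) : ℝ :=
  f x / (fBar μ f * s x)

theorem expect_sensitivityNormalize {N : ℕ} (A : Fin N → X) :
    𝔼 t, sensitivityNormalize μ s f (A t) = fHatSeq s A f / fBar μ f := by
  rw [Fintype.expect_eq_sum_div_card, Fintype.card_fin, fHatSeq]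
  simp_rw [sensitivityNormalize, mul_comm (fBar μ f), ← div_div, ← Finset.sum_div]
  ring

theorem sensitivityNormalize_div_expect (hf : fBar μ f ≠ 0) {N : ℕ} (A : Fin N → X) (x : X) :
    sensitivityNormalize μ s f x / 𝔼 t, sensitivityNormalize μ s f (A t) =
      f x / (fHatSeq s A f * s x) := by
  rw [expect_sensitivityNormalize, sensitivityNormalize]
  field_simp

theorem sensitivityNormalize_mem_Icc (hf0 : ∀ x, 0 ≤ f x) (hf : 0 < fBar μ f)
    (hs0 : ∀ x, 0 < s x) (hs : ∀ x, f x / fBar μ f ≤ s x) (x : X) :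
    sensitivityNormalize μ s f x ∈ Set.Icc 0 1 := by
  rw [sensitivityNormalize, ← div_div]
  exact ⟨div_nonneg (div_nonneg (hf0 x) hf.le) (hs0 x).le, (div_le_one (hs0 x)).2 (hs x)⟩

theorem sum_mul_sensitivityNormalize (hf : fBar μ f ≠ 0) (hs0 : ∀ x, s x ≠ 0) (S : ℝ) :
    ∑ x, s x * μ x / S * sensitivityNormalize μ s f x = 1 / S := by
  have hterm (x : X) : s x * μ x / S * sensitivityNormalize μ s f x =
      μ x * f x * (1 / (fBar μ f * S)) := by
    have := hs0 x
    rw [sensitivityNormalize]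
    field_simp
  simp_rw [hterm, ← Finset.sum_mul]
  rw [← fBar]
  field_simp

theorem sum_mul_pos_of_sum_eq_one (hμ0 : ∀ x, 0 ≤ μ x) (hμ1 : ∑ x, μ x = 1)
    (hs0 : ∀ x, 0 < s x) : 0 < ∑ x, μ x * s x := by
  obtain ⟨x, -, hx⟩ := Finset.exists_ne_zero_of_sum_ne_zero (hμ1 ▸ one_ne_zero)
  exact Finset.sum_pos' (fun y _ => mul_nonneg (hμ0 y) (hs0 y).le)
    ⟨x, Finset.mem_univ x, mul_pos ((hμ0 x).lt_of_ne' hx) (hs0 x)⟩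

theorem sum_weighted_mem_Icc_of_abs_expect_sub_le (hf : 0 < fBar μ f) {S ε : ℝ} (hS : 0 < S)
    {N : ℕ} {A : Fin N → X} (h : |𝔼 t, sensitivityNormalize μ s f (A t) - 1 / S| ≤ ε / S) :
    ∑ t, S / (N * s (A t)) * f (A t) ∈
      Set.Icc ((1 - ε) * fBar μ f) ((1 + ε) * fBar μ f) := by
  have hest : ∑ t, S / (N * s (A t)) * f (A t) = S * fHatSeq s A f := by
    rw [fHatSeq, ← mul_assoc, Finset.mul_sum]
    exact Finset.sum_congr rfl fun t _ => by ring
  rw [expect_sensitivityNormalize, abs_le, ← neg_div, le_sub_iff_add_le, sub_le_iff_le_add,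
    ← add_div, ← add_div, div_le_div_iff₀ hS hf, div_le_div_iff₀ hf hS] at h
  rw [hest]
  exact ⟨by linarith, by linarith⟩

/-- `F'` is a cover-code for `(F, A, s)` with accuracy `η` (which is `ε / (64 S)` in the paper's
notation). Functions vanishing on `A` need no code word, as the quotients by `f̂` in the two
conditions are undefined for them; the code words used must have positive `f̂'`. -/
def IsCoverCode {N : ℕ} (μ s : X → ℝ) (η : ℝ) (A : Fin N → X) (F : Set (X → ℝ))
    (F' : Finset (X → ℝ)) : Prop :=
  ∀ f ∈ F, 0 < fHatSeq s A f → ∃ f' ∈ F', 0 < fHatSeq s A f' ∧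
    fBar μ f' / fHatSeq s A f' ≤ fBar μ f / fHatSeq s A f ∧
    ∀ t, |f (A t) / (fHatSeq s A f * s (A t)) - f' (A t) / (fHatSeq s A f' * s (A t))| ≤
      η * (1 + f (A t) / (fHatSeq s A f * s (A t)) + f' (A t) / (fHatSeq s A f' * s (A t)))

theorem IsCoverCode.isRelativeCover {N : ℕ} {η : ℝ} {A : Fin N → X} {F' : Finset (X → ℝ)}
    (hcode : IsCoverCode μ s η A F F') (hFbar : ∀ f ∈ F, 0 < fBar μ f) (hF' : ↑F' ⊆ F) :
    IsRelativeCover η A (sensitivityNormalize μ s '' F)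
      (F'.image (sensitivityNormalize μ s)) := by
  rintro _ ⟨f, hf, rfl⟩ hpos
  have hf0 := hFbar f hf
  rw [expect_sensitivityNormalize, div_pos_iff_of_pos_right hf0] at hpos
  obtain ⟨f', hf', hpos', hratio, hclose⟩ := hcode f hf hpos
  have hf'0 := hFbar f' (hF' hf')
  refine ⟨_, Finset.mem_image_of_mem _ hf', ?_, fun t => ?_⟩
  · rw [div_le_div_iff₀ hpos' hpos] at hratio
    rw [expect_sensitivityNormalize, expect_sensitivityNormalize, div_le_div_iff₀ hf0 hf'0]
    linarith
  · rw [sensitivityNormalize_div_expect hf0.ne', sensitivityNormalize_div_expect hf'0.ne']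
    exact hclose t

end CoverCode

theorem cover_code_implies_coreset_general {X : Type*} [Fintype X]
    {μ : X → ℝ} (hμ0 : ∀ x, 0 ≤ μ x) (hμ1 : ∑ x, μ x = 1)
    {F : Set (X → ℝ)} (hF0 : ∀ f ∈ F, ∀ x, 0 ≤ f x) (hFbar : ∀ f ∈ F, 0 < fBar μ f)
    {s : X → ℝ} (hs0 : ∀ x, 0 < s x)
    (hs : ∀ f ∈ F, ∀ x, f x / fBar μ f ≤ s x) {ε : ℝ} (hε : 0 < ε) {a : ℕ} (ha1 : 1 ≤ a)
    (ha : 8 * ((∑ y, μ y * s y) - 1) / ε ^ 2 ≤ a)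
    (hcover : ∀ A : Fin (2 * a) → X, ∃ F' : Finset (X → ℝ), ↑F' ⊆ F ∧
      (F'.card : ℝ) ≤ 1 / 8 * Real.exp (a * ε ^ 2 / (100 * (∑ y, μ y * s y) ^ 2)) ∧
      IsCoverCode μ s (ε / (64 * ∑ y, μ y * s y)) A F F') :
    1 / 2 ≤ ∑ ω ∈ Finset.univ.filter (fun ω : Fin a → X => ∀ f ∈ F,
        ∑ t, (∑ y, μ y * s y) / (a * s (ω t)) * f (ω t) ∈
          Set.Icc ((1 - ε) * fBar μ f) ((1 + ε) * fBar μ f)),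
      ∏ t, s (ω t) * μ (ω t) / ∑ y, μ y * s y := by
  set S := ∑ y, μ y * s y with hSdef
  have hS : 0 < S := sum_mul_pos_of_sum_eq_one hμ0 hμ1 hs0
  have : NeZero a := ⟨by omega⟩
  have hq0 (x : X) : 0 ≤ s x * μ x / S :=
    div_nonneg (mul_nonneg (hs0 x).le (hμ0 x)) hS.le
  have hq1 : ∑ x, s x * μ x / S = 1 := by
    simp_rw [← Finset.sum_div, mul_comm (s _), ← hSdef, div_self hS.ne']
  have hmean (f) (hf : f ∈ F) : ∑ x, s x * μ x / S * sensitivityNormalize μ s f x = 1 / S :=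
    sum_mul_sensitivityNormalize (hFbar f hf).ne' (fun x => (hs0 x).ne') S
  refine (one_half_le_sum_prod_of_isRelativeCover (ι := Fin a) hq0 hq1 (div_pos hε hS)
    (H := sensitivityNormalize μ s '' F) ?_ ?_ fun A => ?_).trans
    (Finset.sum_le_sum_of_subset_of_nonneg ?_ fun ω _ _ => Finset.prod_nonneg fun t _ => hq0 _)
  · rintro _ ⟨f, hf, rfl⟩
    exact sensitivityNormalize_mem_Icc (hF0 f hf) (hFbar f hf) hs0 (hs f hf)
  · rintro _ ⟨f, hf, rfl⟩
    rw [div_le_iff₀ (by positivity)] at ha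
    rw [hmean f hf, Fintype.card_fin]
    field_simp
    linarith
  · let e : Fin a ⊕ Fin a ≃ Fin (2 * a) := finSumFinEquiv.trans (finCongr (two_mul a).symm)
    obtain ⟨F', hF', hcard, hcode⟩ := hcover (A ∘ e.symm)
    refine ⟨F'.image (sensitivityNormalize μ s), by grind, ?_, ?_⟩
    · refine (Nat.cast_le.2 Finset.card_image_le).trans (hcard.trans_eq ?_)
      rw [Fintype.card_fin, div_pow, mul_div_assoc', div_div, mul_comm (100 : ℝ)]
    · rw [div_div, mul_comm S]
      simpa [Function.comp_assoc] using (hcode.isRelativeCover hFbar hF').comp_equiv e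
  · intro ω
    simp only [Finset.mem_filter_univ, Set.forall_mem_image]
    intro hω f hf
    have := hω hf
    rw [hmean f hf] at this
    exact sum_weighted_mem_Icc_of_abs_expect_sub_le (hFbar f hf) hS this

/-- if every multiset of `2a` points admits a small `ε`-cover-code, then
`a` independent samples from the sensitivity distribution `q` give, with probability at
least `1/2`, an `ε`-approximator for every function of the family `F` simultaneously. -/
theorem cover_code_implies_coreset {X : Type*} [Fintype X]
    (μ : X → ℝ) (hμ0 : ∀ x, 0 < μ x) (hμ1 : ∑ x, μ x = 1)
    (F : Set (X → ℝ)) (hF0 : ∀ f ∈ F, ∀ x, 0 ≤ f x)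
    (hFbar : ∀ f ∈ F, 0 < fBar μ f)
    (s : X → ℝ) (hs0 : ∀ x, 0 < s x)
    (hs : ∀ f ∈ F, ∀ x, f x / fBar μ f ≤ s x)
    (ε : ℝ) (hε : ε ∈ Set.Ioo (0 : ℝ) 1) (a : ℕ) (ha1 : 1 ≤ a)
    (ha : max 1 (8 * ((∑ y, μ y * s y) - 1) / ε ^ 2) ≤ (a : ℝ))
    (hfhat : ∀ N : ℕ, 1 ≤ N → ∀ A : Fin N → X, ∀ f ∈ F, 0 < fHatSeq s A f)
    -- every multiset of `2a` points admits a small `ε`-cover-code for `(F, A, s)`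
    (hcover : ∀ A : Fin (2 * a) → X,
      ∃ F' : Set (X → ℝ), F' ⊆ F ∧ F'.Finite ∧
        (F'.ncard : ℝ) ≤ (1 / 8) *
          Real.exp ((a : ℝ) * ε ^ 2 / (100 * (∑ y, μ y * s y) ^ 2)) ∧
        ∀ f ∈ F, ∃ f' ∈ F',
          fBar μ f' / fHatSeq s A f' ≤ fBar μ f / fHatSeq s A f ∧
          ∀ t : Fin (2 * a),
            |f (A t) / (fHatSeq s A f * s (A t)) -
                f' (A t) / (fHatSeq s A f' * s (A t))| ≤
              ε / (64 * (∑ y, μ y * s y)) *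
                (1 + f (A t) / (fHatSeq s A f * s (A t)) +
                  f' (A t) / (fHatSeq s A f' * s (A t)))) :
    -- the probability over `a` i.i.d. samples from `q(x) = s(x)·μ(x)/S` that the
    -- weighted sample approximates `f̄` to within `ε·f̄` for all `f ∈ F` is ≥ 1/2
    (1 : ℝ) / 2 ≤
      ∑ ω ∈ Finset.univ.filter (fun ω : Fin a → X => ∀ f ∈ F,
          (∑ t : Fin a, ((∑ y, μ y * s y) / ((a : ℝ) * s (ω t))) * f (ω t)) ∈
            Set.Icc ((1 - ε) * fBar μ f) ((1 + ε) * fBar μ f)),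
        ∏ t : Fin a, s (ω t) * μ (ω t) / (∑ y, μ y * s y) := by
  refine cover_code_implies_coreset_general (fun x => (hμ0 x).le) hμ1 hF0 hFbar hs0 hs hε.1 ha1
    ((le_max_right _ _).trans ha) fun A => ?_
  obtain ⟨F', hF', hfin, hcard, hcode⟩ := hcover A
  have hpos := hfhat (2 * a) (by omega) A
  rw [Set.ncard_eq_toFinset_card F' hfin] at hcard
  refine ⟨hfin.toFinset, by simpa, hcard, fun f hf _ => ?_⟩
  obtain ⟨f', hf', h⟩ := hcode f hf
  exact ⟨f', hfin.mem_toFinset.2 hf', hpos f' (hF' hf'), h⟩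
end
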